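/- Let μ be an ergodic process on Σ = 𝒜^{ℤ_{≥0}^d} with entropy rate h_μ > 0, let 0 < φ < 1, fix α > 0, and let α_0 ∈ (0, α·h_μ/3). For μ-almost every x, let (k_i^*) be the increasing enumeration of all k ∈ ℕ with A^{k^d(h_μ−α_0)} ≤ M_k(x) ≤ A^{k^d(h_μ+α_0)} (this sequence is infinite for μ-almost every x), and for integers l ≤ u set |L_l^u| := Σ_{l≤k≤u} |L_k(x)|. Then the quotient |L_1^{⌊(1−α)k_i^*⌋}| / |L_{⌊(1−α)k_i^*⌋}^{k_i^*}| tends to zero as i tends to infinity. -/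

import Mathlib

open MeasureTheory Filter Topology

namespace SRU1408

/-- A site of the lattice `ℤ_{≥0}^d`. -/
abbrev Site (d : ℕ) := Fin d → ℕ

/-- An infinite array over the alphabet `Fin A`, i.e. an element of `Σ = 𝒜^{ℤ_{≥0}^d}`. -/
abbrev Config (A d : ℕ) := Site d → Fin A

/-- A cubical `k`-word, i.e. an element of `Σ^k = 𝒜^{Λ_k}`. -/
abbrev Word (A d k : ℕ) := (Fin d → Fin k) → Fin A

variable {A d : ℕ}

/-- The pattern of `x` on the cube `Λ_k + c`, as a `k`-word. -/
def wordAt (x : Config A d) (k : ℕ) (c : Site d) : Word A d k :=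
  fun i => x fun j => c j + (i j : ℕ)

/-- The lattice shift `σ_r`. -/
def shift (r : Site d) (x : Config A d) : Config A d := fun i => x (i + r)

/-- Stationarity: invariance under all shifts. -/
def Stationary (μ : Measure (Config A d)) : Prop := ∀ r : Site d, μ.map (shift r) = μ

/-- Ergodicity: stationary, and every measurable set invariant under all shifts is trivial. -/
def ErgodicShift (μ : Measure (Config A d)) : Prop :=
  Stationary μ ∧ ∀ E : Set (Config A d), MeasurableSet E →
    (∀ r : Site d, shift r ⁻¹' E = E) → μ E = 0 ∨ μ E = 1

/-- The `k`-word marginal distribution `μ^k`, as a probability vector on `Σ^k`. -/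
noncomputable def wordDist (μ : Measure (Config A d)) (k : ℕ) : Word A d k → ℝ :=
  fun w => (μ {x | wordAt x k 0 = w}).toReal

/-- Base-`A` entropy of a probability vector. -/
noncomputable def entH (A : ℕ) {W : Type*} [Fintype W] (p : W → ℝ) : ℝ :=
  -∑ w, p w * Real.logb A (p w)

/-- `μ` has entropy rate `h` (base-`A` logarithms): `H(μ^n)/n^d → h`. -/
def HasEntropyRate (μ : Measure (Config A d)) (h : ℝ) : Prop :=
  Tendsto (fun n : ℕ => entH A (wordDist μ n) / (n : ℝ) ^ d) atTop (𝓝 h)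

/-- Lexicographically ordered list of the tuples in `Λ_n ⊂ ℤ_{≥0}^d`. -/
def tuples : (d : ℕ) → ℕ → List (Fin d → ℕ)
  | 0, _ => [fun i => i.elim0]
  | d + 1, n => (List.range n).flatMap fun a => (tuples d n).map fun t => Fin.cons a t

/-- State of the `SRU_φ` parser: parsed cube `Λ_m`, current block size `k`, and the current
parsing, a list of cubical blocks (corner and side length) in the order they were parsed. -/
structure PState (d : ℕ) where
  m : ℕ
  k : ℕ
  blocks : List ((Fin d → ℕ) × ℕ)

/-- The recurrence quantity `J(P, k)`: the fraction of `k`-blocks of the parsing whose words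
occur at least twice among the parsed `k`-words (`0` if there are no `k`-blocks). -/
noncomputable def Jval (x : Config A d) (P : List ((Fin d → ℕ) × ℕ)) (k : ℕ) : ℝ :=
  let Pk := P.filter fun b => decide (b.2 = k)
  ((Pk.filter fun b =>
      decide (2 ≤ (Pk.filter fun b' =>
        decide (wordAt x k b'.1 = wordAt x k b.1)).length)).length : ℝ) / (Pk.length : ℝ)

open scoped Classical in
/-- One step of the `SRU_φ` parser: if `J(P_m, k) ≥ φ`, increase the block size; otherwise
parse the boundary region `L = Λ_{⌊m/k⌋k+k} \ Λ_{⌊m/k⌋k}` regularly into `k`-blocks,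
appending them in lexicographic order of their corners, and set `m := ⌊m/k⌋k + k`. -/
noncomputable def step (φ : ℝ) (x : Config A d) (s : PState d) : PState d :=
  if φ ≤ Jval x s.blocks s.k then { s with k := s.k + 1 }
  else
    { m := s.m / s.k * s.k + s.k
      k := s.k
      blocks := s.blocks ++
        (((tuples d (s.m / s.k + 1)).filter fun r => decide (¬ ∀ j, r j < s.m / s.k)).map
          fun r => (fun j => s.k * r j, s.k)) }

/-- The `SRU_φ` parser iterated from the initial state `m = 0`, `k = 1`, empty parsing. -/
noncomputable def iter (φ : ℝ) (x : Config A d) : ℕ → PState d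
  | 0 => ⟨0, 1, []⟩
  | t + 1 => step φ x (iter φ x t)

/-- Membership of a site in a block. -/
def inBlock (i : Site d) (b : (Fin d → ℕ) × ℕ) : Prop :=
  ∀ j, b.1 j ≤ i j ∧ i j < b.1 j + b.2

/-- `L_k(x)`: the region parsed with block size `k`. -/
def Lregion (φ : ℝ) (x : Config A d) (k : ℕ) : Set (Site d) :=
  {i | ∃ t, ∃ b ∈ (iter φ x t).blocks, b.2 = k ∧ inBlock i b}

/-- `M_k(x)`: the number of distinct `k`-words parsed in `L_k(x)`. -/
noncomputable def Mk (φ : ℝ) (x : Config A d) (k : ℕ) : ℕ :=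
  Set.ncard {w : Word A d k | ∃ t, ∃ b ∈ (iter φ x t).blocks, b.2 = k ∧ wordAt x k b.1 = w}

/-- The cube `Λ_n` as a set of sites. -/
def cubeSet (d n : ℕ) : Set (Site d) := {i | ∀ j, i j < n}

/-- Upper asymptotic density of a set of sites. -/
noncomputable def upperDensity (S : Set (Site d)) : ℝ :=
  limsup (fun n : ℕ => (Set.ncard (S ∩ cubeSet d n) : ℝ) / (n : ℝ) ^ d) atTop

/-- `k` is a typical scale for `x`: `A^{k^d(h-α₀)} ≤ M_k(x) ≤ A^{k^d(h+α₀)}`. -/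
def TypicalScale (φ : ℝ) (x : Config A d) (h α0 : ℝ) (k : ℕ) : Prop :=
  (A : ℝ) ^ ((k : ℝ) ^ d * (h - α0)) ≤ (Mk φ x k : ℝ) ∧
    (Mk φ x k : ℝ) ≤ (A : ℝ) ^ ((k : ℝ) ^ d * (h + α0))

/-- The total volume `|L_l^u| = Σ_{l ≤ k ≤ u} |L_k(x)|`. -/
noncomputable def volIcc (φ : ℝ) (x : Config A d) (l u : ℕ) : ℝ :=
  ∑ k ∈ Finset.Icc l u, (Set.ncard (Lregion φ x k) : ℝ)

open scoped Classical in
/-- The `i`-th block ever appended by the parser (the block lists grow by appending). -/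
noncomputable def blockSeq (φ : ℝ) (x : Config A d) (i : ℕ) : Option ((Fin d → ℕ) × ℕ) :=
  if h : ∃ t, i < (iter φ x t).blocks.length then ((iter φ x h.choose).blocks)[i]? else none

/-- The side length of the largest leading sub-word of the `i`-th parsed word that occurs as
a leading sub-word of a previously parsed word (`0` if there is none). -/
noncomputable def matchLen (φ : ℝ) (x : Config A d) (i : ℕ) : ℕ :=
  sSup {l : ℕ | ∃ b, blockSeq φ x i = some b ∧ l ≤ b.2 ∧
    ∃ j < i, ∃ b', blockSeq φ x j = some b' ∧ l ≤ b'.2 ∧ wordAt x l b.1 = wordAt x l b'.1}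

/-- The length (in alphabet symbols) of the code of the `i`-th parsed word: a pointer to a
previously parsed word, a descriptor of `O(log)` length (side length and position of the
block, and side length of the referenced leading sub-word), and the list of the entries
outside the referenced leading sub-word. -/
noncomputable def codeLen (φ : ℝ) (x : Config A d) (i : ℕ) : ℕ :=
  match blockSeq φ x i with
  | none => 0
  | some b =>
    (Nat.log A (i + 1) + 1) + (Nat.log A (b.2 + 1) + 1) +
      (∑ j : Fin d, (Nat.log A (b.1 j + 1) + 1)) +
      (Nat.log A (matchLen φ x i + 1) + 1) + (b.2 ^ d - matchLen φ x i ^ d)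

/-- The first time at which the parsed region covers `Λ_n`. -/
noncomputable def coverTime (φ : ℝ) (x : Config A d) (n : ℕ) : ℕ :=
  sInf {t | n ≤ (iter φ x t).m}

/-- `|C_φ(x^n)|`: the total length of the code of the portion of the parsing covering `Λ_n`. -/
noncomputable def codeLength (φ : ℝ) (x : Config A d) (n : ℕ) : ℕ :=
  ∑ i ∈ Finset.range ((iter φ x (coverTime φ x n)).blocks.length), codeLen φ x i

/-! ### Cubes and boxes -/

/-- The cube of side `j` with lower corner `c`. -/
def box (c : Site d) (j : ℕ) : Finset (Site d) :=
  Fintype.piFinset fun i => Finset.Ico (c i) (c i + j)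

/-- The cube `Λ_n` as a finset. -/
def cube (d n : ℕ) : Finset (Site d) := Fintype.piFinset fun _ => Finset.range n

lemma mem_box {c v : Site d} {j : ℕ} : v ∈ box c j ↔ ∀ i, c i ≤ v i ∧ v i < c i + j := by
  simp [box, Fintype.mem_piFinset]

lemma mem_cube {v : Site d} {n : ℕ} : v ∈ cube d n ↔ ∀ i, v i < n := by
  simp [cube, Fintype.mem_piFinset]

lemma card_box (c : Site d) (j : ℕ) : (box c j).card = j ^ d := by
  simp [box, Fintype.card_piFinset]

lemma card_cube (d n : ℕ) : (cube d n).card = n ^ d := by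
  simp [cube, Fintype.card_piFinset]

lemma cube_mono {m n : ℕ} (h : m ≤ n) : cube d m ⊆ cube d n := fun _ hv =>
  mem_cube.2 fun i => (mem_cube.1 hv i).trans_le h

lemma box_zero (n : ℕ) : box (0 : Site d) n = cube d n := by
  ext v; simp [mem_box, mem_cube]

lemma add_mem_box {c u : Site d} {j : ℕ} (hu : u ∈ cube d j) : c + u ∈ box c j := by
  refine mem_box.2 fun i => ?_
  have := mem_cube.1 hu i
  simp only [Pi.add_apply]
  omega

lemma exists_of_mem_box {c v : Site d} {j : ℕ} (hv : v ∈ box c j) :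
    ∃ u ∈ cube d j, v = c + u := by
  refine ⟨fun i => v i - c i, mem_cube.2 fun i => ?_, ?_⟩
  · have := mem_box.1 hv i; omega
  · ext i; have := mem_box.1 hv i; simp only [Pi.add_apply]; omega

lemma box_eq_map (c : Site d) (j : ℕ) : box c j = (cube d j).map (addLeftEmbedding c) := by
  ext v
  simp only [Finset.mem_map, addLeftEmbedding_apply]
  constructor
  · intro hv
    obtain ⟨u, hu, rfl⟩ := exists_of_mem_box hv
    exact ⟨u, hu, rfl⟩
  · rintro ⟨u, hu, rfl⟩
    exact add_mem_box hu

lemma wordAt_eq_iff {x x' : Config A d} {k : ℕ} {c c' : Site d} :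
    wordAt x k c = wordAt x' k c' ↔ ∀ u ∈ cube d k, x (c + u) = x' (c' + u) := by
  constructor
  · intro h u hu
    exact congrFun h fun i => ⟨u i, mem_cube.1 hu i⟩
  · intro h
    funext w
    exact h (fun i => (w i : ℕ)) (mem_cube.2 fun i => (w i).2)

lemma wordAt_eq_iff_box {x x' : Config A d} {k : ℕ} {c : Site d} :
    wordAt x k c = wordAt x' k c ↔ ∀ v ∈ box c k, x v = x' v := by
  rw [wordAt_eq_iff]
  constructor
  · intro h v hv
    obtain ⟨u, hu, rfl⟩ := exists_of_mem_box hv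
    exact h u hu
  · intro h u hu
    exact h _ (add_mem_box hu)

lemma wordAt_shift (x : Config A d) (k : ℕ) (c r : Site d) :
    wordAt (shift r x) k c = wordAt x k (c + r) := by
  funext w
  simp only [wordAt, shift]
  congr 1
  funext j
  simp only [Pi.add_apply]
  ring

lemma card_word (A d k : ℕ) : Fintype.card (Word A d k) = A ^ k ^ d := by
  simp [Word]

/-- A Vitali covering lemma for cubes with prescribed lower corners. -/
lemma exists_disjoint_boxes (V : Finset (Site d)) (n : Site d → ℕ) (hn : ∀ v ∈ V, 1 ≤ n v) :
    ∃ U ⊆ V, (U : Set (Site d)).PairwiseDisjoint (fun v => box v (n v)) ∧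
      V.card ≤ 3 ^ d * ∑ u ∈ U, (n u) ^ d := by
  classical
  obtain ⟨u, hu, hdis, hcov⟩ := Vitali.exists_disjoint_subfamily_covering_enlargement
    (fun v => (box v (n v) : Set (Site d))) (V : Set (Site d)) (fun v => (n v : ℝ)) 2
    (by norm_num) (fun _ _ => Nat.cast_nonneg _) ((∑ v ∈ V, n v : ℕ) : ℝ)
    (fun a ha => by
      exact_mod_cast Finset.single_le_sum (f := n) (fun _ _ => Nat.zero_le _) ha)
    (fun a ha => ⟨a, by
      have := hn a ha
      exact Finset.mem_coe.2 (mem_box.2 fun i => by omega)⟩)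
  have hfin : u.Finite := V.finite_toSet.subset hu
  have hsub : hfin.toFinset ⊆ V := fun v hv => hu (hfin.mem_toFinset.1 hv)
  refine ⟨hfin.toFinset, hsub, ?_, ?_⟩
  · intro a ha b hb hab
    have := hdis (hfin.mem_toFinset.1 ha) (hfin.mem_toFinset.1 hb) hab
    simpa [Function.onFun, Finset.disjoint_coe] using this
  · have hV : V ⊆ hfin.toFinset.biUnion fun b => Fintype.piFinset fun i =>
        Finset.Ico (b i - 2 * n b) (b i + n b) := by
      intro a ha
      obtain ⟨b, hb, ⟨v, hva, hvb⟩, hle⟩ := hcov a ha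
      refine Finset.mem_biUnion.2 ⟨b, hfin.mem_toFinset.2 hb, Fintype.mem_piFinset.2 fun i => ?_⟩
      have h1 := mem_box.1 (Finset.mem_coe.1 hva) i
      have h2 := mem_box.1 (Finset.mem_coe.1 hvb) i
      have h3 : n a ≤ 2 * n b := by exact_mod_cast hle
      rw [Finset.mem_Ico]
      omega
    calc V.card ≤ _ := Finset.card_le_card hV
      _ ≤ ∑ b ∈ hfin.toFinset, _ := Finset.card_biUnion_le
      _ ≤ ∑ b ∈ hfin.toFinset, 3 ^ d * (n b) ^ d := by
        refine Finset.sum_le_sum fun b _ => ?_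
        rw [Fintype.card_piFinset, ← mul_pow]
        calc ∏ i, (Finset.Ico (b i - 2 * n b) (b i + n b)).card ≤ ∏ _i : Fin d, (3 * n b) :=
              Finset.prod_le_prod' fun i _ => by rw [Nat.card_Ico]; omega
          _ = (3 * n b) ^ d := by simp
      _ = 3 ^ d * ∑ u ∈ hfin.toFinset, (n u) ^ d := by rw [Finset.mul_sum]

/-- Among the phases of an `R`-periodic grid, one carries at most the average weight. -/
lemma exists_phase {R : ℕ} (hR : 1 ≤ R) (s : Finset (Site d)) (b : Site d → ℝ) :
    ∃ τ : Site d, (∀ i, τ i < R) ∧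
      (R : ℝ) ^ d * ∑ t ∈ s with ∀ i, t i % R = τ i, b t ≤ ∑ v ∈ s, b v := by
  classical
  have hne : (cube d R).Nonempty := ⟨0, mem_cube.2 fun i => by show 0 < R; omega⟩
  have hfib : ∑ τ ∈ cube d R, ∑ t ∈ s with (fun i => t i % R) = τ, b t = ∑ v ∈ s, b v :=
    Finset.sum_fiberwise_of_maps_to
      (fun t _ => mem_cube.2 fun i => Nat.mod_lt _ (by omega)) b
  obtain ⟨τ, hτ, hle⟩ := Finset.exists_le_of_sum_le (s := cube d R)
    (f := fun τ => ∑ t ∈ s with (fun i => t i % R) = τ, b t)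
    (g := fun _ => (∑ v ∈ s, b v) / (R : ℝ) ^ d) hne (by
      rw [hfib, Finset.sum_const, card_cube, nsmul_eq_mul]
      have : (R : ℝ) ^ d ≠ 0 := by positivity
      push_cast
      rw [mul_div_cancel₀ _ this])
  refine ⟨τ, mem_cube.1 hτ, ?_⟩
  rw [le_div_iff₀ (by positivity)] at hle
  simpa [funext_iff, mul_comm] using hle

lemma tile_unique {R : ℕ} {τ t t' v : Site d} (ht : ∀ i, t i % R = τ i)
    (ht' : ∀ i, t' i % R = τ i) (h : v ∈ box t R) (h' : v ∈ box t' R) : t = t' := by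
  funext i
  have h1 := mem_box.1 h i
  have h2 := mem_box.1 h' i
  have e : t i ≡ t' i [MOD R] := by rw [Nat.ModEq, ht, ht']
  rcases le_total (t i) (t' i) with hle | hle
  · have := (Nat.modEq_iff_dvd' hle).1 e
    have := Nat.eq_zero_of_dvd_of_lt this (by omega)
    omega
  · have := (Nat.modEq_iff_dvd' hle).1 e.symm
    have := Nat.eq_zero_of_dvd_of_lt this (by omega)
    omega

lemma exists_tile {R : ℕ} {τ v : Site d} (hτ : ∀ i, τ i < R) (hv : ∀ i, R ≤ v i) :
    ∃ t : Site d, (∀ i, t i % R = τ i) ∧ v ∈ box t R := by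
  refine ⟨fun i => v i - (v i + R - τ i) % R, fun i => ?_, mem_box.2 fun i => ?_⟩
  · have h1 := hτ i
    have h2 := hv i
    have h3 := Nat.mod_lt (v i + R - τ i) (show 0 < R by omega)
    have h4 : τ i ≡ v i - (v i + R - τ i) % R [MOD R] := by
      have h5 : (v i + R - τ i) % R ≡ v i + R - τ i [MOD R] := Nat.mod_modEq _ _
      have h6 : τ i + (v i + R - τ i) % R ≡ (v i - (v i + R - τ i) % R) +
          (v i + R - τ i) % R [MOD R] := by
        refine (h5.add_left (τ i)).trans ?_
        rw [show τ i + (v i + R - τ i) = v i + R by omega,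
          show v i - (v i + R - τ i) % R + (v i + R - τ i) % R = v i by omega]
        exact Nat.add_modEq_right
      exact Nat.ModEq.add_right_cancel' _ h6
    rw [← h4, Nat.mod_eq_of_lt h1]
  · have h1 := hτ i
    have h2 := hv i
    have h3 := Nat.mod_lt (v i + R - τ i) (show 0 < R by omega)
    omega

/-- Bound for the number of sites of `Λ_N`, outside a family of boxes, which are not covered by
the good tiles of a grid. -/
lemma card_uncovered {R N : ℕ} {τ : Site d} (hτ : ∀ i, τ i < R)
    {ι : Type*} (F : Finset ι) (c : ι → Site d) (j : ι → ℕ) (Good : Site d → Prop)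
    (D : Finset (Site d)) (hDN : D ⊆ cube d N) (hDF : ∀ b ∈ F, Disjoint D (box (c b) (j b)))
    (hD : ∀ t ∈ cube d N, (∀ i, t i % R = τ i) → Good t → box t R ⊆ cube d N →
      (∀ b ∈ F, Disjoint (box t R) (box (c b) (j b))) → Disjoint D (box t R))
    [DecidablePred Good] :
    (D.card : ℝ) ≤ ((N : ℝ) ^ d - ((N - 2 * R : ℕ) : ℝ) ^ d) +
      ∑ b ∈ F, (((j b + 2 * R : ℕ) : ℝ) ^ d - (j b : ℝ) ^ d) +
      (R : ℝ) ^ d * ((cube d N).filter fun t => (∀ i, t i % R = τ i) ∧ ¬ Good t).card := by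
  classical
  set inner : Finset (Site d) := box (fun _ => R) (N - 2 * R)
  set enl : ι → Finset (Site d) := fun b => Fintype.piFinset fun i =>
    Finset.Ico (c b i - R) (c b i + j b + R)
  set bad := (cube d N).filter fun t => (∀ i, t i % R = τ i) ∧ ¬ Good t
  have hsub : D ⊆ ((cube d N \ inner) ∪ F.biUnion fun b => enl b \ box (c b) (j b)) ∪
      bad.biUnion fun t => box t R := by
    intro v hv
    have hvN := mem_cube.1 (hDN hv)
    by_cases hin : v ∈ inner
    swap
    · exact Finset.mem_union_left _ (Finset.mem_union_left _ (Finset.mem_sdiff.2 ⟨hDN hv, hin⟩))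
    have hin' := mem_box.1 hin
    obtain ⟨t, ht, hvt⟩ := exists_tile hτ fun i => (hin' i).1
    have hvt' := mem_box.1 hvt
    have hbox : box t R ⊆ cube d N := fun u hu => mem_cube.2 fun i => by
      have := mem_box.1 hu i
      have := hvt' i
      have := hin' i
      omega
    have htN : t ∈ cube d N := mem_cube.2 fun i => (hvt' i).1.trans_lt (hvN i)
    by_cases hg : Good t
    swap
    · exact Finset.mem_union_right _ (Finset.mem_biUnion.2
        ⟨t, Finset.mem_filter.2 ⟨htN, ht, hg⟩, hvt⟩)
    by_cases hF : ∀ b ∈ F, Disjoint (box t R) (box (c b) (j b))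
    · exact absurd hvt (Finset.disjoint_left.1 (hD t htN ht hg hbox hF) hv)
    push Not at hF
    obtain ⟨b, hb, hnd⟩ := hF
    rw [Finset.not_disjoint_iff] at hnd
    obtain ⟨u, hut, hub⟩ := hnd
    refine Finset.mem_union_left _ (Finset.mem_union_right _ (Finset.mem_biUnion.2
      ⟨b, hb, Finset.mem_sdiff.2 ⟨Fintype.mem_piFinset.2 fun i => ?_,
        Finset.disjoint_left.1 (hDF b hb) hv⟩⟩))
    have h1 := mem_box.1 hut i
    have h2 := mem_box.1 hub i
    have h3 := hvt' i
    rw [Finset.mem_Ico]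
    omega
  have h1 : ((cube d N \ inner).card : ℝ) ≤ (N : ℝ) ^ d - ((N - 2 * R : ℕ) : ℝ) ^ d := by
    have hsub : inner ⊆ cube d N := fun v hv => mem_cube.2 fun i => by
      have := mem_box.1 hv i
      omega
    rw [Finset.cast_card_sdiff hsub, card_cube, card_box]
    push_cast
    exact le_rfl
  have h2 : ∀ b ∈ F, ((enl b \ box (c b) (j b)).card : ℝ) ≤
      ((j b + 2 * R : ℕ) : ℝ) ^ d - (j b : ℝ) ^ d := by
    intro b _
    have hsub : box (c b) (j b) ⊆ enl b := fun v hv => Fintype.mem_piFinset.2 fun i => by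
      have := mem_box.1 hv i
      rw [Finset.mem_Ico]
      omega
    rw [Finset.cast_card_sdiff hsub, card_box]
    have : (enl b).card ≤ (j b + 2 * R) ^ d := by
      rw [Fintype.card_piFinset]
      calc ∏ i, (Finset.Ico (c b i - R) (c b i + j b + R)).card
          ≤ ∏ _i : Fin d, (j b + 2 * R) :=
            Finset.prod_le_prod' fun i _ => by rw [Nat.card_Ico]; omega
        _ = _ := by simp
    have : ((enl b).card : ℝ) ≤ ((j b + 2 * R : ℕ) : ℝ) ^ d := by exact_mod_cast this
    push_cast at this ⊢
    linarith
  have h3 : ((bad.biUnion fun t => box t R).card : ℝ) ≤ (R : ℝ) ^ d * bad.card := by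
    have : (bad.biUnion fun t => box t R).card ≤ ∑ t ∈ bad, (box t R).card :=
      Finset.card_biUnion_le
    simp only [card_box, Finset.sum_const, smul_eq_mul] at this
    have h' : ((bad.biUnion fun t => box t R).card : ℝ) ≤ ((bad.card * R ^ d : ℕ) : ℝ) := by
      exact_mod_cast this
    push_cast at h'
    linarith
  have h4 : ((F.biUnion fun b => enl b \ box (c b) (j b)).card : ℝ) ≤
      ∑ b ∈ F, (((j b + 2 * R : ℕ) : ℝ) ^ d - (j b : ℝ) ^ d) := by
    calc ((F.biUnion fun b => enl b \ box (c b) (j b)).card : ℝ)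
        ≤ ((∑ b ∈ F, (enl b \ box (c b) (j b)).card : ℕ) : ℝ) := by
          exact_mod_cast Finset.card_biUnion_le
      _ = ∑ b ∈ F, ((enl b \ box (c b) (j b)).card : ℝ) := by push_cast; rfl
      _ ≤ _ := Finset.sum_le_sum h2
  have h5 := Finset.card_le_card hsub
  have h6 := Finset.card_union_le
    ((cube d N \ inner) ∪ F.biUnion fun b => enl b \ box (c b) (j b))
    (bad.biUnion fun t => box t R)
  have h7 := Finset.card_union_le (cube d N \ inner) (F.biUnion fun b => enl b \ box (c b) (j b))
  have h8 : (D.card : ℝ) ≤ (cube d N \ inner).card +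
      (F.biUnion fun b => enl b \ box (c b) (j b)).card +
      (bad.biUnion fun t => box t R).card := by
    exact_mod_cast h5.trans (h6.trans (Nat.add_le_add_right h7 _))
  linarith

/-- Counting words through weighted descriptions: if every configuration of `Y` is determined on
`Λ_N` by a finite set of marks together with its values on few sites depending on the marks, and
the marks have large weight, then there are few words. -/
lemma ncard_words_le {A : ℕ} (hA : 2 ≤ A) {M : Type*} (N : ℕ) (Y : Set (Config A d))
    (F : Config A d → Finset M) (D : Finset M → Finset (Site d)) (marks : Finset M)
    (w : M → ℝ) (hw : ∀ m ∈ marks, 0 ≤ w m) (s cost : ℝ)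
    (hF : ∀ y ∈ Y, F y ⊆ marks) (hs : ∀ y ∈ Y, ((D (F y)).card : ℝ) ≤ s)
    (hcost : ∀ y ∈ Y, (A : ℝ) ^ (-cost) ≤ ∏ m ∈ F y, w m)
    (hdet : ∀ y ∈ Y, ∀ y' ∈ Y, F y = F y' → (∀ v ∈ D (F y), y v = y' v) →
      ∀ v ∈ cube d N, y v = y' v) :
    (Set.ncard ((fun y => wordAt y N 0) '' Y) : ℝ) ≤
      (A : ℝ) ^ s * (A : ℝ) ^ cost * Real.exp (∑ m ∈ marks, w m) := by
  classical
  have hA0 : (0 : ℝ) < A := by positivity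
  have hA1 : (1 : ℝ) ≤ A := by exact_mod_cast (by omega : 1 ≤ A)
  set W : Set (Word A d N) := (fun y => wordAt y N 0) '' Y
  have hWf : W.Finite := Set.toFinite _
  have hch : ∀ u : Word A d N, ∃ y : Config A d, u ∈ W → y ∈ Y ∧ wordAt y N 0 = u := by
    intro u
    by_cases hu : u ∈ W
    · obtain ⟨y, hy, hyu⟩ := hu
      exact ⟨y, fun _ => ⟨hy, hyu⟩⟩
    · exact ⟨fun _ => ⟨0, by omega⟩, fun h => absurd h hu⟩
  choose g hg using hch
  set Wf := hWf.toFinset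
  have hmem : ∀ u ∈ Wf, u ∈ W := fun u hu => hWf.mem_toFinset.1 hu
  set FF := Wf.image fun u => F (g u)
  have hfib : ∀ a ∈ FF, ((Wf.filter fun u => F (g u) = a).card : ℝ) ≤ (A : ℝ) ^ s := by
    intro a ha
    obtain ⟨u₀, hu₀, hu₀a⟩ := Finset.mem_image.1 ha
    have hinj : (Wf.filter fun u => F (g u) = a).card ≤
        (Finset.univ : Finset (D a → Fin A)).card := by
      refine Finset.card_le_card_of_injOn (fun u => fun v => g u v)
        (fun _ _ => Finset.mem_coe.2 (Finset.mem_univ _)) ?_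
      intro u hu u' hu' huu
      simp only [Finset.coe_filter, Set.mem_ofPred_eq] at hu hu'
      have h1 := hg u (hmem u hu.1)
      have h2 := hg u' (hmem u' hu'.1)
      rw [← h1.2, ← h2.2, wordAt_eq_iff_box, box_zero]
      refine hdet _ h1.1 _ h2.1 (hu.2.trans hu'.2.symm) fun v hv => ?_
      rw [hu.2] at hv
      exact congrFun huu ⟨v, hv⟩
    have hc : (Finset.univ : Finset (D a → Fin A)).card = A ^ (D a).card := by simp
    rw [hc] at hinj
    calc ((Wf.filter fun u => F (g u) = a).card : ℝ) ≤ (A : ℝ) ^ (D a).card := by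
          exact_mod_cast hinj
      _ = (A : ℝ) ^ ((D a).card : ℝ) := (Real.rpow_natCast _ _).symm
      _ ≤ (A : ℝ) ^ s := by
          refine Real.rpow_le_rpow_of_exponent_le hA1 ?_
          rw [← hu₀a]
          exact hs _ (hg u₀ (hmem _ hu₀)).1
  have h1 : (Wf.card : ℝ) ≤ FF.card * (A : ℝ) ^ s := by
    have : Wf.card = ∑ a ∈ FF, (Wf.filter fun u => F (g u) = a).card :=
      Finset.card_eq_sum_card_fiberwise fun u hu => Finset.mem_image_of_mem _ hu
    rw [this]
    push_cast
    calc _ ≤ ∑ a ∈ FF, (A : ℝ) ^ s := Finset.sum_le_sum hfib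
      _ = _ := by simp
  have h2 : (FF.card : ℝ) * (A : ℝ) ^ (-cost) ≤ Real.exp (∑ m ∈ marks, w m) := by
    calc (FF.card : ℝ) * (A : ℝ) ^ (-cost) = ∑ a ∈ FF, (A : ℝ) ^ (-cost) := by simp
      _ ≤ ∑ a ∈ FF, ∏ m ∈ a, w m := by
          refine Finset.sum_le_sum fun a ha => ?_
          obtain ⟨u₀, hu₀, rfl⟩ := Finset.mem_image.1 ha
          exact hcost _ (hg u₀ (hmem _ hu₀)).1
      _ ≤ ∑ a ∈ marks.powerset, ∏ m ∈ a, w m := by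
          refine Finset.sum_le_sum_of_subset_of_nonneg (fun a ha => ?_) fun a ha _ =>
            Finset.prod_nonneg fun m hm => hw m (Finset.mem_powerset.1 ha hm)
          obtain ⟨u₀, hu₀, rfl⟩ := Finset.mem_image.1 ha
          exact Finset.mem_powerset.2 (hF _ (hg u₀ (hmem _ hu₀)).1)
      _ = ∏ m ∈ marks, (1 + w m) := (Finset.prod_one_add _).symm
      _ ≤ ∏ m ∈ marks, Real.exp (w m) := by
          refine Finset.prod_le_prod (fun m hm => by linarith [hw m hm]) fun m _ => ?_
          linarith [Real.add_one_le_exp (w m)]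
      _ = Real.exp (∑ m ∈ marks, w m) := (Real.exp_sum _ _).symm
  have h3 : (FF.card : ℝ) ≤ (A : ℝ) ^ cost * Real.exp (∑ m ∈ marks, w m) := by
    have hp : (0 : ℝ) < (A : ℝ) ^ cost := Real.rpow_pos_of_pos hA0 _
    rw [Real.rpow_neg hA0.le] at h2
    rwa [← div_eq_mul_inv, div_le_iff₀' hp] at h2
  have h4 : Set.ncard W = Wf.card := Set.ncard_eq_toFinset_card _ hWf
  rw [h4]
  calc (Wf.card : ℝ) ≤ FF.card * (A : ℝ) ^ s := h1
    _ ≤ ((A : ℝ) ^ cost * Real.exp (∑ m ∈ marks, w m)) * (A : ℝ) ^ s := by gcongr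
    _ = _ := by ring

/-! ### Asymptotic estimates -/

lemma eventually_boundary_le (d R : ℕ) {θ : ℝ} (hθ : 0 < θ) :
    ∀ᶠ N : ℕ in atTop, (N : ℝ) ^ d - ((N - R : ℕ) : ℝ) ^ d ≤ θ * (N : ℝ) ^ d := by
  have h1 : Tendsto (fun N : ℕ => (1 - (R : ℝ) / N) ^ d) atTop (𝓝 ((1 - 0) ^ d)) :=
    (tendsto_const_nhds.sub (tendsto_const_div_atTop_nhds_zero_nat (R : ℝ))).pow d
  have h2 : ∀ᶠ N : ℕ in atTop, 1 - θ < (1 - (R : ℝ) / N) ^ d :=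
    h1.eventually (lt_mem_nhds (by simp [hθ]))
  filter_upwards [h2, eventually_ge_atTop R, eventually_gt_atTop 0] with N hN hR h0
  have hN0 : (0 : ℝ) < N := by exact_mod_cast h0
  have : ((N - R : ℕ) : ℝ) = N * (1 - (R : ℝ) / N) := by
    rw [Nat.cast_sub hR]
    field_simp
  rw [this, mul_pow]
  have : 0 < (N : ℝ) ^ d := by positivity
  nlinarith

lemma eventually_enlarge_le (d R : ℕ) {θ : ℝ} (hθ : 0 < θ) :
    ∀ᶠ j : ℕ in atTop, ((j + R : ℕ) : ℝ) ^ d - (j : ℝ) ^ d ≤ θ * (j : ℝ) ^ d := by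
  have h1 : Tendsto (fun N : ℕ => (1 + (R : ℝ) / N) ^ d) atTop (𝓝 ((1 + 0) ^ d)) :=
    (tendsto_const_nhds.add (tendsto_const_div_atTop_nhds_zero_nat (R : ℝ))).pow d
  have h2 : ∀ᶠ N : ℕ in atTop, (1 + (R : ℝ) / N) ^ d < 1 + θ :=
    h1.eventually (gt_mem_nhds (by simp [hθ]))
  filter_upwards [h2, eventually_gt_atTop 0] with N hN h0
  have hN0 : (0 : ℝ) < N := by exact_mod_cast h0
  have : ((N + R : ℕ) : ℝ) = N * (1 + (R : ℝ) / N) := by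
    push_cast
    field_simp
  rw [this, mul_pow]
  have : 0 < (N : ℝ) ^ d := by positivity
  nlinarith

lemma le_pow_of_pos_dim (hd : 1 ≤ d) (j : ℕ) : (j : ℝ) ≤ (j : ℝ) ^ d := by
  exact_mod_cast Nat.le_self_pow (by omega) j

lemma eventually_rpow_neg_le (hA : 2 ≤ A) (hd : 1 ≤ d) {κ θ : ℝ} (hκ : 0 < κ) (hθ : 0 < θ) :
    ∀ᶠ R : ℕ in atTop, (A : ℝ) ^ (-(κ * (R : ℝ) ^ d)) ≤ θ := by
  have hA1 : (1 : ℝ) < A := by exact_mod_cast (by omega : 1 < A)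
  have h : Tendsto (fun R : ℕ => (A : ℝ) ^ (-(κ * (R : ℝ)))) atTop (𝓝 0) :=
    (tendsto_rpow_atBot_of_base_gt_one _ hA1).comp
      (tendsto_neg_atTop_atBot.comp (tendsto_natCast_atTop_atTop.const_mul_atTop hκ))
  filter_upwards [h.eventually (gt_mem_nhds hθ)] with R hR
  refine le_trans (Real.rpow_le_rpow_of_exponent_le hA1.le ?_) hR.le
  have := le_pow_of_pos_dim hd R
  nlinarith

lemma exists_tail_le (hA : 2 ≤ A) (hd : 1 ≤ d) {κ θ : ℝ} (hκ : 0 < κ) (hθ : 0 < θ) :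
    ∀ᶠ J : ℕ in atTop, ∀ N : ℕ,
      ∑ j ∈ Finset.Icc J N, (A : ℝ) ^ (-(κ * (j : ℝ) ^ d)) ≤ θ := by
  have hA1 : (1 : ℝ) < A := by exact_mod_cast (by omega : 1 < A)
  have hA0 : (0 : ℝ) < A := by linarith
  set f : ℕ → ℝ := fun j => (A : ℝ) ^ (-(κ * (j : ℝ) ^ d))
  have hf0 : ∀ j, 0 ≤ f j := fun j => (Real.rpow_pos_of_pos hA0 _).le
  have hf : Summable f := by
    have hg : Summable fun j : ℕ => ((A : ℝ) ^ (-κ)) ^ j :=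
      summable_geometric_of_lt_one (Real.rpow_pos_of_pos hA0 _).le
        (Real.rpow_lt_one_of_one_lt_of_neg hA1 (by linarith))
    refine Summable.of_nonneg_of_le hf0 (fun j => ?_) hg
    rw [← Real.rpow_natCast, ← Real.rpow_mul hA0.le]
    refine Real.rpow_le_rpow_of_exponent_le hA1.le ?_
    have := le_pow_of_pos_dim hd j
    nlinarith
  have ht := tendsto_sum_nat_add f
  filter_upwards [ht.eventually (gt_mem_nhds hθ)] with J hJ N
  refine le_trans ?_ hJ.le
  have hs : Summable fun k => f (k + J) := (summable_nat_add_iff J).2 hf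
  refine le_trans ?_ (hs.sum_le_tsum (Finset.range (N + 1)) fun k _ => hf0 _)
  have : Finset.Icc J N ⊆ (Finset.range (N + 1)).image (fun k => k + J) := by
    intro j hj
    rw [Finset.mem_Icc] at hj
    exact Finset.mem_image.2 ⟨j - J, Finset.mem_range.2 (by omega), by omega⟩
  refine (Finset.sum_le_sum_of_subset_of_nonneg this fun _ _ _ => hf0 _).trans ?_
  rw [Finset.sum_image fun a _ b _ h => by simpa using h]

/-! ### Counting marked words -/

/-- A family of disjoint labelled blocks of side at least `J` in `Λ_N` for a configuration having
few positions in `Λ_N` whose `R`-word is not in `S`. The blocks with nonzero label cover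
a proportion at least `γ`. -/
structure Marked (N J R : ℕ) (S : Finset (Word A d R)) (ρ γ lam : ℝ) (y : Config A d)
    (F : Finset (Site d × ℕ × ℕ)) : Prop where
  bad : (((cube d N).filter fun v => wordAt y R v ∉ S).card : ℝ) ≤ lam * (N : ℝ) ^ d
  side : ∀ b ∈ F, J ≤ b.2.1
  sub : ∀ b ∈ F, box b.1 b.2.1 ⊆ cube d N
  label : ∀ b ∈ F, (b.2.2 : ℝ) ≤ (A : ℝ) ^ (ρ * (b.2.1 : ℝ) ^ d)
  disj : (F : Set (Site d × ℕ × ℕ)).PairwiseDisjoint fun b => box b.1 b.2.1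
  vol : γ * (N : ℝ) ^ d ≤ ∑ b ∈ F with b.2.2 ≠ 0, (b.2.1 : ℝ) ^ d

lemma sum_label_weight_le (hA : 2 ≤ A) {ρ κ : ℝ} (L j : ℕ) :
    ∑ i ∈ Finset.range (L + 1), (if (i : ℝ) ≤ (A : ℝ) ^ (ρ * (j : ℝ) ^ d) then
      (A : ℝ) ^ (-(κ * (j : ℝ) ^ d + if i = 0 then 0 else ρ * (j : ℝ) ^ d)) else 0) ≤
    2 * (A : ℝ) ^ (-(κ * (j : ℝ) ^ d)) := by
  have hA0 : (0 : ℝ) < A := by positivity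
  set B : ℝ := (A : ℝ) ^ (ρ * (j : ℝ) ^ d)
  have hB : 0 < B := Real.rpow_pos_of_pos hA0 _
  rw [Finset.sum_range_succ']
  have h0 : (if ((0 : ℕ) : ℝ) ≤ B then
      (A : ℝ) ^ (-(κ * (j : ℝ) ^ d + if (0 : ℕ) = 0 then 0 else ρ * (j : ℝ) ^ d)) else 0) =
      (A : ℝ) ^ (-(κ * (j : ℝ) ^ d)) := by
    simp [hB.le]
  rw [h0]
  have h1 : ∑ i ∈ Finset.range L, (if ((i + 1 : ℕ) : ℝ) ≤ B then
      (A : ℝ) ^ (-(κ * (j : ℝ) ^ d + if i + 1 = 0 then 0 else ρ * (j : ℝ) ^ d)) else 0) ≤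
      (A : ℝ) ^ (-(κ * (j : ℝ) ^ d)) := by
    rw [← Finset.sum_filter]
    have hc : (((Finset.range L).filter fun i => ((i + 1 : ℕ) : ℝ) ≤ B).card : ℝ) ≤ B := by
      have : (Finset.range L).filter (fun i => ((i + 1 : ℕ) : ℝ) ≤ B) ⊆
          Finset.range ⌊B⌋₊ := by
        intro i hi
        have := (Finset.mem_filter.1 hi).2
        exact Finset.mem_range.2 (Nat.le_floor this)
      have h2 := Finset.card_le_card this
      rw [Finset.card_range] at h2
      exact (by exact_mod_cast h2 : _ ≤ ((⌊B⌋₊ : ℕ) : ℝ)).trans (Nat.floor_le hB.le)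
    have h3 : ∀ i ∈ (Finset.range L).filter fun i => ((i + 1 : ℕ) : ℝ) ≤ B,
        (A : ℝ) ^ (-(κ * (j : ℝ) ^ d + if i + 1 = 0 then 0 else ρ * (j : ℝ) ^ d)) =
        (A : ℝ) ^ (-(κ * (j : ℝ) ^ d)) * B⁻¹ := by
      intro i _
      rw [if_neg (Nat.succ_ne_zero i), neg_add, Real.rpow_add hA0, Real.rpow_neg hA0.le (ρ * _)]
    rw [Finset.sum_congr rfl h3, Finset.sum_const, nsmul_eq_mul]
    have h4 : 0 < (A : ℝ) ^ (-(κ * (j : ℝ) ^ d)) := Real.rpow_pos_of_pos hA0 _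
    calc _ ≤ B * ((A : ℝ) ^ (-(κ * (j : ℝ) ^ d)) * B⁻¹) := by gcongr
      _ = _ := by field_simp
  linarith

lemma sum_side_pow_le {ι : Type*} (F : Finset ι) (c : ι → Site d) (j : ι → ℕ)
    (hdisj : (F : Set ι).PairwiseDisjoint fun b => box (c b) (j b)) (D : Finset (Site d))
    (hF : ∀ b ∈ F, box (c b) (j b) ⊆ D) :
    ∑ b ∈ F, (j b : ℝ) ^ d ≤ (D.card : ℝ) := by
  classical
  have h : (F.biUnion fun b => box (c b) (j b)).card = ∑ b ∈ F, (j b) ^ d := by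
    rw [Finset.card_biUnion hdisj]
    simp [card_box]
  have h2 : F.biUnion (fun b => box (c b) (j b)) ⊆ D := Finset.biUnion_subset.2 hF
  have h3 := Finset.card_le_card h2
  rw [h] at h3
  exact_mod_cast h3

/-- Words of size `N` determined by a marked family, together with the entries outside the blocks
with nonzero label, are few. -/
lemma ncard_marked_le (hA : 2 ≤ A) (hd : 1 ≤ d) {κ : ℝ} (hκ : 0 < κ) :
    ∃ R₀, ∀ R ≥ R₀, ∃ J₀, ∀ J ≥ J₀, ∃ N₀, ∀ N ≥ N₀, ∀ (a ρ γ lam : ℝ), ρ ≤ a → 0 ≤ a →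
      ∀ S : Finset (Word A d R), (S.card : ℝ) ≤ (A : ℝ) ^ (a * (R : ℝ) ^ d) →
      ∀ (Y : Set (Config A d)) (F : Config A d → Finset (Site d × ℕ × ℕ)),
        (∀ y ∈ Y, Marked N J R S ρ γ lam y (F y)) →
        (∀ y ∈ Y, ∀ y' ∈ Y, F y = F y' →
          (∀ v ∈ cube d N, (∀ b ∈ F y, b.2.2 ≠ 0 → v ∉ box b.1 b.2.1) → y v = y' v) →
          ∀ v ∈ cube d N, y v = y' v) →
        (Set.ncard ((fun y => wordAt y N 0) '' Y) : ℝ) ≤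
          (A : ℝ) ^ ((ρ * γ + a * (1 - γ) + lam + 5 * κ) * (N : ℝ) ^ d) := by
  classical
  have hA1 : (1 : ℝ) < A := by exact_mod_cast (by omega : 1 < A)
  have hA0 : (0 : ℝ) < A := by linarith
  have hlog : 0 < Real.log A := Real.log_pos hA1
  obtain ⟨R₀, hR₀⟩ := eventually_atTop.1
    (eventually_rpow_neg_le hA hd hκ (show 0 < κ * Real.log A / 2 by positivity))
  obtain ⟨J₁, hJ₁⟩ := eventually_atTop.1
    (exists_tail_le hA hd hκ (show 0 < κ * Real.log A / 4 by positivity))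
  refine ⟨R₀ + 1, fun R hR => ?_⟩
  obtain ⟨J₂, hJ₂⟩ := eventually_atTop.1 (eventually_enlarge_le d (2 * R) hκ)
  refine ⟨J₁ + J₂ + 1, fun J hJ => ?_⟩
  obtain ⟨N₀, hN₀⟩ := eventually_atTop.1 (eventually_boundary_le d (2 * R) hκ)
  refine ⟨N₀, fun N hN a ρ γ lam hρ ha S hS Y F hY hdet => ?_⟩
  have hR1 : 1 ≤ R := by omega
  have hph : ∀ y : Config A d, ∃ τ : Site d, (∀ i, τ i < R) ∧ (R : ℝ) ^ d *
      ((cube d N).filter fun t => (∀ i, t i % R = τ i) ∧ ¬ wordAt y R t ∈ S).card ≤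
      ((cube d N).filter fun v => wordAt y R v ∉ S).card := by
    intro y
    obtain ⟨τ, hτ, h⟩ := exists_phase hR1 (cube d N)
      (fun v => if wordAt y R v ∉ S then (1 : ℝ) else 0)
    refine ⟨τ, hτ, ?_⟩
    rw [← Finset.sum_filter, ← Finset.sum_filter, Finset.filter_filter] at h
    simpa using h
  choose τ hτ hτbad using hph
  set T : Config A d → Finset (Site d) := fun y => (cube d N).filter fun t =>
    (∀ i, t i % R = τ y i) ∧ wordAt y R t ∈ S ∧ box t R ⊆ cube d N ∧
      ∀ b ∈ F y, b.2.2 ≠ 0 → Disjoint (box t R) (box b.1 b.2.1) with hT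
  set Fh : Config A d → Finset ((Site d × ℕ × ℕ) ⊕ (Site d × Word A d R)) := fun y =>
    (F y).disjSum ((T y).image fun t => (t, wordAt y R t)) with hFh
  set bx : (Site d × ℕ × ℕ) ⊕ (Site d × Word A d R) → Finset (Site d) :=
    Sum.elim (fun b => if b.2.2 = 0 then ∅ else box b.1 b.2.1) (fun t => box t.1 R) with hbx
  set Dm : Finset ((Site d × ℕ × ℕ) ⊕ (Site d × Word A d R)) → Finset (Site d) :=
    fun m => cube d N \ m.biUnion bx with hDm
  set L : ℕ := ⌊(A : ℝ) ^ (|ρ| * (N : ℝ) ^ d)⌋₊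
  set w : (Site d × ℕ × ℕ) ⊕ (Site d × Word A d R) → ℝ :=
    Sum.elim (fun b => if (b.2.2 : ℝ) ≤ (A : ℝ) ^ (ρ * (b.2.1 : ℝ) ^ d) then
      (A : ℝ) ^ (-(κ * (b.2.1 : ℝ) ^ d + if b.2.2 = 0 then 0 else ρ * (b.2.1 : ℝ) ^ d)) else 0)
      (fun _ => (A : ℝ) ^ (-((κ + a) * (R : ℝ) ^ d))) with hw
  set marks : Finset ((Site d × ℕ × ℕ) ⊕ (Site d × Word A d R)) :=
    (cube d N ×ˢ Finset.Icc J N ×ˢ Finset.range (L + 1)).disjSum (cube d N ×ˢ S) with hmarks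
  have hmemD : ∀ y v, v ∈ Dm (Fh y) ↔ v ∈ cube d N ∧
      (∀ b ∈ F y, b.2.2 ≠ 0 → v ∉ box b.1 b.2.1) ∧ ∀ t ∈ T y, v ∉ box t R := by
    intro y v
    simp only [hDm, hFh, hbx, Finset.mem_sdiff, Finset.mem_biUnion, not_exists, not_and]
    refine and_congr_right fun _ => ⟨fun h => ⟨fun b hb h0 => ?_, fun t ht => ?_⟩, fun h m hm => ?_⟩
    · simpa [h0] using h (Sum.inl b) (Finset.inl_mem_disjSum.2 hb)
    · simpa using h (Sum.inr (t, wordAt y R t))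
        (Finset.inr_mem_disjSum.2 (Finset.mem_image_of_mem _ ht))
    · rcases m with b | t
      · have hb := Finset.inl_mem_disjSum.1 hm
        by_cases h0 : b.2.2 = 0
        · simp [h0]
        · simpa [h0] using h.1 b hb h0
      · obtain ⟨t', ht', rfl⟩ := Finset.mem_image.1 (Finset.inr_mem_disjSum.1 hm)
        simpa using h.2 t' ht'
  have key := ncard_words_le hA N Y Fh Dm marks w ?_ ((2 * κ + lam) * (N : ℝ) ^ d)
    ((2 * κ + ρ * γ + a * (1 - γ)) * (N : ℝ) ^ d) ?_ ?_ ?_ ?_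
  · refine key.trans ?_
    have hW : ∑ m ∈ marks, w m ≤ Real.log A * (κ * (N : ℝ) ^ d) := by
      rw [hmarks, Finset.sum_disjSum, Finset.sum_product, Finset.sum_product]
      simp only [hw, Sum.elim_inl, Sum.elim_inr, Finset.sum_product]
      have h1 : ∑ _c ∈ cube d N, ∑ j ∈ Finset.Icc J N, ∑ i ∈ Finset.range (L + 1),
          (if (i : ℝ) ≤ (A : ℝ) ^ (ρ * (j : ℝ) ^ d) then
            (A : ℝ) ^ (-(κ * (j : ℝ) ^ d + if i = 0 then 0 else ρ * (j : ℝ) ^ d)) else 0) ≤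
          ∑ _c ∈ cube d N, (κ * Real.log A / 2) := by
        refine Finset.sum_le_sum fun _ _ => ?_
        calc _ ≤ ∑ j ∈ Finset.Icc J N, 2 * (A : ℝ) ^ (-(κ * (j : ℝ) ^ d)) :=
              Finset.sum_le_sum fun j _ => sum_label_weight_le hA L j
          _ = 2 * ∑ j ∈ Finset.Icc J N, (A : ℝ) ^ (-(κ * (j : ℝ) ^ d)) := by
              rw [Finset.mul_sum]
          _ ≤ _ := by linarith [hJ₁ J (by omega) N]
      have h2 : ∑ _c ∈ cube d N, ∑ _s ∈ S, (A : ℝ) ^ (-((κ + a) * (R : ℝ) ^ d)) ≤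
          ∑ _c ∈ cube d N, (κ * Real.log A / 2) := by
        refine Finset.sum_le_sum fun _ _ => ?_
        rw [Finset.sum_const, nsmul_eq_mul]
        have h3 := hR₀ R (by omega)
        have h4 : 0 < (A : ℝ) ^ (-((κ + a) * (R : ℝ) ^ d)) := Real.rpow_pos_of_pos hA0 _
        calc _ ≤ (A : ℝ) ^ (a * (R : ℝ) ^ d) * (A : ℝ) ^ (-((κ + a) * (R : ℝ) ^ d)) := by gcongr
          _ = (A : ℝ) ^ (-(κ * (R : ℝ) ^ d)) := by
              rw [← Real.rpow_add hA0]
              congr 1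
              ring
          _ ≤ _ := h3
      refine (add_le_add h1 h2).trans ?_
      simp only [Finset.sum_const, card_cube, nsmul_eq_mul]
      push_cast
      linarith
    have hE : Real.exp (∑ m ∈ marks, w m) ≤ (A : ℝ) ^ (κ * (N : ℝ) ^ d) := by
      rw [Real.rpow_def_of_pos hA0]
      exact Real.exp_le_exp.2 hW
    have hp : 0 < (A : ℝ) ^ ((2 * κ + lam) * (N : ℝ) ^ d) *
      (A : ℝ) ^ ((2 * κ + ρ * γ + a * (1 - γ)) * (N : ℝ) ^ d) := by positivity
    refine (mul_le_mul_of_nonneg_left hE hp.le).trans (le_of_eq ?_)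
    rw [← Real.rpow_add hA0, ← Real.rpow_add hA0]
    congr 1
    ring
  · rintro (b | t) _
    · simp only [hw, Sum.elim_inl]
      split_ifs <;> positivity
    · simp only [hw, Sum.elim_inr]
      positivity
  · intro y hy
    have hM := hY y hy
    rw [hFh, hmarks]
    refine Finset.disjSum_mono (fun b hb => ?_) fun t ht => ?_
    · have h1 := hM.side b hb
      have h2 := hM.sub b hb
      have h3 : b.1 ∈ cube d N := h2 (mem_box.2 fun i => by omega)
      have h4 : b.2.1 ≤ N := by
        have h5 : (fun i => b.1 i + (b.2.1 - 1)) ∈ cube d N :=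
          h2 (mem_box.2 fun i => by omega)
        have := mem_cube.1 h5 ⟨0, by omega⟩
        omega
      refine Finset.mem_product.2 ⟨h3, Finset.mem_product.2
        ⟨Finset.mem_Icc.2 ⟨h1, h4⟩, Finset.mem_range.2 (Nat.lt_succ_of_le (Nat.le_floor ?_))⟩⟩
      refine (hM.label b hb).trans (Real.rpow_le_rpow_of_exponent_le hA1.le ?_)
      have h6 : (b.2.1 : ℝ) ^ d ≤ (N : ℝ) ^ d := by gcongr
      have h7 : 0 ≤ (b.2.1 : ℝ) ^ d := by positivity
      exact mul_le_mul (le_abs_self ρ) h6 h7 (abs_nonneg ρ)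
    · obtain ⟨t', ht', rfl⟩ := Finset.mem_image.1 ht
      have := Finset.mem_filter.1 ht'
      exact Finset.mem_product.2 ⟨this.1, this.2.2.1⟩
  · intro y hy
    have hM := hY y hy
    have h1 := card_uncovered (hτ y) ((F y).filter fun b => b.2.2 ≠ 0) (fun b => b.1)
      (fun b => b.2.1) (fun t => wordAt y R t ∈ S) (Dm (Fh y)) Finset.sdiff_subset
      (fun b hb => Finset.disjoint_left.2 fun v hv =>
        ((hmemD y v).1 hv).2.1 b (Finset.mem_filter.1 hb).1 (Finset.mem_filter.1 hb).2)
      (fun t ht hτt hg hsub hdis => Finset.disjoint_left.2 fun v hv =>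
        ((hmemD y v).1 hv).2.2 t (Finset.mem_filter.2 ⟨ht, hτt, hg, hsub, fun b hb h0 =>
          hdis b (Finset.mem_filter.2 ⟨hb, h0⟩)⟩))
    have h2 := hN₀ N hN
    have h3 : ∑ b ∈ (F y).filter (fun b => b.2.2 ≠ 0),
        (((b.2.1 + 2 * R : ℕ) : ℝ) ^ d - (b.2.1 : ℝ) ^ d) ≤ κ * (N : ℝ) ^ d := by
      calc _ ≤ ∑ b ∈ (F y).filter (fun b => b.2.2 ≠ 0), κ * (b.2.1 : ℝ) ^ d :=
            Finset.sum_le_sum fun b hb => hJ₂ _ (by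
              have := hM.side b (Finset.mem_filter.1 hb).1
              omega)
        _ = κ * ∑ b ∈ (F y).filter (fun b => b.2.2 ≠ 0), (b.2.1 : ℝ) ^ d := by
            rw [Finset.mul_sum]
        _ ≤ κ * (N : ℝ) ^ d := by
            gcongr
            have := sum_side_pow_le ((F y).filter (fun b => b.2.2 ≠ 0)) (fun b => b.1)
              (fun b => b.2.1)
              (hM.disj.subset (Finset.coe_subset.2 (Finset.filter_subset _ _))) (cube d N)
              (fun b hb => hM.sub b (Finset.mem_filter.1 hb).1)
            rw [card_cube] at this
            exact_mod_cast this
    have h4 := (hτbad y).trans hM.bad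
    linarith
  · intro y hy
    have hM := hY y hy
    have hprod : ∏ m ∈ Fh y, w m = (A : ℝ) ^ (-(∑ b ∈ F y, (κ * (b.2.1 : ℝ) ^ d +
        if b.2.2 = 0 then 0 else ρ * (b.2.1 : ℝ) ^ d) +
        (T y).card * ((κ + a) * (R : ℝ) ^ d))) := by
      rw [hFh, Finset.prod_disjSum, neg_add, Real.rpow_add hA0]
      congr 1
      · rw [← Finset.sum_neg_distrib, Real.rpow_sum_of_pos hA0]
        refine Finset.prod_congr rfl fun b hb => ?_
        simp only [hw, Sum.elim_inl]
        rw [if_pos (hM.label b hb)]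
      · simp only [hw, Sum.elim_inr, Finset.prod_const]
        rw [Finset.card_image_of_injective _ fun t t' h => (Prod.ext_iff.1 h).1,
          ← Real.rpow_natCast, ← Real.rpow_mul hA0.le]
        congr 1
        ring
    rw [hprod]
    refine Real.rpow_le_rpow_of_exponent_le hA1.le (neg_le_neg ?_)
    have hV := hM.vol
    set V : ℝ := ∑ b ∈ F y with b.2.2 ≠ 0, (b.2.1 : ℝ) ^ d with hVdef
    have h1 : ∑ b ∈ F y, (κ * (b.2.1 : ℝ) ^ d + if b.2.2 = 0 then 0 else ρ * (b.2.1 : ℝ) ^ d) =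
        κ * ∑ b ∈ F y, (b.2.1 : ℝ) ^ d + ρ * V := by
      rw [Finset.sum_add_distrib, ← Finset.mul_sum]
      congr 1
      rw [hVdef, Finset.sum_filter, Finset.mul_sum]
      exact Finset.sum_congr rfl fun b _ => by by_cases h : b.2.2 = 0 <;> simp [h]
    have h2 : ∑ b ∈ F y, (b.2.1 : ℝ) ^ d ≤ (N : ℝ) ^ d := by
      have := sum_side_pow_le (F y) (fun b => b.1) (fun b => b.2.1) hM.disj (cube d N)
        hM.sub
      rw [card_cube] at this
      exact_mod_cast this
    have h3 : V + (T y).card * (R : ℝ) ^ d ≤ (N : ℝ) ^ d := by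
      have hdisT : ((T y : Finset (Site d)) : Set (Site d)).PairwiseDisjoint
          fun t => box t R := by
        intro t ht t' ht' hne
        refine Finset.disjoint_left.2 fun v hv hv' => hne ?_
        exact tile_unique (Finset.mem_filter.1 ht).2.1 (Finset.mem_filter.1 ht').2.1 hv hv'
      set DT := (T y).biUnion fun t => box t R
      have hDT : DT ⊆ cube d N := Finset.biUnion_subset.2 fun t ht =>
        (Finset.mem_filter.1 ht).2.2.2.1
      have hc : DT.card = (T y).card * R ^ d := by
        rw [Finset.card_biUnion hdisT]
        simp [card_box]
      have := sum_side_pow_le ((F y).filter (fun b => b.2.2 ≠ 0)) (fun b => b.1)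
        (fun b => b.2.1) (hM.disj.subset (Finset.coe_subset.2 (Finset.filter_subset _ _)))
        (cube d N \ DT)
        (fun b hb v hv => Finset.mem_sdiff.2 ⟨hM.sub b (Finset.mem_filter.1 hb).1 hv, fun hvD => by
          obtain ⟨t, ht, hvt⟩ := Finset.mem_biUnion.1 hvD
          exact Finset.disjoint_left.1 ((Finset.mem_filter.1 ht).2.2.2.2 b
            (Finset.mem_filter.1 hb).1 (Finset.mem_filter.1 hb).2) hvt hv⟩)
      rw [Finset.cast_card_sdiff hDT, hc, card_cube] at this
      push_cast at this
      linarith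
    have hV0 : 0 ≤ V := Finset.sum_nonneg fun _ _ => by positivity
    rw [h1]
    have hX : 0 ≤ (T y).card * (R : ℝ) ^ d := by positivity
    have h4 : a * ((T y).card * (R : ℝ) ^ d) ≤ a * ((N : ℝ) ^ d - V) :=
      mul_le_mul_of_nonneg_left (by linarith) ha
    have h5 : (a - ρ) * (γ * (N : ℝ) ^ d) ≤ (a - ρ) * V :=
      mul_le_mul_of_nonneg_left hV (by linarith)
    have h6 : κ * (∑ b ∈ F y, (b.2.1 : ℝ) ^ d) ≤ κ * (N : ℝ) ^ d := by gcongr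
    have h7 : κ * ((T y).card * (R : ℝ) ^ d) ≤ κ * (N : ℝ) ^ d := by
      gcongr
      linarith
    linarith
  · intro y hy y' hy' hFF hD
    obtain ⟨hF1, hF2⟩ := Finset.disjSum_inj.1 hFF
    refine hdet y hy y' hy' hF1 fun v hv hvF => ?_
    by_cases hvD : v ∈ Dm (Fh y)
    · exact hD v hvD
    · rw [hmemD] at hvD
      push Not at hvD
      obtain ⟨t, ht, hvt⟩ := hvD hv hvF
      have : (t, wordAt y R t) ∈ (T y').image fun t => (t, wordAt y' R t) :=
        hF2 ▸ Finset.mem_image_of_mem _ ht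
      obtain ⟨t', _, ht'⟩ := Finset.mem_image.1 this
      obtain ⟨rfl, hw'⟩ := Prod.ext_iff.1 ht'
      exact (wordAt_eq_iff_box.1 hw' v hvt).symm

/-! ### The mean ergodic theorem -/

lemma norm_sum_shift_sub_le {H : Type*} [NormedAddCommGroup H] (g : Site d → H) {C : ℝ}
    (hC : ∀ v, ‖g v‖ ≤ C) (r : Site d) (n R : ℕ) (hR : ∀ i, r i ≤ R) :
    ‖∑ v ∈ cube d n, g (v + r) - ∑ v ∈ cube d n, g v‖ ≤
      2 * C * ((n : ℝ) ^ d - ((n - R : ℕ) : ℝ) ^ d) := by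
  classical
  have hmap : ∑ v ∈ cube d n, g (v + r) =
      ∑ v ∈ (cube d n).map (addRightEmbedding r), g v := by
    rw [Finset.sum_map]
    rfl
  rw [hmap]
  set s := (cube d n).map (addRightEmbedding r)
  have hs : s.card = n ^ d := by rw [Finset.card_map, card_cube]
  have hinteg : (n - R) ^ d ≤ (s ∩ cube d n).card := by
    rw [← card_box (d := d) (fun _ => R) (n - R)]
    refine Finset.card_le_card fun v hv => ?_
    rw [mem_box] at hv
    refine Finset.mem_inter.2 ⟨Finset.mem_map.2 ⟨v - r, mem_cube.2 fun i => ?_, ?_⟩,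
      mem_cube.2 fun i => ?_⟩
    · have := hv i
      simp only [Pi.sub_apply]
      omega
    · ext i
      have := hv i
      have := hR i
      simp only [addRightEmbedding_apply, Pi.add_apply, Pi.sub_apply]
      omega
    · have := hv i
      omega
  have h1 : (((s \ cube d n).card : ℕ) : ℝ) ≤ (n : ℝ) ^ d - ((n - R : ℕ) : ℝ) ^ d := by
    have := Finset.card_sdiff_add_card_inter s (cube d n)
    have h2 : (s \ cube d n).card + (n - R) ^ d ≤ n ^ d := by omega
    have h3 : (((s \ cube d n).card + (n - R) ^ d : ℕ) : ℝ) ≤ ((n ^ d : ℕ) : ℝ) := by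
      exact_mod_cast h2
    push_cast at h3
    linarith
  have h2 : (((cube d n \ s).card : ℕ) : ℝ) ≤ (n : ℝ) ^ d - ((n - R : ℕ) : ℝ) ^ d := by
    have := Finset.card_sdiff_add_card_inter (cube d n) s
    rw [Finset.inter_comm, card_cube] at this
    have h2 : (cube d n \ s).card + (n - R) ^ d ≤ n ^ d := by omega
    have h3 : (((cube d n \ s).card + (n - R) ^ d : ℕ) : ℝ) ≤ ((n ^ d : ℕ) : ℝ) := by
      exact_mod_cast h2
    push_cast at h3
    linarith
  have hC0 : 0 ≤ C := (norm_nonneg _).trans (hC 0)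
  have hb : ∀ t : Finset (Site d), ‖∑ v ∈ t, g v‖ ≤ t.card * C := fun t =>
    (norm_sum_le_of_le t fun v _ => hC v).trans (by simp)
  rw [← Finset.sum_sdiff_sub_sum_sdiff]
  refine (norm_sub_le _ _).trans ((add_le_add (hb _) (hb _)).trans ?_)
  nlinarith

/-- The mean ergodic theorem for commuting isometries of a Hilbert space. -/
lemma exists_tendsto_cube_average {H : Type*} [NormedAddCommGroup H] [InnerProductSpace ℝ H]
    [CompleteSpace H] (U : Site d → H →ₗᵢ[ℝ] H)
    (hU : ∀ r s f, U r (U s f) = U (r + s) f) (f : H) :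
    ∃ m, (∀ r, U r m = m) ∧
      Tendsto (fun n : ℕ => ((n : ℝ) ^ d)⁻¹ • ∑ v ∈ cube d n, U v f) atTop (𝓝 m) := by
  set K := closure (convexHull ℝ (Set.range fun r => U r f))
  have hKc : Convex ℝ K := (convex_convexHull ℝ _).closure
  have hne : K.Nonempty := ⟨U 0 f, subset_closure (subset_convexHull ℝ _ ⟨0, rfl⟩)⟩
  obtain ⟨m, hmK, hm⟩ := exists_norm_eq_iInf_of_complete_convex hne isClosed_closure.isComplete
    hKc 0
  have hUK : ∀ r, ∀ g ∈ K, U r g ∈ K := by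
    intro r g hg
    have h1 : Set.MapsTo (U r) (convexHull ℝ (Set.range fun r => U r f))
        (convexHull ℝ (Set.range fun r => U r f)) := by
      intro g hg
      have : U r g ∈ (U r).toLinearMap '' convexHull ℝ (Set.range fun r => U r f) := ⟨g, hg, rfl⟩
      rw [LinearMap.image_convexHull] at this
      refine convexHull_mono ?_ this
      rintro _ ⟨_, ⟨s, rfl⟩, rfl⟩
      exact ⟨r + s, (hU r s f).symm⟩
    exact h1.closure (U r).continuous hg
  have hmin := (norm_eq_iInf_iff_real_inner_le_zero hKc hmK).1 hm
  have hinv : ∀ r, U r m = m := by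
    intro r
    have h1 := hmin (U r m) (hUK r m hmK)
    have h2 : ‖U r m‖ = ‖m‖ := (U r).norm_map m
    have h3 := norm_sub_sq_real (U r m) m
    rw [zero_sub, inner_neg_left, inner_sub_right, real_inner_self_eq_norm_sq] at h1
    rw [h2, real_inner_comm] at h3
    have h4 : ‖U r m - m‖ ^ 2 ≤ 0 := by linarith
    have h5 : ‖U r m - m‖ = 0 := by
      have := sq_nonneg ‖U r m - m‖
      exact pow_eq_zero_iff two_ne_zero |>.1 (le_antisymm h4 this)
    exact sub_eq_zero.1 (norm_eq_zero.1 h5)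
  refine ⟨m, hinv, ?_⟩
  set a : ℕ → H → H := fun n g => ((n : ℝ) ^ d)⁻¹ • ∑ v ∈ cube d n, U v g
  have ha_sub : ∀ n g g', a n g - a n g' = a n (g - g') := by
    intro n g g'
    simp only [a, ← smul_sub, ← Finset.sum_sub_distrib, map_sub]
  have ha_norm : ∀ n g, ‖a n g‖ ≤ ‖g‖ := by
    intro n g
    simp only [a, norm_smul]
    have h1 : ‖∑ v ∈ cube d n, U v g‖ ≤ (n : ℝ) ^ d * ‖g‖ := by
      refine (norm_sum_le_of_le (f := fun v => U v g) (n := fun _ => ‖g‖) _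
        fun v _ => ((U v).norm_map g).le).trans ?_
      simp [card_cube]
    rw [norm_inv, Real.norm_of_nonneg (by positivity : (0 : ℝ) ≤ (n : ℝ) ^ d)]
    rcases (by positivity : (0 : ℝ) ≤ (n : ℝ) ^ d).eq_or_lt with h0 | h0
    · rw [← h0]
      simp
    · rw [inv_mul_le_iff₀ h0]
      exact h1
  set D : Set H := {g | Tendsto (fun n => a n g - a n f) atTop (𝓝 0)}
  have hDK : K ⊆ D := by
    refine closure_minimal (convexHull_min ?_ ?_) ?_
    · rintro _ ⟨r, rfl⟩
      refine squeeze_zero_norm' (a := fun n : ℕ => 2 * ‖f‖ *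
        (((n : ℝ) ^ d - ((n - ∑ i, r i : ℕ) : ℝ) ^ d) / (n : ℝ) ^ d)) ?_ ?_
      · filter_upwards with n
        simp only [a, ← smul_sub, norm_smul, hU]
        have h1 := norm_sum_shift_sub_le (fun v => U v f) (C := ‖f‖)
          (fun v => ((U v).norm_map f).le) r n (∑ i, r i)
          fun i => Finset.single_le_sum (f := r) (fun _ _ => Nat.zero_le _) (Finset.mem_univ i)
        rw [norm_inv, Real.norm_of_nonneg (by positivity : (0 : ℝ) ≤ (n : ℝ) ^ d), mul_div_assoc',
          div_eq_inv_mul]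
        gcongr
      · rw [← mul_zero (2 * ‖f‖)]
        refine Tendsto.const_mul _ (tendsto_order.2 ⟨fun b hb => ?_, fun b hb => ?_⟩)
        · filter_upwards with n
          refine hb.trans_le (div_nonneg (sub_nonneg.2 ?_) (by positivity))
          gcongr
          omega
        · filter_upwards [eventually_boundary_le d (∑ i, r i) (half_pos hb),
            eventually_gt_atTop 0] with n hn h0
          have : (0 : ℝ) < (n : ℝ) ^ d := by positivity
          rw [div_lt_iff₀ this]
          nlinarith
    · intro g hg g' hg' s t hs ht hst
      have h1 : ∀ n, a n (s • g + t • g') - a n f = s • (a n g - a n f) + t • (a n g' - a n f) := by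
        intro n
        have h2 : a n (s • g + t • g') = s • a n g + t • a n g' := by
          simp only [a, map_add, map_smul, Finset.sum_add_distrib, ← Finset.smul_sum, smul_add]
          rw [smul_comm s, smul_comm t]
        have h3 : a n f = s • a n f + t • a n f := by rw [← add_smul, hst, one_smul]
        rw [h2, smul_sub, smul_sub]
        nth_rewrite 1 [h3]
        abel
      simp only [D, Set.mem_ofPred_eq, h1]
      simpa using (hg.const_smul s).add (hg'.const_smul t)
    · refine isClosed_of_closure_subset fun g hg => ?_
      refine Metric.tendsto_atTop.2 fun ε hε => ?_
      obtain ⟨g', hg', hgg⟩ := Metric.mem_closure_iff.1 hg (ε / 2) (half_pos hε)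
      obtain ⟨n₀, hn₀⟩ := Metric.tendsto_atTop.1 hg' (ε / 2) (half_pos hε)
      refine ⟨n₀, fun n hn => ?_⟩
      have h1 := hn₀ n hn
      rw [dist_zero_right] at h1 ⊢
      have h2 : a n g - a n f = a n (g - g') + (a n g' - a n f) := by
        rw [← ha_sub]
        abel
      rw [h2]
      have h3 := (norm_add_le (a n (g - g')) (a n g' - a n f))
      have h4 := ha_norm n (g - g')
      rw [dist_eq_norm] at hgg
      linarith
  have hD := hDK hmK
  have hm' : ∀ᶠ n : ℕ in atTop, a n m = m := by
    filter_upwards [eventually_gt_atTop 0] with n hn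
    simp only [a, hinv, Finset.sum_const, card_cube]
    rw [← Nat.cast_smul_eq_nsmul ℝ, smul_smul]
    push_cast
    rw [inv_mul_cancel₀ (by positivity), one_smul]
  have h1 : Tendsto (fun n => a n m - (a n m - a n f)) atTop (𝓝 (m - 0)) :=
    (tendsto_const_nhds.congr' (hm'.mono fun n hn => hn.symm)).sub hD
  simpa using h1

lemma measurable_shift (r : Site d) : Measurable (shift r : Config A d → Config A d) :=
  measurable_pi_lambda _ fun i => measurable_pi_apply (i + r)

lemma shift_shift (r s : Site d) (x : Config A d) : shift r (shift s x) = shift (r + s) x := by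
  funext i
  simp only [shift, add_assoc]

lemma measurePreserving_shift {μ : Measure (Config A d)} (hμ : Stationary μ) (r : Site d) :
    MeasurePreserving (shift r) μ μ := ⟨measurable_shift r, hμ r⟩

/-- Almost everywhere invariant functions of an ergodic process are constant. -/
lemma ae_eq_const_of_ae_invariant {μ : Measure (Config A d)} [IsProbabilityMeasure μ]
    (hμ : ErgodicShift μ) {F : Config A d → ℝ} (hF : Measurable F)
    (hinv : ∀ r, F ∘ shift r =ᵐ[μ] F) : ∃ c, F =ᵐ[μ] Function.const _ c := by
  refine exists_eventuallyEq_const_of_forall_separating MeasurableSet fun V hV => ?_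
  set E : Set (Config A d) := {x | ∃ s : Site d, ∀ r, s ≤ r → F (shift r x) ∈ V}
  have hEm : MeasurableSet E := by
    have : E = ⋃ s : Site d, ⋂ r : Site d, ⋂ _ : s ≤ r, (F ∘ shift r) ⁻¹' V := by
      ext x
      simp [E]
    rw [this]
    exact .iUnion fun s => .iInter fun r => .iInter fun _ => (hF.comp (measurable_shift r)) hV
  have hEinv : ∀ r, shift r ⁻¹' E = E := by
    intro r
    ext x
    simp only [E, Set.mem_preimage, Set.mem_ofPred_eq, shift_shift]
    constructor
    · rintro ⟨s, hs⟩
      refine ⟨s + r, fun t ht => ?_⟩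
      have h1 : t - r + r = t := tsub_add_cancel_of_le (le_trans le_add_self ht)
      rw [← h1]
      exact hs _ (le_tsub_of_add_le_right ht)
    · rintro ⟨s, hs⟩
      exact ⟨s, fun t ht => hs _ (le_trans ht le_self_add)⟩
  have hae : ∀ᵐ x ∂μ, (x ∈ E ↔ F x ∈ V) := by
    filter_upwards [ae_all_iff.2 hinv] with x hx
    simp only [Function.comp_apply] at hx
    simp only [E, Set.mem_ofPred_eq, hx]
    exact ⟨fun ⟨s, hs⟩ => hs s le_rfl, fun h => ⟨0, fun _ _ => h⟩⟩
  rcases hμ.2 E hEm hEinv with h | h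
  · right
    have := measure_eq_zero_iff_ae_notMem.1 h
    filter_upwards [this, hae] with x h1 h2 h3
    exact h1 (h2.2 h3)
  · left
    have := (prob_compl_eq_zero_iff hEm).2 h
    filter_upwards [measure_eq_zero_iff_ae_notMem.1 this, hae] with x h1 h2
    exact h2.1 (not_not.1 h1)

/-- Cube averages of a bounded measurable function converge in probability to the mean. -/
lemma tendsto_measure_average {μ : Measure (Config A d)} [IsProbabilityMeasure μ]
    (hμ : ErgodicShift μ) {f : Config A d → ℝ} (hf : Measurable f) {C : ℝ}
    (hC : ∀ x, |f x| ≤ C) {η : ℝ} (hη : 0 < η) :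
    Tendsto (fun n : ℕ => μ.real {x | η ≤ |((n : ℝ) ^ d)⁻¹ * ∑ v ∈ cube d n, f (shift v x) -
      ∫ y, f y ∂μ|}) atTop (𝓝 0) := by
  have hmp := measurePreserving_shift hμ.1
  have hf2 : MemLp f 2 μ := MemLp.of_bound hf.aestronglyMeasurable C (ae_of_all _ hC)
  set U : Site d → Lp ℝ 2 μ →ₗᵢ[ℝ] Lp ℝ 2 μ := fun r =>
    Lp.compMeasurePreservingₗᵢ ℝ (shift r) (hmp r)
  have hUcoe : ∀ r g, (U r g : Config A d → ℝ) =ᵐ[μ] g ∘ shift r := fun r g =>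
    Lp.coeFn_compMeasurePreserving g (hmp r)
  have hUU : ∀ r s g, U r (U s g) = U (r + s) g := by
    intro r s g
    refine Lp.ext ?_
    have h1 : (U s g : Config A d → ℝ) ∘ shift r =ᵐ[μ] (g ∘ shift s) ∘ shift r :=
      (hmp r).quasiMeasurePreserving.ae_eq_comp (hUcoe s g)
    filter_upwards [hUcoe r (U s g), h1, hUcoe (r + s) g] with x h1 h2 h3
    rw [h1, h2, h3]
    simp only [Function.comp_apply, shift_shift, add_comm r s]
  obtain ⟨m, hm, hlim⟩ := exists_tendsto_cube_average U hUU (hf2.toLp f)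
  have hcoe : ∀ n : ℕ, (((n : ℝ) ^ d)⁻¹ • ∑ v ∈ cube d n, U v (hf2.toLp f) : Lp ℝ 2 μ) =ᵐ[μ]
      fun x => ((n : ℝ) ^ d)⁻¹ * ∑ v ∈ cube d n, f (shift v x) := by
    intro n
    have h1 : ∀ v, (U v (hf2.toLp f) : Config A d → ℝ) =ᵐ[μ] f ∘ shift v := fun v =>
      (hUcoe v _).trans ((hmp v).quasiMeasurePreserving.ae_eq_comp hf2.coeFn_toLp)
    filter_upwards [Lp.coeFn_smul ((n : ℝ) ^ d)⁻¹ (∑ v ∈ cube d n, U v (hf2.toLp f)),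
      Lp.coeFn_finsetSum (cube d n) (fun v => U v (hf2.toLp f)), ae_all_iff.2 h1] with x h2 h3 h4
    rw [h2, Pi.smul_apply, h3, smul_eq_mul]
    simp [h4]
  obtain ⟨F, hF, hmF⟩ := (Lp.aestronglyMeasurable m).aemeasurable
  obtain ⟨c, hc⟩ := ae_eq_const_of_ae_invariant hμ hF fun r => by
    have h1 : (m : Config A d → ℝ) ∘ shift r =ᵐ[μ] F ∘ shift r :=
      (hmp r).quasiMeasurePreserving.ae_eq_comp hmF
    have h2 := hUcoe r m
    rw [hm r] at h2
    exact h1.symm.trans (h2.symm.trans hmF)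
  have hmc : (m : Config A d → ℝ) =ᵐ[μ] Function.const _ c := hmF.trans hc
  have hinteg : ∀ r, ∫ x, f (shift r x) ∂μ = ∫ x, f x ∂μ := fun r => by
    have := (integral_map (μ := μ) (measurable_shift r).aemeasurable
      (f := f) hf.aestronglyMeasurable)
    rw [← this, hμ.1 r]
  have hfi : Integrable f μ := hf2.integrable (by norm_num)
  have hmean : ∀ n : ℕ, 0 < n → ∫ x, ((n : ℝ) ^ d)⁻¹ * ∑ v ∈ cube d n, f (shift v x) ∂μ =
      ∫ x, f x ∂μ := by
    intro n hn
    have hi : ∀ v ∈ cube d n, Integrable (fun x => f (shift v x)) μ := fun v _ =>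
      (hmp v).integrable_comp_of_integrable hfi
    rw [integral_const_mul, integral_finsetSum _ hi]
    simp only [hinteg, Finset.sum_const, card_cube, nsmul_eq_mul]
    push_cast
    rw [inv_mul_cancel_left₀ (by positivity)]
  have hceq : ∫ x, f x ∂μ = c := by
    have h1 : Tendsto (fun n : ℕ => ∫ x, (((n : ℝ) ^ d)⁻¹ • ∑ v ∈ cube d n, U v (hf2.toLp f) :
        Lp ℝ 2 μ) x ∂μ) atTop (𝓝 (∫ x, m x ∂μ)) := by
      have h2 := (tendsto_const_nhds (x := indicatorConstLp 2 MeasurableSet.univ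
        (measure_ne_top μ Set.univ) (1 : ℝ))).inner (𝕜 := ℝ) hlim
      have h3 : ∀ g : Lp ℝ 2 μ, inner ℝ (indicatorConstLp 2 MeasurableSet.univ
        (measure_ne_top μ Set.univ) (1 : ℝ)) g = ∫ x, g x ∂μ := fun g => by
        rw [L2.inner_indicatorConstLp_one, setIntegral_univ]
      simpa only [h3] using h2
    have h2 : ∫ x, m x ∂μ = c := by
      rw [integral_congr_ae hmc]
      simp
    rw [h2] at h1
    refine tendsto_nhds_unique (tendsto_const_nhds.congr' ?_) h1
    filter_upwards [eventually_gt_atTop 0] with n hn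
    rw [integral_congr_ae (hcoe n), hmean n hn]
  have hmeas := tendstoInMeasure_of_tendsto_Lp hlim
  rw [tendstoInMeasure_iff_measureReal_dist] at hmeas
  refine (hmeas η hη).congr fun n => ?_
  refine measureReal_congr ?_
  filter_upwards [hcoe n, hmc] with x h1 h2
  refine propext (show η ≤ _ ↔ η ≤ _ from ?_)
  rw [h1, h2, hceq, Real.dist_eq]
  rfl

/-! ### Entropy-typical words -/

lemma measurable_wordAt (k : ℕ) (c : Site d) :
    Measurable (fun x : Config A d => wordAt x k c) :=
  measurable_pi_lambda _ fun _ => measurable_pi_apply _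

lemma measurableSet_wordAt {k : ℕ} (c : Site d) (P : Word A d k → Prop) :
    MeasurableSet {x : Config A d | P (wordAt x k c)} :=
  measurable_wordAt k c (Set.toFinite {w | P w}).measurableSet

lemma measurable_comp_wordAt {k : ℕ} (c : Site d) (g : Word A d k → ℝ) :
    Measurable (fun x : Config A d => g (wordAt x k c)) :=
  (measurable_of_finite g).comp (measurable_wordAt k c)

lemma wordDist_nonneg (μ : Measure (Config A d)) (k : ℕ) (w : Word A d k) :
    0 ≤ wordDist μ k w := ENNReal.toReal_nonneg

lemma integral_comp_wordAt (μ : Measure (Config A d)) [IsProbabilityMeasure μ] {k : ℕ}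
    (g : Word A d k → ℝ) :
    ∫ x, g (wordAt x k 0) ∂μ = ∑ w, wordDist μ k w * g w := by
  have hm := measurable_wordAt (A := A) k (0 : Site d)
  have : IsProbabilityMeasure (μ.map fun x => wordAt x k 0) :=
    Measure.isProbabilityMeasure_map hm.aemeasurable
  rw [← integral_map (φ := fun x => wordAt x k 0) hm.aemeasurable
    (measurable_of_finite g).aestronglyMeasurable, integral_fintype .of_finite]
  refine Finset.sum_congr rfl fun w _ => ?_
  rw [measureReal_def, Measure.map_apply hm (measurableSet_singleton w), smul_eq_mul]
  rfl

lemma sum_wordDist (μ : Measure (Config A d)) [IsProbabilityMeasure μ] (k : ℕ) :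
    ∑ w, wordDist μ k w = 1 := by
  have := integral_comp_wordAt μ (k := k) fun _ => 1
  simpa using this.symm

lemma wordDist_le_one (μ : Measure (Config A d)) [IsProbabilityMeasure μ] (k : ℕ)
    (w : Word A d k) : wordDist μ k w ≤ 1 := measureReal_le_one (μ := μ)

lemma ae_wordDist_pos {μ : Measure (Config A d)} [IsProbabilityMeasure μ] (hμ : Stationary μ)
    (k : ℕ) : ∀ᵐ x ∂μ, ∀ v : Site d, 0 < wordDist μ k (wordAt x k v) := by
  refine ae_all_iff.2 fun v => ?_
  have h0 : ∀ᵐ x ∂μ, 0 < wordDist μ k (wordAt x k 0) := by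
    have : ∀ᵐ x ∂μ, ∀ w : Word A d k, wordDist μ k w = 0 → wordAt x k 0 ≠ w := by
      refine ae_all_iff.2 fun w => ?_
      by_cases hw : wordDist μ k w = 0
      · have h1 : μ {x | wordAt x k 0 = w} = 0 :=
          (ENNReal.toReal_eq_zero_iff _).1 hw |>.resolve_right (measure_ne_top _ _)
        filter_upwards [measure_eq_zero_iff_ae_notMem.1 h1] with x hx _
        exact hx
      · exact ae_of_all _ fun _ h => absurd h hw
    filter_upwards [this] with x hx
    exact (wordDist_nonneg μ k _).lt_of_ne fun h => hx _ h.symm rfl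
  have h1 := (measurePreserving_shift hμ v).quasiMeasurePreserving.ae h0
  filter_upwards [h1] with x hx
  rwa [wordAt_shift, zero_add] at hx

/-- Words whose `K`-subwords carry little total information with respect to `p` are few. -/
lemma ncard_low_information_le (hA : 2 ≤ A) {K M N : ℕ} (hK : 1 ≤ K) (hN : M + K = N + 1)
    (p : Word A d K → ℝ) (hp0 : ∀ w, 0 ≤ p w) (hp1 : ∑ w, p w = 1) {B : ℝ}
    (Y : Set (Config A d)) (hY : ∀ y ∈ Y, ∀ v ∈ cube d M, 0 < p (wordAt y K v))
    (hB : ∀ y ∈ Y, ∑ v ∈ cube d M, -Real.logb A (p (wordAt y K v)) ≤ B) :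
    (Set.ncard ((fun y => wordAt y N 0) '' Y) : ℝ) ≤
      (A : ℝ) ^ (((N : ℝ) ^ d - ((N - 2 * K : ℕ) : ℝ) ^ d) +
        ((N : ℝ) ^ d * (Real.logb A ((K : ℝ) ^ d) / (K : ℝ) ^ d) + B / (K : ℝ) ^ d) +
        (M : ℝ) ^ d / ((K : ℝ) ^ d * Real.log A)) := by
  classical
  have hA1 : (1 : ℝ) < A := by exact_mod_cast (by omega : 1 < A)
  have hA0 : (0 : ℝ) < A := by linarith
  have hlog : 0 < Real.log A := Real.log_pos hA1
  have hKd : (0 : ℝ) < (K : ℝ) ^ d := by positivity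
  have hph : ∀ y : Config A d, ∃ τ : Site d, (∀ i, τ i < K) ∧ (K : ℝ) ^ d *
      ∑ t ∈ cube d M with ∀ i, t i % K = τ i, -Real.logb A (p (wordAt y K t)) ≤
      ∑ v ∈ cube d M, -Real.logb A (p (wordAt y K v)) := fun y => exists_phase hK _ _
  choose τ hτ hτb using hph
  set T : Config A d → Finset (Site d) := fun y => (cube d M).filter fun t =>
    ∀ i, t i % K = τ y i with hT
  have key := ncard_words_le hA N Y (fun y => (T y).image fun t => (t, wordAt y K t))
    (fun m => cube d N \ m.biUnion fun t => box t.1 K) (cube d M ×ˢ (Finset.univ : Finset _))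
    (fun t => ((K : ℝ) ^ d)⁻¹ * p t.2) (fun t _ => mul_nonneg (by positivity) (hp0 _))
    ((N : ℝ) ^ d - ((N - 2 * K : ℕ) : ℝ) ^ d)
    ((N : ℝ) ^ d * (Real.logb A ((K : ℝ) ^ d) / (K : ℝ) ^ d) + B / (K : ℝ) ^ d) ?_ ?_ ?_ ?_
  · refine key.trans (le_of_eq ?_)
    rw [Real.rpow_add hA0 (_ + _), Real.rpow_add hA0 (_ - _), Finset.sum_product,
      Real.rpow_def_of_pos hA0 ((M : ℝ) ^ d / _)]
    congr 2
    simp only [← Finset.mul_sum, hp1, Finset.sum_const, card_cube, nsmul_eq_mul]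
    push_cast
    field_simp
  · intro y _ t ht
    obtain ⟨t', ht', rfl⟩ := Finset.mem_image.1 ht
    exact Finset.mem_product.2 ⟨(Finset.mem_filter.1 ht').1, Finset.mem_univ _⟩
  · intro y _
    have h1 := card_uncovered (hτ y) (∅ : Finset (Site d)) (fun b => b) (fun _ => 0)
      (fun _ => True) (cube d N \ ((T y).image fun t => (t, wordAt y K t)).biUnion
        fun t => box t.1 K) Finset.sdiff_subset (by simp)
      (fun t ht hτt _ hsub _ => by
        refine Finset.disjoint_left.2 fun v hv hvt => (Finset.mem_sdiff.1 hv).2 ?_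
        refine Finset.mem_biUnion.2 ⟨(t, wordAt y K t), Finset.mem_image_of_mem _
          (Finset.mem_filter.2 ⟨mem_cube.2 fun i => ?_, hτt⟩), hvt⟩
        have h2 : (fun i => t i + (K - 1)) ∈ cube d N := hsub (mem_box.2 fun i => by omega)
        have := mem_cube.1 h2 i
        omega)
    simpa using h1
  · intro y hy
    have hpos : ∀ t ∈ T y, 0 < p (wordAt y K t) := fun t ht =>
      hY y hy t (Finset.mem_filter.1 ht).1
    rw [Finset.prod_image fun t _ t' _ h => (Prod.ext_iff.1 h).1]
    have h1 : ∏ t ∈ T y, ((K : ℝ) ^ d)⁻¹ * p (wordAt y K t) =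
        (A : ℝ) ^ (-∑ t ∈ T y, (Real.logb A ((K : ℝ) ^ d) - Real.logb A (p (wordAt y K t)))) := by
      rw [← Finset.sum_neg_distrib, Real.rpow_sum_of_pos hA0]
      refine Finset.prod_congr rfl fun t ht => ?_
      rw [← Real.logb_div hKd.ne' (hpos t ht).ne', ← Real.logb_inv, inv_div, Real.rpow_logb hA0
        hA1.ne' (div_pos (hpos t ht) hKd), div_eq_inv_mul]
    rw [h1]
    refine Real.rpow_le_rpow_of_exponent_le hA1.le (neg_le_neg ?_)
    simp only [sub_eq_add_neg, Finset.sum_add_distrib]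
    refine add_le_add ?_ ?_
    · rw [Finset.sum_const, nsmul_eq_mul]
      have hl : 0 ≤ Real.logb A ((K : ℝ) ^ d) := Real.logb_nonneg hA1 (by
        exact_mod_cast Nat.one_le_pow _ _ hK)
      have hc : ((T y).card : ℝ) * (K : ℝ) ^ d ≤ (N : ℝ) ^ d := by
        have := sum_side_pow_le (T y) (fun t => t) (fun _ => K) (fun t ht t' ht' hne =>
          Finset.disjoint_left.2 fun v hv hv' => hne
            (tile_unique (Finset.mem_filter.1 ht).2 (Finset.mem_filter.1 ht').2 hv hv'))
          (cube d N) fun t ht v hv => mem_cube.2 fun i => by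
            have h2 := mem_cube.1 (Finset.mem_filter.1 ht).1 i
            have h3 := mem_box.1 hv i
            omega
        rw [card_cube] at this
        simpa using this
      rw [mul_div_assoc', le_div_iff₀ hKd]
      calc _ = ((T y).card * (K : ℝ) ^ d) * Real.logb A ((K : ℝ) ^ d) := by ring
        _ ≤ _ := by gcongr
    · rw [le_div_iff₀ hKd, mul_comm]
      exact (hτb y).trans (hB y hy)
  · intro y hy y' hy' hFF hD v hv
    by_cases hvD : v ∈ ((T y).image fun t => (t, wordAt y K t)).biUnion fun t => box t.1 K
    · obtain ⟨s, hs, hvs⟩ := Finset.mem_biUnion.1 hvD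
      have hs' := hs
      rw [hFF] at hs'
      obtain ⟨t, _, rfl⟩ := Finset.mem_image.1 hs
      obtain ⟨t', _, h⟩ := Finset.mem_image.1 hs'
      obtain ⟨rfl, hw⟩ := Prod.ext_iff.1 h
      exact (wordAt_eq_iff_box.1 hw v hvs).symm
    · exact hD v (Finset.mem_sdiff.2 ⟨hv, hvD⟩)

lemma eventually_log_div_le (hA : 2 ≤ A) (hd : 1 ≤ d) {θ : ℝ} (hθ : 0 < θ) :
    ∀ᶠ K : ℕ in atTop, Real.logb A ((K : ℝ) ^ d) / (K : ℝ) ^ d + 1 / ((K : ℝ) ^ d * Real.log A) ≤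
      θ := by
  have hA1 : (1 : ℝ) < A := by exact_mod_cast (by omega : 1 < A)
  have h1 : Tendsto (fun x : ℝ => (Real.log x / x + 1 / x) / Real.log A) atTop
      (𝓝 ((0 + 0) / Real.log A)) :=
    ((Real.isLittleO_log_id_atTop.tendsto_div_nhds_zero).add
      (tendsto_const_nhds.div_atTop tendsto_id)).div_const _
  have h2 : Tendsto (fun K : ℕ => (K : ℝ) ^ d) atTop atTop :=
    (tendsto_pow_atTop (by omega)).comp tendsto_natCast_atTop_atTop
  filter_upwards [(h1.comp h2).eventually (gt_mem_nhds (by simpa using hθ))] with K hK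
  refine le_trans (le_of_eq ?_) hK.le
  simp only [Function.comp_apply, Real.logb]
  have := (Real.log_pos hA1).ne'
  field_simp

lemma exists_typical_words (hA : 2 ≤ A) (hd : 1 ≤ d) {μ : Measure (Config A d)}
    [IsProbabilityMeasure μ] (hμ : ErgodicShift μ) {h : ℝ} (hrate : HasEntropyRate μ h)
    {ε : ℝ} (hε : 0 < ε) (R₀ : ℕ) : ∃ R ≥ R₀, ∃ S : Finset (Word A d R),
      (S.card : ℝ) ≤ (A : ℝ) ^ ((h + ε) * (R : ℝ) ^ d) ∧
      μ.real {x | wordAt x R 0 ∉ S} ≤ ε := by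
  classical
  have hA1 : (1 : ℝ) < A := by exact_mod_cast (by omega : 1 < A)
  have hA0 : (0 : ℝ) < A := by linarith
  have hlog : 0 < Real.log A := Real.log_pos hA1
  obtain ⟨K, hK1, hKH, hKl⟩ := ((eventually_ge_atTop 1).and
    ((hrate.eventually (gt_mem_nhds (by linarith : h < h + ε / 8))).and
      (eventually_log_div_le hA hd (by positivity : 0 < ε / 4)))).exists
  have hKd : (0 : ℝ) < (K : ℝ) ^ d := by positivity
  rw [div_lt_iff₀ hKd] at hKH
  set c : Word A d K → ℝ := fun w => -Real.logb A (wordDist μ K w)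
  have hinteg : ∫ x, c (wordAt x K 0) ∂μ = entH A (wordDist μ K) := by
    rw [integral_comp_wordAt, entH, ← Finset.sum_neg_distrib]
    simp [c]
  have hbd : ∀ x : Config A d, |c (wordAt x K 0)| ≤ ∑ w, |c w| := fun x =>
    Finset.single_le_sum (f := fun w => |c w|) (fun _ _ => abs_nonneg _) (Finset.mem_univ _)
  have hmet := tendsto_measure_average hμ (measurable_comp_wordAt 0 c) hbd
    (by positivity : 0 < (K : ℝ) ^ d * (ε / 8))
  obtain ⟨M, hMμ, hM1, hM2, hM3⟩ := ((hmet.eventually (gt_mem_nhds hε)).and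
    ((eventually_ge_atTop (R₀ + 1)).and (((tendsto_add_atTop_nat (K - 1)).eventually
      (eventually_boundary_le d (2 * K) (by positivity : 0 < ε / 8))).and
      (eventually_ge_atTop 1)))).exists
  set N := M + (K - 1) with hN
  have hN1 : M + K = N + 1 := by omega
  have hMN : (M : ℝ) ^ d ≤ (N : ℝ) ^ d := by
    gcongr
    omega
  have hMd : (0 : ℝ) < (M : ℝ) ^ d := by positivity
  set Y : Set (Config A d) := {x | (∀ v : Site d, 0 < wordDist μ K (wordAt x K v)) ∧
    ∑ v ∈ cube d M, c (wordAt x K v) ≤ (M : ℝ) ^ d * ((K : ℝ) ^ d * (h + ε / 4))}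
  have hcount := ncard_low_information_le hA hK1 hN1 (wordDist μ K) (wordDist_nonneg μ K)
    (sum_wordDist μ K) Y (fun y hy v _ => hy.1 v) (fun y hy => hy.2)
  refine ⟨N, by omega, (Set.toFinite ((fun y => wordAt y N 0) '' Y)).toFinset, ?_, ?_⟩
  · rw [← Set.ncard_eq_toFinset_card]
    refine hcount.trans (Real.rpow_le_rpow_of_exponent_le hA1.le ?_)
    have h1 : (M : ℝ) ^ d * ((K : ℝ) ^ d * (h + ε / 4)) / (K : ℝ) ^ d =
        (M : ℝ) ^ d * (h + ε / 4) := by field_simp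
    have hh : 0 ≤ h + ε / 4 := by
      have : 0 ≤ entH A (wordDist μ K) := by
        rw [entH, neg_nonneg]
        refine Finset.sum_nonpos fun w _ => mul_nonpos_of_nonneg_of_nonpos
          (wordDist_nonneg μ K w) (Real.logb_nonpos hA1 (wordDist_nonneg μ K w)
            (wordDist_le_one μ K w))
      have : 0 < (h + ε / 8) := by
        by_contra hneg
        have := mul_nonpos_of_nonpos_of_nonneg (not_lt.1 hneg) hKd.le
        linarith
      linarith
    rw [h1]
    have h2 : (M : ℝ) ^ d / ((K : ℝ) ^ d * Real.log A) ≤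
        (N : ℝ) ^ d * (1 / ((K : ℝ) ^ d * Real.log A)) := by
      rw [mul_one_div]
      gcongr
    have h3 : (M : ℝ) ^ d * (h + ε / 4) ≤ (N : ℝ) ^ d * (h + ε / 4) := by gcongr
    have h4 : (N : ℝ) ^ d * (Real.logb A ((K : ℝ) ^ d) / (K : ℝ) ^ d +
        1 / ((K : ℝ) ^ d * Real.log A)) ≤ (N : ℝ) ^ d * (ε / 4) := by gcongr
    have h5 : (0 : ℝ) ≤ (N : ℝ) ^ d := by positivity
    have h6 : 0 ≤ (N : ℝ) ^ d * ε := by positivity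
    linarith
  · refine le_trans ?_ hMμ.le
    refine ENNReal.toReal_mono (measure_ne_top _ _) (measure_mono_ae ?_)
    filter_upwards [ae_wordDist_pos hμ.1 K] with x hx hxS
    by_contra hcon
    refine hxS ((Set.Finite.mem_toFinset _).2 ⟨x, ⟨hx, ?_⟩, rfl⟩)
    have h1 : |((M : ℝ) ^ d)⁻¹ * ∑ v ∈ cube d M, c (wordAt (shift v x) K 0) -
      ∫ y, c (wordAt y K 0) ∂μ| < (K : ℝ) ^ d * (ε / 8) := not_le.1 hcon
    have h2 := (abs_lt.1 h1).2
    simp only [wordAt_shift, zero_add, hinteg] at h2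
    have h3 : ((M : ℝ) ^ d)⁻¹ * ∑ v ∈ cube d M, c (wordAt x K v) ≤ (K : ℝ) ^ d * (h + ε / 4) := by
      linarith
    rwa [inv_mul_le_iff₀ hMd] at h3

/-! ### The maximal inequality -/

open scoped Classical in
lemma card_filter_shift_eq_sum (Z : Set (Config A d)) (s : Finset (Site d)) (x : Config A d) :
    ((s.filter fun v => shift v x ∈ Z).card : ℝ) =
      ∑ v ∈ s, Z.indicator (fun _ => (1 : ℝ)) (shift v x) := by
  simp [Set.indicator_apply]

open scoped Classical in
lemma integrable_card_filter_shift {μ : Measure (Config A d)} [IsProbabilityMeasure μ]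
    (hμ : Stationary μ) {Z : Set (Config A d)} (hZ : MeasurableSet Z) (s : Finset (Site d)) :
    Integrable (fun x => ((s.filter fun v => shift v x ∈ Z).card : ℝ)) μ := by
  simp only [card_filter_shift_eq_sum]
  exact integrable_finsetSum _ fun v _ =>
    (measurePreserving_shift hμ v).integrable_comp_of_integrable
    ((integrable_const (1 : ℝ)).indicator hZ)

open scoped Classical in
lemma integral_card_filter_shift {μ : Measure (Config A d)} [IsProbabilityMeasure μ]
    (hμ : Stationary μ) {Z : Set (Config A d)} (hZ : MeasurableSet Z) (s : Finset (Site d)) :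
    ∫ x, ((s.filter fun v => shift v x ∈ Z).card : ℝ) ∂μ = s.card * μ.real Z := by
  simp only [card_filter_shift_eq_sum]
  have hi : ∀ v ∈ s, Integrable (fun x => Z.indicator (fun _ => (1 : ℝ)) (shift v x)) μ :=
    fun v _ => (measurePreserving_shift hμ v).integrable_comp_of_integrable
      ((integrable_const (1 : ℝ)).indicator hZ)
  rw [integral_finsetSum _ hi]
  have h1 : ∀ v : Site d, ∫ x, Z.indicator (fun _ => (1 : ℝ)) (shift v x) ∂μ = μ.real Z := by
    intro v
    have h2 := integral_map (μ := μ) (measurable_shift v).aemeasurable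
      (f := Z.indicator fun _ => (1 : ℝ))
      (Measurable.indicator measurable_const hZ).aestronglyMeasurable
    rw [← h2, hμ v, integral_indicator_const _ hZ]
    simp
  simp [h1]

open scoped Classical in
lemma measure_bounded_maximal_le {μ : Measure (Config A d)} [IsProbabilityMeasure μ]
    (hμ : Stationary μ) {Z : Set (Config A d)} (hZ : MeasurableSet Z) {lam : ℝ} (hlam : 0 < lam)
    (n₀ : ℕ) :
    μ.real {x | ∃ n : ℕ, 1 ≤ n ∧ n ≤ n₀ ∧
      lam * (n : ℝ) ^ d < ((cube d n).filter fun v => shift v x ∈ Z).card} ≤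
      3 ^ d * μ.real Z / lam := by
  set E : Set (Config A d) := {x | ∃ n : ℕ, 1 ≤ n ∧ n ≤ n₀ ∧
      lam * (n : ℝ) ^ d < ((cube d n).filter fun v => shift v x ∈ Z).card}
  have hE : MeasurableSet E := by
    have : E = ⋃ n : ℕ, ⋃ _ : 1 ≤ n, ⋃ _ : n ≤ n₀, {x | lam * (n : ℝ) ^ d <
        ∑ v ∈ cube d n, Z.indicator (fun _ => (1 : ℝ)) (shift v x)} := by
      ext x
      simp only [E, Set.mem_ofPred_eq, card_filter_shift_eq_sum, Set.mem_iUnion, exists_prop]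
    rw [this]
    refine .iUnion fun n => .iUnion fun _ => .iUnion fun _ => measurableSet_lt measurable_const ?_
    exact Finset.measurable_sum _ fun v _ =>
      (Measurable.indicator measurable_const hZ).comp (measurable_shift v)
  have hpt : ∀ (N : ℕ) (x : Config A d), (((cube d N).filter fun v => shift v x ∈ E).card : ℝ) ≤
      3 ^ d / lam * ((cube d (N + n₀)).filter fun v => shift v x ∈ Z).card := by
    intro N x
    have hch : ∀ v : Site d, ∃ n, 1 ≤ n ∧ n ≤ n₀ + 1 ∧ (shift v x ∈ E → n ≤ n₀ ∧
        lam * (n : ℝ) ^ d < ((cube d n).filter fun u => shift u (shift v x) ∈ Z).card) := by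
      intro v
      by_cases hv : shift v x ∈ E
      · obtain ⟨n, h1, h2, h3⟩ := hv
        exact ⟨n, h1, by omega, fun _ => ⟨h2, h3⟩⟩
      · exact ⟨1, le_rfl, by omega, fun h => absurd h hv⟩
    choose n hn1 _ hn using hch
    obtain ⟨U, hUV, hdis, hcard⟩ := exists_disjoint_boxes
      ((cube d N).filter fun v => shift v x ∈ E) n fun v _ => hn1 v
    set B := (cube d (N + n₀)).filter fun v => shift v x ∈ Z
    have h1 : ∑ u ∈ U, lam * (n u : ℝ) ^ d ≤ (B.card : ℝ) := by
      calc _ ≤ ∑ u ∈ U, (((box u (n u)).filter fun v => shift v x ∈ Z).card : ℝ) := by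
            refine Finset.sum_le_sum fun u hu => ?_
            have hu' := Finset.mem_filter.1 (hUV hu)
            refine (hn u hu'.2).2.le.trans (le_of_eq ?_)
            rw [box_eq_map, Finset.filter_map, Finset.card_map]
            congr 2
            ext v
            simp [shift_shift, add_comm]
        _ = ((U.biUnion fun u => (box u (n u)).filter fun v => shift v x ∈ Z).card : ℝ) := by
            rw [Finset.card_biUnion fun u hu u' hu' hne =>
              Finset.disjoint_filter_filter (hdis hu hu' hne)]
            push_cast
            rfl
        _ ≤ _ := by
            refine Nat.cast_le.2 (Finset.card_le_card (Finset.biUnion_subset.2 fun u hu v hv => ?_))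
            have hv' := Finset.mem_filter.1 hv
            have hu' := Finset.mem_filter.1 (hUV hu)
            refine Finset.mem_filter.2 ⟨mem_cube.2 fun i => ?_, hv'.2⟩
            have h2 := mem_box.1 hv'.1 i
            have h3 := mem_cube.1 hu'.1 i
            have h4 := (hn u hu'.2).1
            omega
    rw [← Finset.mul_sum] at h1
    have h2 : (((cube d N).filter fun v => shift v x ∈ E).card : ℝ) ≤
        3 ^ d * ∑ u ∈ U, (n u : ℝ) ^ d := by exact_mod_cast hcard
    rw [div_mul_eq_mul_div, le_div_iff₀ hlam]
    have : (0 : ℝ) < 3 ^ d := by positivity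
    nlinarith
  have hN : ∀ N : ℕ, (N : ℝ) ^ d * μ.real E ≤
      3 ^ d / lam * (((N + n₀ : ℕ) : ℝ) ^ d * μ.real Z) := by
    intro N
    have h1 := integral_mono (integrable_card_filter_shift hμ hE (cube d N))
      ((integrable_card_filter_shift hμ hZ (cube d (N + n₀))).const_mul (3 ^ d / lam)) (hpt N)
    rw [integral_const_mul, integral_card_filter_shift hμ hE, integral_card_filter_shift hμ hZ,
      card_cube, card_cube] at h1
    exact_mod_cast h1
  refine le_of_forall_pos_le_add fun θ hθ => ?_
  have hC : 0 ≤ 3 ^ d * μ.real Z / lam := by positivity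
  obtain ⟨N, h1, h2⟩ := ((eventually_enlarge_le d n₀
    (by positivity : 0 < θ / (3 ^ d * μ.real Z / lam + 1))).and (eventually_gt_atTop 0)).exists
  have hNd : (0 : ℝ) < (N : ℝ) ^ d := by positivity
  have h3 : ((N + n₀ : ℕ) : ℝ) ^ d ≤
      (N : ℝ) ^ d * (1 + θ / (3 ^ d * μ.real Z / lam + 1)) := by linarith
  have h4 : (N : ℝ) ^ d * μ.real E ≤ (N : ℝ) ^ d * (3 ^ d * μ.real Z / lam + θ) := by
    refine (hN N).trans ?_
    calc _ = 3 ^ d * μ.real Z / lam * ((N + n₀ : ℕ) : ℝ) ^ d := by ring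
      _ ≤ 3 ^ d * μ.real Z / lam * ((N : ℝ) ^ d * (1 + θ / (3 ^ d * μ.real Z / lam + 1))) := by
          gcongr
      _ = (N : ℝ) ^ d * (3 ^ d * μ.real Z / lam +
          θ * ((3 ^ d * μ.real Z / lam) / (3 ^ d * μ.real Z / lam + 1))) := by ring
      _ ≤ _ := by
          gcongr
          refine mul_le_of_le_one_right hθ.le ((div_le_one (by positivity)).2 (by linarith))
  exact le_of_mul_le_mul_left h4 hNd

open scoped Classical in
/-- The weak-type maximal inequality for cube averages of an indicator function. -/
lemma measure_maximal_le {μ : Measure (Config A d)} [IsProbabilityMeasure μ]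
    (hμ : Stationary μ) {Z : Set (Config A d)} (hZ : MeasurableSet Z) {lam : ℝ} (hlam : 0 < lam) :
    μ.real {x | ∃ n : ℕ, 1 ≤ n ∧
      lam * (n : ℝ) ^ d < ((cube d n).filter fun v => shift v x ∈ Z).card} ≤
      3 ^ d * μ.real Z / lam := by
  set E : ℕ → Set (Config A d) := fun n₀ => {x | ∃ n : ℕ, 1 ≤ n ∧ n ≤ n₀ ∧
      lam * (n : ℝ) ^ d < ((cube d n).filter fun v => shift v x ∈ Z).card}
  have hmono : Monotone E := fun a b hab x ⟨n, h1, h2, h3⟩ => ⟨n, h1, h2.trans hab, h3⟩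
  have hU : {x | ∃ n : ℕ, 1 ≤ n ∧
      lam * (n : ℝ) ^ d < ((cube d n).filter fun v => shift v x ∈ Z).card} = ⋃ n, E n := by
    ext x
    simp only [E, Set.mem_ofPred_eq, Set.mem_iUnion]
    exact ⟨fun ⟨n, h1, h2⟩ => ⟨n, n, h1, le_rfl, h2⟩, fun ⟨_, n, h1, _, h2⟩ => ⟨n, h1, h2⟩⟩
  rw [hU]
  have ht := tendsto_measure_iUnion_atTop (μ := μ) hmono
  have ht' := (ENNReal.tendsto_toReal (measure_ne_top μ (⋃ n, E n))).comp ht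
  exact le_of_tendsto' ht' fun n => measure_bounded_maximal_le hμ hZ hlam n

open scoped Classical in
/-- Almost every configuration has, uniformly in all cubes, few subwords outside a set of words of
nearly minimal cardinality. -/
lemma ae_exists_typical_words (hA : 2 ≤ A) (hd : 1 ≤ d) {μ : Measure (Config A d)}
    [IsProbabilityMeasure μ] (hμ : ErgodicShift μ) {h : ℝ} (hrate : HasEntropyRate μ h)
    {ε : ℝ} (hε : 0 < ε) {lam : ℝ} (hlam : 0 < lam) (R₀ : ℕ) :
    ∀ᵐ x ∂μ, ∃ R ≥ R₀, ∃ S : Finset (Word A d R),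
      (S.card : ℝ) ≤ (A : ℝ) ^ ((h + ε) * (R : ℝ) ^ d) ∧
      ∀ n : ℕ, (((cube d n).filter fun v => wordAt x R v ∉ S).card : ℝ) ≤ lam * (n : ℝ) ^ d := by
  have hA1 : (1 : ℝ) < A := by exact_mod_cast (by omega : 1 < A)
  set Bad : Set (Config A d) := {x | ¬ ∃ R ≥ R₀, ∃ S : Finset (Word A d R),
      (S.card : ℝ) ≤ (A : ℝ) ^ ((h + ε) * (R : ℝ) ^ d) ∧
      ∀ n : ℕ, (((cube d n).filter fun v => wordAt x R v ∉ S).card : ℝ) ≤ lam * (n : ℝ) ^ d}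
  have hle : ∀ θ > 0, μ.real Bad ≤ θ := by
    intro θ hθ
    have hmin : 0 < min ε (θ * lam / 3 ^ d) := by positivity
    obtain ⟨R, hR, S, hS, hμS⟩ := exists_typical_words hA hd hμ hrate
      hmin R₀
    obtain ⟨Z, hZdef⟩ : ∃ Z : Set (Config A d), Z = {x | wordAt x R 0 ∉ S} := ⟨_, rfl⟩
    have hZmem : ∀ v x, shift v x ∈ Z ↔ wordAt x R v ∉ S := fun v x => by
      rw [hZdef, Set.mem_ofPred_eq, wordAt_shift, zero_add]
    have hZ : MeasurableSet Z := hZdef ▸ measurableSet_wordAt 0 fun w => w ∉ S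
    have h1 := measure_maximal_le hμ.1 hZ hlam
    have hsub : Bad ⊆ {x | ∃ n : ℕ, 1 ≤ n ∧ lam * (n : ℝ) ^ d <
        ((cube d n).filter fun v => shift v x ∈ Z).card} := by
      intro x hx
      by_contra hcon
      refine hx ⟨R, hR, S, hS.trans (Real.rpow_le_rpow_of_exponent_le hA1.le ?_), fun n => ?_⟩
      · gcongr
        exact min_le_left _ _
      · rcases Nat.eq_zero_or_pos n with rfl | hn
        · have : cube d 0 = ∅ := by
            rw [← Finset.card_eq_zero, card_cube, zero_pow (by omega)]
          simp only [this, Finset.filter_empty, Finset.card_empty, Nat.cast_zero]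
          positivity
        · simp only [Set.mem_ofPred_eq, not_exists, not_and, not_lt, hZmem] at hcon
          exact hcon n hn
    refine (measureReal_mono hsub).trans (h1.trans ?_)
    rw [div_le_iff₀ hlam]
    rw [← hZdef] at hμS
    have h2 := hμS.trans (min_le_right _ _)
    rw [le_div_iff₀ (by positivity)] at h2
    linarith
  have h0 : μ.real Bad = 0 := le_antisymm (le_of_forall_pos_le_add fun θ hθ => by
    simpa using hle θ hθ) measureReal_nonneg
  rw [measureReal_eq_zero_iff] at h0
  filter_upwards [measure_eq_zero_iff_ae_notMem.1 h0] with x hx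
  exact not_not.1 hx

/-! ### Sparse families of words are eventually avoided -/

lemma exists_numbering {ι : Type*} (s : Finset ι) :
    ∃ g : ι → ℕ, Set.InjOn g s ∧ ∀ a ∈ s, 1 ≤ g a ∧ g a ≤ s.card := by
  classical
  refine ⟨fun a => if h : a ∈ s then s.equivFin ⟨a, h⟩ + 1 else 0, fun a ha b hb hab => ?_,
    fun a ha => ?_⟩
  · have ha' : a ∈ s := ha
    have hb' : b ∈ s := hb
    simp only [ha', hb', dite_true, add_left_inj, Fin.val_inj, EmbeddingLike.apply_eq_iff_eq,
      Subtype.mk.injEq] at hab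
    exact hab
  · simp only [ha, dite_true]
    have := (s.equivFin ⟨a, ha⟩).2
    omega

lemma entH_le (hA : 2 ≤ A) {W : Type*} [Fintype W] [DecidableEq W] [Nonempty W] (p : W → ℝ)
    (hp0 : ∀ w, 0 ≤ p w) (hp1 : ∑ w, p w = 1) (T : Finset W) {B : ℝ} (hB1 : 1 ≤ B)
    (hB : (T.card : ℝ) ≤ B) :
    entH A p ≤ Real.logb A 2 + Real.logb A B +
      (∑ w ∈ Tᶜ, p w) * Real.logb A (Fintype.card W) := by
  have hA1 : (1 : ℝ) < A := by exact_mod_cast (by omega : 1 < A)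
  have hlog : 0 < Real.log A := Real.log_pos hA1
  have hB0 : 0 < B := by linarith
  have hW : (1 : ℝ) ≤ Fintype.card W := by exact_mod_cast Fintype.card_pos
  have hW0 : (0 : ℝ) < Fintype.card W := by linarith
  set q : W → ℝ := fun w => if w ∈ T then (2 * B)⁻¹ else (2 * (Fintype.card W : ℝ))⁻¹
  have hq0 : ∀ w, 0 < q w := fun w => by
    simp only [q]
    split_ifs <;> positivity
  have hsplit : ∀ g : W → ℝ, ∑ w, g w = ∑ w ∈ T, g w + ∑ w ∈ Tᶜ, g w := fun g =>
    (Finset.sum_add_sum_compl T g).symm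
  have hq1 : ∑ w, q w ≤ 1 := by
    rw [hsplit]
    have h1 : ∑ w ∈ T, q w = T.card * (2 * B)⁻¹ := by
      rw [Finset.sum_congr rfl fun w hw => if_pos hw, Finset.sum_const, nsmul_eq_mul]
    have h2 : ∑ w ∈ Tᶜ, q w = (Tᶜ).card * (2 * (Fintype.card W : ℝ))⁻¹ := by
      rw [Finset.sum_congr rfl fun w hw => if_neg (Finset.mem_compl.1 hw), Finset.sum_const,
        nsmul_eq_mul]
    have h3 : (((Tᶜ).card : ℕ) : ℝ) ≤ Fintype.card W := by exact_mod_cast Finset.card_le_univ _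
    have h4 : (T.card : ℝ) * (2 * B)⁻¹ ≤ B * (2 * B)⁻¹ := by gcongr
    have h5 : ((Tᶜ).card : ℝ) * (2 * (Fintype.card W : ℝ))⁻¹ ≤
      (Fintype.card W : ℝ) * (2 * (Fintype.card W : ℝ))⁻¹ := by gcongr
    have h6 : B * (2 * B)⁻¹ = 1 / 2 := by field_simp
    have h7 : (Fintype.card W : ℝ) * (2 * (Fintype.card W : ℝ))⁻¹ = 1 / 2 := by field_simp
    linarith
  have hterm : ∀ w, -(p w * Real.logb A (p w)) ≤
      -(p w * Real.logb A (q w)) + (q w - p w) / Real.log A := by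
    intro w
    rcases (hp0 w).eq_or_lt with h0 | h0
    · rw [← h0]
      have := (div_pos (hq0 w) hlog).le
      simpa using this
    · have h1 := Real.log_le_sub_one_of_pos (div_pos (hq0 w) h0)
      rw [Real.log_div (hq0 w).ne' h0.ne'] at h1
      have h2 : p w * (Real.log (q w) - Real.log (p w)) ≤ q w - p w := by
        calc _ ≤ p w * (q w / p w - 1) := by gcongr
          _ = _ := by field_simp
      simp only [Real.logb]
      rw [← sub_nonneg]
      have : -(p w * (Real.log (q w) / Real.log A)) + (q w - p w) / Real.log A -
          -(p w * (Real.log (p w) / Real.log A)) =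
          ((q w - p w) - p w * (Real.log (q w) - Real.log (p w))) / Real.log A := by ring
      rw [this]
      exact div_nonneg (by linarith) hlog.le
  have hent : entH A p ≤ -∑ w, p w * Real.logb A (q w) := by
    rw [entH, ← Finset.sum_neg_distrib, ← Finset.sum_neg_distrib]
    refine (Finset.sum_le_sum fun w _ => hterm w).trans ?_
    rw [Finset.sum_add_distrib, ← Finset.sum_div, Finset.sum_sub_distrib, hp1]
    have : (∑ w, q w - 1) / Real.log A ≤ 0 := div_nonpos_of_nonpos_of_nonneg (by linarith) hlog.le
    linarith
  refine hent.trans ?_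
  have hlT : ∀ w ∈ T, p w * Real.logb A (q w) = -(p w * (Real.logb A 2 + Real.logb A B)) := by
    intro w hw
    simp only [q, if_pos hw]
    rw [Real.logb_inv, Real.logb_mul two_ne_zero hB0.ne', mul_neg]
  have hlTc : ∀ w ∈ Tᶜ, p w * Real.logb A (q w) =
      -(p w * (Real.logb A 2 + Real.logb A (Fintype.card W))) := by
    intro w hw
    simp only [q, if_neg (Finset.mem_compl.1 hw)]
    rw [Real.logb_inv, Real.logb_mul two_ne_zero hW0.ne', mul_neg]
  rw [hsplit, Finset.sum_congr rfl hlT, Finset.sum_congr rfl hlTc, Finset.sum_neg_distrib,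
    Finset.sum_neg_distrib, ← Finset.sum_mul, ← Finset.sum_mul]
  have h1 := hsplit p
  rw [hp1] at h1
  have h2 : 0 ≤ ∑ w ∈ Tᶜ, p w := Finset.sum_nonneg fun w _ => hp0 w
  have h3 : 0 ≤ Real.logb A B := Real.logb_nonneg hA1 hB1
  have h4 : ∑ w ∈ T, p w = 1 - ∑ w ∈ Tᶜ, p w := by linarith
  rw [h4]
  nlinarith

open scoped Classical in
lemma sum_compl_wordDist (μ : Measure (Config A d)) [IsProbabilityMeasure μ] {k : ℕ}
    (T : Finset (Word A d k)) :
    ∑ w ∈ Tᶜ, wordDist μ k w = μ.real {x | wordAt x k 0 ∉ T} := by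
  have h1 := integral_comp_wordAt μ (k := k) fun w => if w ∈ T then 0 else 1
  have h2 : ∫ x, (if wordAt x k 0 ∈ T then (0 : ℝ) else 1) ∂μ =
      μ.real {x | wordAt x k 0 ∉ T} := by
    have h3 : (fun x : Config A d => if wordAt x k 0 ∈ T then (0 : ℝ) else 1) =
        Set.indicator {x | wordAt x k 0 ∉ T} fun _ => 1 := by
      funext x
      by_cases h : wordAt x k 0 ∈ T <;> simp [h]
    rw [h3, integral_indicator_const _ (measurableSet_wordAt 0 fun w => w ∉ T)]
    simp
  rw [← h2, h1]
  simp only [mul_ite, mul_zero, mul_one]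
  rw [← Finset.sum_add_sum_compl T (fun w => if w ∈ T then (0 : ℝ) else wordDist μ k w),
    Finset.sum_congr rfl fun w hw => if_pos hw,
    Finset.sum_congr rfl fun w hw => if_neg (Finset.mem_compl.1 hw)]
  simp

open scoped Classical in
/-- Words having many disjoint subwords in sparse families `G` are few. -/
lemma ncard_many_sparse_le (hA : 2 ≤ A) (hd : 1 ≤ d) {κ : ℝ} (hκ : 0 < κ)
    (G : ∀ n, Set (Word A d n)) {ρ : ℝ} {n₁ : ℕ}
    (hG : ∀ n ≥ n₁, ((G n).ncard : ℝ) ≤ (A : ℝ) ^ (ρ * (n : ℝ) ^ d)) :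
    ∃ R₀, ∀ R ≥ R₀, ∃ J₀, ∀ J ≥ J₀, ∃ N₀, ∀ N ≥ N₀, ∀ M ≤ N, ∀ (a γ lam : ℝ), ρ ≤ a → 0 ≤ a →
      ∀ S : Finset (Word A d R), (S.card : ℝ) ≤ (A : ℝ) ^ (a * (R : ℝ) ^ d) →
      (Set.ncard ((fun y => wordAt y N 0) '' {y : Config A d |
        (((cube d N).filter fun v => wordAt y R v ∉ S).card : ℝ) ≤ lam * (N : ℝ) ^ d ∧
        3 ^ d * (γ * (N : ℝ) ^ d) ≤ (((cube d (N - M)).filter fun v => ∃ n, J ≤ n ∧ n ≤ M ∧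
          wordAt y n v ∈ G n).card : ℝ)}) : ℝ) ≤
        (A : ℝ) ^ ((ρ * γ + a * (1 - γ) + lam + 5 * κ) * (N : ℝ) ^ d) := by
  obtain ⟨R₀, hR₀⟩ := ncard_marked_le (d := d) hA hd hκ
  refine ⟨R₀, fun R hR => ?_⟩
  obtain ⟨J₀, hJ₀⟩ := hR₀ R hR
  refine ⟨J₀ + n₁ + 1, fun J hJ => ?_⟩
  obtain ⟨N₀, hN₀⟩ := hJ₀ J (by omega)
  refine ⟨N₀, fun N hN M hM a γ lam hρ ha S hS => ?_⟩
  choose g hg hg1 using fun n => exists_numbering (Set.toFinite (G n)).toFinset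
  set Y := {y : Config A d |
        (((cube d N).filter fun v => wordAt y R v ∉ S).card : ℝ) ≤ lam * (N : ℝ) ^ d ∧
        3 ^ d * (γ * (N : ℝ) ^ d) ≤ (((cube d (N - M)).filter fun v => ∃ n, J ≤ n ∧ n ≤ M ∧
          wordAt y n v ∈ G n).card : ℝ)}
  have hF : ∀ y : Config A d, ∃ F : Finset (Site d × ℕ × ℕ), y ∈ Y →
      Marked N J R S ρ γ lam y F ∧ ∀ b ∈ F, wordAt y b.2.1 b.1 ∈ G b.2.1 ∧
        b.2.2 = g b.2.1 (wordAt y b.2.1 b.1) := by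
    intro y
    by_cases hy : y ∈ Y
    swap
    · exact ⟨∅, fun h => absurd h hy⟩
    obtain ⟨hbad, hmany⟩ := hy
    have hch : ∀ v : Site d, ∃ n, 1 ≤ n ∧ ((∃ n, J ≤ n ∧ n ≤ M ∧ wordAt y n v ∈ G n) →
        J ≤ n ∧ n ≤ M ∧ wordAt y n v ∈ G n) := by
      intro v
      by_cases hv : ∃ n, J ≤ n ∧ n ≤ M ∧ wordAt y n v ∈ G n
      · obtain ⟨n, hn⟩ := hv
        exact ⟨n, by omega, fun _ => hn⟩
      · exact ⟨1, le_rfl, fun h => absurd h hv⟩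
    choose n hn1 hn using hch
    obtain ⟨U, hUV, hdis, hcard⟩ := exists_disjoint_boxes _ n fun v _ => hn1 v
    have hU : ∀ u ∈ U, u ∈ cube d (N - M) ∧ J ≤ n u ∧ n u ≤ M ∧ wordAt y (n u) u ∈ G (n u) :=
      fun u hu => ⟨(Finset.mem_filter.1 (hUV hu)).1, hn u (Finset.mem_filter.1 (hUV hu)).2⟩
    set blk : Site d → Site d × ℕ × ℕ := fun u => (u, n u, g (n u) (wordAt y (n u) u)) with hblk
    have hinj : Function.Injective blk := fun u u' h => (Prod.ext_iff.1 h).1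
    refine ⟨U.image blk, fun _ => ⟨⟨hbad, ?_, ?_, ?_, ?_, ?_⟩, ?_⟩⟩
    · intro b hb
      obtain ⟨u, hu, rfl⟩ := Finset.mem_image.1 hb
      exact (hU u hu).2.1
    · intro b hb
      obtain ⟨u, hu, rfl⟩ := Finset.mem_image.1 hb
      intro v hv
      refine mem_cube.2 fun i => ?_
      have h1 := mem_box.1 hv i
      have h2 := mem_cube.1 (hU u hu).1 i
      have h3 := (hU u hu).2.2.1
      simp only [hblk] at h1
      omega
    · intro b hb
      obtain ⟨u, hu, rfl⟩ := Finset.mem_image.1 hb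
      have h1 := (hg1 (n u) _ ((Set.Finite.mem_toFinset _).2 (hU u hu).2.2.2)).2
      rw [← Set.ncard_eq_toFinset_card] at h1
      refine le_trans ?_ (hG (n u) (by have := (hU u hu).2.1; omega))
      exact_mod_cast h1
    · rw [Finset.coe_image]
      rintro _ ⟨u, hu, rfl⟩ _ ⟨u', hu', rfl⟩ hne
      exact hdis hu hu' fun h => hne (h ▸ rfl)
    · have h1 : (U.image blk).filter (fun b => b.2.2 ≠ 0) = U.image blk := by
        refine Finset.filter_true_of_mem fun b hb => ?_
        obtain ⟨u, hu, rfl⟩ := Finset.mem_image.1 hb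
        have := (hg1 (n u) _ ((Set.Finite.mem_toFinset _).2 (hU u hu).2.2.2)).1
        simp only [hblk]
        omega
      rw [h1, Finset.sum_image fun u _ u' _ h => hinj h]
      have h2 := hmany.trans (Nat.cast_le.2 hcard)
      push_cast at h2
      exact le_of_mul_le_mul_left h2 (by positivity)
    · intro b hb
      obtain ⟨u, hu, rfl⟩ := Finset.mem_image.1 hb
      exact ⟨(hU u hu).2.2.2, rfl⟩
  choose F hF using hF
  refine hN₀ N hN a ρ γ lam hρ ha S hS Y F (fun y hy => (hF y hy).1) ?_
  intro y hy y' hy' hFF hout v hv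
  by_cases hvF : ∃ b ∈ F y, b.2.2 ≠ 0 ∧ v ∈ box b.1 b.2.1
  · obtain ⟨b, hb, _, hvb⟩ := hvF
    obtain ⟨h1, h2⟩ := (hF y hy).2 b hb
    obtain ⟨h3, h4⟩ := (hF y' hy').2 b (hFF ▸ hb)
    exact wordAt_eq_iff_box.1 (hg b.2.1 ((Set.Finite.mem_toFinset _).2 h1)
      ((Set.Finite.mem_toFinset _).2 h3) (h2.symm.trans h4)) v hvb
  · push Not at hvF
    exact hout v hv hvF

open scoped Classical in
/-- For an ergodic process of entropy rate `h`, a family of sets of words whose exponential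
growth rate is smaller than `h` is almost surely eventually avoided. -/
theorem ae_eventually_notMem (hA : 2 ≤ A) (hd : 1 ≤ d) {μ : Measure (Config A d)}
    [IsProbabilityMeasure μ] (hμ : ErgodicShift μ) {h : ℝ} (hrate : HasEntropyRate μ h)
    (G : ∀ n, Set (Word A d n)) {δ : ℝ} (hδ : 0 < δ) (hδh : δ ≤ h) {n₁ : ℕ}
    (hG : ∀ n ≥ n₁, ((G n).ncard : ℝ) ≤ (A : ℝ) ^ ((h - δ) * (n : ℝ) ^ d)) :
    ∀ᵐ x ∂μ, ∀ᶠ n in atTop, wordAt x n 0 ∉ G n := by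
  have hA1 : (1 : ℝ) < A := by exact_mod_cast (by omega : 1 < A)
  have hA0 : (0 : ℝ) < A := by linarith
  set E : Set (Config A d) := {x | ∃ᶠ n in atTop, wordAt x n 0 ∈ G n}
  suffices hE : μ E = 0 by
    have : ∀ᵐ x ∂μ, x ∉ E := measure_eq_zero_iff_ae_notMem.1 hE
    filter_upwards [this] with x hx
    exact not_frequently.1 hx
  by_contra hE
  set p : ℝ := μ.real E
  have hp : 0 < p := ENNReal.toReal_pos hE (measure_ne_top _ _)
  have hp1 : p ≤ 1 := measureReal_le_one
  set γ : ℝ := p / (4 * 3 ^ d)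
  have h3 : (1 : ℝ) ≤ 3 ^ d := one_le_pow₀ (by norm_num)
  have hγ : 0 < γ := by positivity
  have hγ1 : γ ≤ 1 := by
    rw [div_le_one (by positivity)]; linarith
  have hγp : 3 ^ d * γ = p / 4 := by
    simp only [γ]; field_simp
  set θ : ℝ := δ * γ
  have hθ : 0 < θ := by positivity
  have hθh : θ ≤ h := (mul_le_of_le_one_right hδ.le hγ1).trans hδh
  set ε : ℝ := min (θ / 32) (θ / 32 * θ / (16 * 3 ^ d))
  have hε : 0 < ε := lt_min (by positivity) (by positivity)
  obtain ⟨R₀, hR₀⟩ := ncard_many_sparse_le hA hd (show 0 < θ / 32 by positivity) G hG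
  obtain ⟨R, hR, S, hS, hSμ⟩ := exists_typical_words hA hd hμ hrate hε R₀
  obtain ⟨J, hJ⟩ := hR₀ R hR
  set EM : ℕ → Set (Config A d) := fun M => {x | ∃ n, J ≤ n ∧ n ≤ M ∧ wordAt x n 0 ∈ G n}
  have hEMm : ∀ M, MeasurableSet (EM M) := by
    intro M
    have : EM M = ⋃ n ∈ Finset.Icc J M, {x | wordAt x n 0 ∈ G n} := by
      ext x; simp [EM, and_assoc]
    rw [this]
    exact Finset.measurableSet_biUnion _ fun n _ => measurableSet_wordAt 0 _
  have hEMmono : Monotone EM := fun a b hab x ⟨n, h1, h2, h3⟩ => ⟨n, h1, h2.trans hab, h3⟩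
  obtain ⟨M, hM⟩ : ∃ M, 3 / 4 * p ≤ μ.real (EM M) := by
    have h1 : Tendsto (fun M => μ.real (EM M)) atTop (𝓝 (μ.real (⋃ M, EM M))) :=
      (ENNReal.tendsto_toReal (measure_ne_top _ _)).comp (tendsto_measure_iUnion_atTop hEMmono)
    have h2 : p ≤ μ.real (⋃ M, EM M) := by
      refine measureReal_mono fun x hx => ?_
      obtain ⟨n, hn, hn2⟩ := (frequently_atTop.1 hx) J
      exact Set.mem_iUnion.2 ⟨n, n, hn, le_rfl, hn2⟩
    exact ((h1.eventually (lt_mem_nhds (by linarith : 3 / 4 * p < _))).mono fun _ h => h.le).exists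
  obtain ⟨N₀, hN₀⟩ := hJ J le_rfl
  have hmet := tendsto_measure_average hμ (f := (EM M).indicator fun _ => (1 : ℝ))
    (measurable_const.indicator (hEMm M)) (C := 1)
    (fun x => by by_cases hx : x ∈ EM M <;> simp [hx]) (show 0 < p / 4 by positivity)
  have hinteg : ∫ y, (EM M).indicator (fun _ => (1 : ℝ)) y ∂μ = μ.real (EM M) := by
    rw [integral_indicator_const _ (hEMm M)]; simp
  rw [hinteg] at hmet
  have hmet' := (tendsto_sub_atTop_nat M).eventually
    (hmet.eventually (gt_mem_nhds (show (0 : ℝ) < θ / 16 by positivity)))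
  have hlim := hrate.eventually (lt_mem_nhds (show h - θ / 8 < h by linarith))
  have hbig : ∀ᶠ N : ℕ in atTop, 4 / θ < (N : ℝ) :=
    tendsto_natCast_atTop_atTop.eventually (eventually_gt_atTop _)
  obtain ⟨N, hNmet, hNlim, hNbig, hNbd, hNN, hNM⟩ := (hmet'.and (hlim.and (hbig.and
    ((eventually_boundary_le d M (show (0 : ℝ) < 1 / 2 by norm_num)).and
      ((eventually_ge_atTop N₀).and (eventually_gt_atTop M)))))).exists
  have hN0 : (0 : ℝ) < (N : ℝ) ^ d := by
    have : 0 < N := by omega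
    positivity
  have hcard := hN₀ N hNN M hNM.le (h + ε) γ (θ / 32) (by linarith) (by linarith) S hS
  set Y : Set (Config A d) := {y : Config A d |
        (((cube d N).filter fun v => wordAt y R v ∉ S).card : ℝ) ≤ θ / 32 * (N : ℝ) ^ d ∧
        3 ^ d * (γ * (N : ℝ) ^ d) ≤ (((cube d (N - M)).filter fun v => ∃ n, J ≤ n ∧ n ≤ M ∧
          wordAt y n v ∈ G n).card : ℝ)} with hY
  set T := (Set.toFinite ((fun y => wordAt y N 0) '' Y)).toFinset
  have hT : (T.card : ℝ) ≤ (A : ℝ) ^ ((h - θ / 2) * (N : ℝ) ^ d) := by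
    rw [← Set.ncard_eq_toFinset_card]
    refine hcard.trans (Real.rpow_le_rpow_of_exponent_le hA1.le ?_)
    refine mul_le_mul_of_nonneg_right ?_ hN0.le
    have h1 : ε ≤ θ / 32 := min_le_left _ _
    have h2 : ε * (1 - γ) ≤ ε := mul_le_of_le_one_right hε.le (by linarith)
    have h4 : (h - δ) * γ + (h + ε) * (1 - γ) = h - θ + ε * (1 - γ) := by
      simp only [θ]; ring
    linarith
  have hcompl : μ.real {x | wordAt x N 0 ∉ T} ≤ θ / 8 := by
    have hsub : {x | wordAt x N 0 ∉ T} ⊆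
        {x | ∃ n : ℕ, 1 ≤ n ∧ θ / 32 * (n : ℝ) ^ d <
          ((cube d n).filter fun v => shift v x ∈ {y | wordAt y R 0 ∉ S}).card} ∪
        {x | p / 4 ≤ |(((N - M : ℕ) : ℝ) ^ d)⁻¹ * ∑ v ∈ cube d (N - M),
          (EM M).indicator (fun _ => (1 : ℝ)) (shift v x) - μ.real (EM M)|} := by
      intro x hx
      by_contra hnot
      rw [Set.mem_union, not_or] at hnot
      obtain ⟨hn1, hn2⟩ := hnot
      refine hx ((Set.Finite.mem_toFinset _).2 ⟨x, ⟨?_, ?_⟩, rfl⟩)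
      · have h1 := fun h => hn1 ⟨N, by omega, h⟩
        have h2 := not_lt.1 h1
        simpa [wordAt_shift] using h2
      · have h1 := not_le.1 fun h => hn2 (Set.mem_ofPred_eq ▸ h)
        rw [← card_filter_shift_eq_sum] at h1
        have h2 := (abs_lt.1 h1).1
        have hNM0 : (0 : ℝ) < ((N - M : ℕ) : ℝ) ^ d := by
          have : 0 < N - M := by omega
          positivity
        have h4 : p / 2 ≤ (((N - M : ℕ) : ℝ) ^ d)⁻¹ *
            (((cube d (N - M)).filter fun v => shift v x ∈ EM M).card : ℝ) := by linarith
        rw [inv_mul_eq_div, le_div_iff₀ hNM0] at h4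
        have h5 : ((cube d (N - M)).filter fun v => shift v x ∈ EM M) =
            (cube d (N - M)).filter fun v => ∃ n, J ≤ n ∧ n ≤ M ∧ wordAt x n v ∈ G n := by
          refine Finset.filter_congr fun v _ => ?_
          simp only [EM, Set.mem_ofPred_eq, wordAt_shift, zero_add]
        rw [h5] at h4
        refine le_trans ?_ h4
        rw [← mul_assoc, hγp]
        have : p / 4 * (N : ℝ) ^ d ≤ p / 4 * (2 * ((N - M : ℕ) : ℝ) ^ d) :=
          mul_le_mul_of_nonneg_left (by linarith) (by positivity)
        linarith
    refine (measureReal_mono hsub).trans ((measureReal_union_le _ _).trans ?_)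
    have h1 := measure_maximal_le hμ.1
      (measurableSet_wordAt (A := A) (k := R) (0 : Site d) fun w => w ∉ S)
      (show 0 < θ / 32 by positivity)
    have h2 : 3 ^ d * μ.real {x | wordAt x R 0 ∉ S} / (θ / 32) ≤ θ / 16 := by
      rw [div_le_iff₀ (by positivity)]
      calc 3 ^ d * μ.real {x | wordAt x R 0 ∉ S} ≤ 3 ^ d * (θ / 32 * θ / (16 * 3 ^ d)) := by
            gcongr
            exact hSμ.trans (min_le_right _ _)
        _ = _ := by field_simp
    have h4 : θ / 16 + θ / 16 = θ / 8 := by ring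
    rw [← h4]
    refine add_le_add ?_ hNmet.le
    convert h1.trans h2
  have : Nonempty (Word A d N) := ⟨fun _ => ⟨0, by omega⟩⟩
  have hent := entH_le hA (wordDist μ N) (wordDist_nonneg μ N) (sum_wordDist μ N) T
    (Real.one_le_rpow hA1.le (mul_nonneg (by linarith) hN0.le)) hT
  rw [sum_compl_wordDist, card_word, Real.logb_rpow hA0 hA1.ne'] at hent
  have hlogW : Real.logb A ((A ^ N ^ d : ℕ) : ℝ) = (N : ℝ) ^ d := by
    have : ((A ^ N ^ d : ℕ) : ℝ) = (A : ℝ) ^ ((N ^ d : ℕ) : ℝ) := by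
      rw [Real.rpow_natCast]; push_cast; rfl
    rw [this, Real.logb_rpow hA0 hA1.ne']
    push_cast; rfl
  rw [hlogW] at hent
  have hlog2 : Real.logb A 2 ≤ 1 := by
    rw [← Real.logb_self_eq_one hA1]
    exact Real.logb_le_logb_of_le hA1 (by norm_num) (by exact_mod_cast hA)
  rw [lt_div_iff₀ hN0] at hNlim
  have h1 : μ.real {x | wordAt x N 0 ∉ T} * (N : ℝ) ^ d ≤ θ / 8 * (N : ℝ) ^ d := by gcongr
  have h2 : 1 < θ / 4 * (N : ℝ) ^ d := by
    have := hNbig.trans_le (le_pow_of_pos_dim hd N)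
    rw [div_lt_iff₀ hθ] at this
    linarith
  nlinarith

/-! ### The structure of the parsing -/

lemma mem_tuples {d n : ℕ} {r : Site d} : r ∈ tuples d n ↔ r ∈ cube d n := by
  rw [mem_cube]
  induction d with
  | zero => simp [tuples, Subsingleton.elim r fun i => i.elim0]
  | succ d ih =>
    simp only [tuples, List.mem_flatMap, List.mem_range, List.mem_map]
    constructor
    · rintro ⟨a, ha, t, ht, rfl⟩ i
      refine Fin.cases ?_ (fun i => ?_) i
      · simpa using ha
      · simpa using ih.1 ht i
    · intro h
      exact ⟨r 0, h 0, Fin.tail r, ih.2 fun i => h i.succ, Fin.cons_self_tail r⟩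

lemma nodup_tuples (d n : ℕ) : (tuples d n).Nodup := by
  induction d with
  | zero => simp [tuples]
  | succ d ih =>
    refine List.nodup_flatMap.2
      ⟨fun a _ => ih.map (Fin.cons_right_injective (α := fun _ => ℕ) a), ?_⟩
    refine List.nodup_range.imp fun hab => ?_
    simp only [Function.onFun, List.disjoint_left, List.mem_map]
    rintro _ ⟨t, _, rfl⟩ ⟨t', _, h⟩
    exact hab (by simpa using (congrFun h 0).symm)

/-- The corners, in units of the block size, of the blocks parsed between `Λ_q` and `Λ_p`. -/
def corners (d q p : ℕ) : Finset (Site d) := cube d p \ cube d q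

/-- The corner of the block of side `k` at position `r`. -/
def corner (k : ℕ) (r : Site d) : Site d := fun j => k * r j

open scoped Classical in
/-- The positions in `corners d q p` whose `k`-word recurs at another position. -/
noncomputable def recurring (x : Config A d) (k q p : ℕ) : Finset (Site d) :=
  (corners d q p).filter fun r => ∃ r' ∈ corners d q p, r' ≠ r ∧
    wordAt x k (corner k r') = wordAt x k (corner k r)

lemma card_corners {q p : ℕ} (h : q ≤ p) :
    ((corners d q p).card : ℝ) = (p : ℝ) ^ d - (q : ℝ) ^ d := by
  have h1 := Finset.card_sdiff_of_subset (cube_mono (d := d) h)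
  have h2 := Finset.card_le_card (cube_mono (d := d) h)
  rw [corners, h1, Nat.cast_sub h2, card_cube, card_cube]
  push_cast; rfl

/-- The list of positions of the layers `q, …, q + t - 1`. -/
def layerList (d q : ℕ) : ℕ → List (Site d)
  | 0 => []
  | t + 1 => layerList d q t ++
      (tuples d (q + t + 1)).filter fun r => decide (¬ ∀ j, r j < q + t)

lemma mem_layerList {q t : ℕ} {r : Site d} : r ∈ layerList d q t ↔ r ∈ corners d q (q + t) := by
  induction t with
  | zero => simp [layerList, corners]
  | succ t ih =>
    simp only [layerList, List.mem_append, ih, List.mem_filter, mem_tuples, corners,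
      Finset.mem_sdiff, decide_eq_true_eq, ← mem_cube]
    have h1 : r ∈ cube d (q + t) → r ∈ cube d (q + t + 1) := fun h => cube_mono (by omega) h
    have h2 : r ∈ cube d q → r ∈ cube d (q + t) := fun h => cube_mono (by omega) h
    rw [← add_assoc]
    tauto

lemma nodup_layerList (d q t : ℕ) : (layerList d q t).Nodup := by
  induction t with
  | zero => simp [layerList]
  | succ t ih =>
    refine List.nodup_append'.2 ⟨ih, (nodup_tuples _ _).filter _, ?_⟩
    intro r h1 h2
    rw [mem_layerList, corners, Finset.mem_sdiff, mem_cube] at h1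
    simp only [List.mem_filter, decide_eq_true_eq] at h2
    exact h2.2 h1.1

lemma length_filter_layerList (q t : ℕ) (P : Site d → Prop) [DecidablePred P] :
    ((layerList d q t).filter fun r => decide (P r)).length =
      ((corners d q (q + t)).filter P).card := by
  classical
  rw [← List.toFinset_card_of_nodup ((nodup_layerList d q t).filter _)]
  congr 1
  ext r
  simp [mem_layerList]

lemma jval_eq (x : Config A d) (k q t : ℕ) (P : List (Site d × ℕ)) (hP : ∀ b ∈ P, b.2 ≠ k) :
    Jval x (P ++ (layerList d q t).map fun r => (corner k r, k)) k =
      ((recurring x k q (q + t)).card : ℝ) / ((corners d q (q + t)).card : ℝ) := by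
  classical
  have h1 : (P ++ (layerList d q t).map fun r => (corner k r, k)).filter
      (fun b => decide (b.2 = k)) = (layerList d q t).map fun r => (corner k r, k) := by
    rw [List.filter_append, List.filter_eq_nil_iff.2 (by simpa using hP), List.nil_append,
      List.filter_eq_self]
    simp
  have h2 : (corners d q (q + t)).card = (layerList d q t).length := by
    have := length_filter_layerList q t fun _ : Site d => True
    simpa using this.symm
  simp only [Jval, h1, List.filter_map, List.length_map, h2]
  congr 2
  have h3 : ∀ r : Site d, ((layerList d q t).filter ((fun b' : Site d × ℕ =>
      decide (wordAt x k b'.1 = wordAt x k (corner k r))) ∘ fun r => (corner k r, k))).length =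
      ((corners d q (q + t)).filter fun r' =>
        wordAt x k (corner k r') = wordAt x k (corner k r)).card :=
    fun r => length_filter_layerList q t fun r' =>
      wordAt x k (corner k r') = wordAt x k (corner k r)
  have h4 : ((fun b : Site d × ℕ => decide (2 ≤ ((layerList d q t).filter ((fun b' : Site d × ℕ =>
      decide (wordAt x k b'.1 = wordAt x k b.1)) ∘ fun r => (corner k r, k))).length)) ∘
        fun r => (corner k r, k)) = fun r => decide (2 ≤ ((corners d q (q + t)).filter fun r' =>
        wordAt x k (corner k r') = wordAt x k (corner k r)).card) := by
    funext r
    simp only [Function.comp_apply]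
    rw [← h3]
  rw [h4, length_filter_layerList]
  congr 1
  refine Finset.filter_congr fun r hr => ?_
  constructor
  · intro h
    obtain ⟨r', hr', hne⟩ := Finset.exists_mem_ne (lt_of_lt_of_le one_lt_two h) r
    rw [Finset.mem_filter] at hr'
    exact ⟨r', hr'.1, hne, hr'.2⟩
  · rintro ⟨r', hr', hne, hw⟩
    exact Finset.one_lt_card.2 ⟨r', Finset.mem_filter.2 ⟨hr', hw⟩, r,
      Finset.mem_filter.2 ⟨hr, rfl⟩, hne⟩

lemma card_nonrecurring_le (x : Config A d) (k q p : ℕ) :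
    ((corners d q p).card : ℝ) - ((recurring x k q p).card : ℝ) ≤
      ((corners d q p).image fun r => wordAt x k (corner k r)).card := by
  classical
  have h1 : (corners d q p \ recurring x k q p).card ≤
      ((corners d q p).image fun r => wordAt x k (corner k r)).card := by
    refine Finset.card_le_card_of_injOn (fun r => wordAt x k (corner k r)) (fun r hr => ?_) ?_
    · exact Finset.mem_image_of_mem _ (Finset.mem_sdiff.1 hr).1
    · intro r hr r' hr' h
      by_contra hne
      have h2 := Finset.mem_sdiff.1 hr
      have h3 := Finset.mem_sdiff.1 hr'
      exact h2.2 (Finset.mem_filter.2 ⟨h2.1, r', h3.1, Ne.symm hne, h.symm⟩)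
  have h2 : recurring x k q p ⊆ corners d q p := Finset.filter_subset _ _
  rw [Finset.card_sdiff_of_subset h2] at h1
  have h3 : (((corners d q p).card - (recurring x k q p).card : ℕ) : ℝ) ≤ _ := Nat.cast_le.2 h1
  rwa [Nat.cast_sub (Finset.card_le_card h2)] at h3

lemma exists_recurrence (hd : 1 ≤ d) {φ : ℝ} (hφ : φ < 1) (x : Config A d) (k q : ℕ) :
    ∃ t ≥ 1, φ * ((corners d q (q + t)).card : ℝ) ≤ ((recurring x k q (q + t)).card : ℝ) := by
  classical
  obtain ⟨t, ht⟩ := exists_nat_gt ((Fintype.card (Word A d k) : ℝ) / (1 - φ))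
  have ht0 : (0 : ℝ) < t := (div_nonneg (Nat.cast_nonneg _) (by linarith)).trans_lt ht
  refine ⟨t, by exact_mod_cast ht0, ?_⟩
  rw [div_lt_iff₀ (by linarith)] at ht
  have h1 := card_nonrecurring_le x k q (q + t)
  have h2 : ((((corners d q (q + t)).image fun r => wordAt x k (corner k r)).card : ℕ) : ℝ) ≤
      Fintype.card (Word A d k) := by exact_mod_cast Finset.card_le_univ _
  have h3 : (t : ℝ) ≤ ((corners d q (q + t)).card : ℝ) := by
    rw [card_corners (by omega)]
    have := pow_add_pow_le (Nat.cast_nonneg (α := ℝ) q) (Nat.cast_nonneg t) (by omega : d ≠ 0)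
    have h4 := le_pow_of_pos_dim hd t
    push_cast
    linarith
  have h4 : (t : ℝ) * (1 - φ) ≤ ((corners d q (q + t)).card : ℝ) * (1 - φ) := by
    gcongr
  linarith

/-- The state reached from `s` after parsing `t` layers without changing the block size. -/
def layered (s : PState d) (t : ℕ) : PState d where
  m := if t = 0 then s.m else s.k * (s.m / s.k + t)
  k := s.k
  blocks := s.blocks ++ (layerList d (s.m / s.k) t).map fun r => (corner s.k r, s.k)

lemma step_layered {φ : ℝ} {x : Config A d} {s : PState d} (hk : 1 ≤ s.k) {t : ℕ}
    (hJ : ¬ φ ≤ Jval x (layered s t).blocks s.k) :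
    step φ x (layered s t) = layered s (t + 1) := by
  have hq : (layered s t).m / s.k = s.m / s.k + t := by
    by_cases ht : t = 0
    · simp [layered, ht]
    · simp only [layered, if_neg ht]
      exact Nat.mul_div_cancel_left _ hk
  have hJ' : ¬ φ ≤ Jval x (layered s t).blocks (layered s t).k := hJ
  rw [step, if_neg hJ']
  have hkk : (layered s t).k = s.k := rfl
  simp only [hkk, hq]
  simp only [layered, Nat.add_eq_zero_iff, one_ne_zero, and_false, if_false, PState.mk.injEq,
    true_and, layerList, List.map_append, List.append_assoc]
  refine ⟨by ring, ?_⟩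
  rfl

/-- The phase of the parser with block size `k` parses the blocks at `corners d q p`. -/
structure IsPhase (φ : ℝ) (x : Config A d) (k q p : ℕ) : Prop where
  lt : q < p
  le_recurring : φ * ((corners d q p).card : ℝ) ≤ ((recurring x k q p).card : ℝ)
  recurring_lt : ∀ p', q < p' → p' < p →
    ((recurring x k q p').card : ℝ) < φ * ((corners d q p').card : ℝ)

lemma exists_phase_end (hd : 1 ≤ d) {φ : ℝ} (hφ0 : 0 < φ) (hφ : φ < 1) (x : Config A d) (a : ℕ)
    (hk : 1 ≤ (iter φ x a).k) (hb : ∀ b ∈ (iter φ x a).blocks, b.2 ≠ (iter φ x a).k) :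
    ∃ t p, a < t ∧ IsPhase φ x (iter φ x a).k ((iter φ x a).m / (iter φ x a).k) p ∧
      (iter φ x t).k = (iter φ x a).k + 1 ∧ (iter φ x t).m = (iter φ x a).k * p ∧
      ∀ b, b ∈ (iter φ x t).blocks ↔ b ∈ (iter φ x a).blocks ∨
        ∃ r ∈ corners d ((iter φ x a).m / (iter φ x a).k) p,
          b = (corner (iter φ x a).k r, (iter φ x a).k) := by
  classical
  set s := iter φ x a
  set q := s.m / s.k
  have hJ : ∀ t, Jval x (layered s t).blocks s.k =
      ((recurring x s.k q (q + t)).card : ℝ) / ((corners d q (q + t)).card : ℝ) :=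
    fun t => jval_eq x s.k q t s.blocks hb
  have hc : ∀ t, 1 ≤ t → (0 : ℝ) < ((corners d q (q + t)).card : ℝ) := by
    intro t ht
    rw [card_corners (by omega), sub_pos]
    exact pow_lt_pow_left₀ (by exact_mod_cast (by omega : q < q + t)) (Nat.cast_nonneg _) (by omega)
  have hex : ∃ t, φ ≤ Jval x (layered s t).blocks s.k := by
    obtain ⟨t, ht1, ht⟩ := exists_recurrence hd hφ x s.k q
    refine ⟨t, ?_⟩
    rw [hJ, le_div_iff₀ (hc t ht1)]
    exact ht
  set T := Nat.find hex
  have hT : φ ≤ Jval x (layered s T).blocks s.k := Nat.find_spec hex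
  have hmin : ∀ t < T, ¬ φ ≤ Jval x (layered s t).blocks s.k := fun t ht => Nat.find_min hex ht
  have hT1 : 1 ≤ T := by
    by_contra h0
    have h1 : T = 0 := by omega
    rw [h1, hJ] at hT
    simp [corners] at hT
    linarith
  have hiter : ∀ t ≤ T, iter φ x (a + t) = layered s t := by
    intro t
    induction t with
    | zero => intro _; simp [layered, layerList, s]
    | succ t ih =>
      intro ht
      rw [← add_assoc, iter, ih (by omega)]
      exact step_layered hk (hmin t (by omega))
  have hnext : iter φ x (a + T + 1) = { layered s T with k := s.k + 1 } := by
    rw [iter, hiter T le_rfl, step, if_pos (show φ ≤ Jval x _ (layered s T).k from hT)]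
    rfl
  refine ⟨a + T + 1, q + T, by omega, ⟨by omega, ?_, ?_⟩, ?_, ?_, ?_⟩
  · rwa [hJ, le_div_iff₀ (hc T hT1)] at hT
  · intro p' h1 h2
    have h3 := hmin (p' - q) (by omega)
    rw [hJ, le_div_iff₀ (hc _ (by omega)), not_le, show q + (p' - q) = p' by omega] at h3
    exact h3
  · rw [hnext]
  · rw [hnext]
    simp only [layered]
    rw [if_neg (by omega)]
  · intro b
    rw [hnext]
    simp only [layered, List.mem_append, List.mem_map, mem_layerList]
    simp only [eq_comm, q]

lemma exists_phases (hd : 1 ≤ d) {φ : ℝ} (hφ0 : 0 < φ) (hφ : φ < 1) (x : Config A d) :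
    ∃ q p : ℕ → ℕ, p 0 = 0 ∧ (∀ k, q (k + 1) = k * p k / (k + 1)) ∧
      (∀ k, 1 ≤ k → IsPhase φ x k (q k) (p k)) ∧
      ∀ k, 1 ≤ k → ∀ c, (∃ t, (c, k) ∈ (iter φ x t).blocks) ↔
        ∃ r ∈ corners d (q k) (p k), c = corner k r := by
  set Ok : ℕ → ℕ → Prop := fun k a => (iter φ x a).k = k + 1 ∧ ∀ b ∈ (iter φ x a).blocks, b.2 ≤ k
  have hstep : ∀ k a, ∃ t p, Ok k a → Ok (k + 1) t ∧ a < t ∧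
      IsPhase φ x (k + 1) ((iter φ x a).m / (k + 1)) p ∧
      (iter φ x t).m = (k + 1) * p ∧
      ∀ b, b ∈ (iter φ x t).blocks ↔ b ∈ (iter φ x a).blocks ∨
        ∃ r ∈ corners d ((iter φ x a).m / (k + 1)) p, b = (corner (k + 1) r, k + 1) := by
    intro k a
    by_cases h : Ok k a
    swap
    · exact ⟨0, 0, fun h' => absurd h' h⟩
    obtain ⟨hk, hb⟩ := h
    obtain ⟨t, p, h1, h2, h3, h4, h5⟩ := exists_phase_end hd hφ0 hφ x a (by omega)
      fun b hb' => by have := hb b hb'; omega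
    rw [hk] at h2 h3 h4
    simp only [hk] at h5
    refine ⟨t, p, fun _ => ⟨⟨h3, fun b hb' => ?_⟩, h1, h2, h4, h5⟩⟩
    rcases (h5 b).1 hb' with h | ⟨r, _, rfl⟩
    · exact (hb b h).trans (Nat.le_succ k)
    · exact le_rfl
  choose f g hfg using hstep
  set τ : ℕ → ℕ := fun k => Nat.rec 0 (fun k a => f k a) k
  have hτ : ∀ k, τ (k + 1) = f k (τ k) := fun k => rfl
  have hOk : ∀ k, Ok k (τ k) := by
    intro k
    induction k with
    | zero => exact ⟨rfl, by simp [τ, iter]⟩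
    | succ k ih => rw [hτ]; exact (hfg k _ ih).1
  have hmain := fun k => (hfg k (τ k) (hOk k)).2
  simp only [← hτ] at hmain
  set p : ℕ → ℕ := fun k => Nat.rec 0 (fun k _ => g k (τ k)) k
  have hp : ∀ k, p (k + 1) = g k (τ k) := fun k => rfl
  simp only [← hp] at hmain
  have hm : ∀ k, (iter φ x (τ k)).m = k * p k := by
    intro k
    cases k with
    | zero => simp [τ, iter]
    | succ k => exact (hmain k).2.2.1
  simp only [hm] at hmain
  set q : ℕ → ℕ := fun k => (k - 1) * p (k - 1) / k
  have hq : ∀ k, q (k + 1) = k * p k / (k + 1) := fun k => rfl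
  simp only [← hq] at hmain
  have hblocks : ∀ K b, b ∈ (iter φ x (τ K)).blocks ↔ ∃ k, 1 ≤ k ∧ k ≤ K ∧
      ∃ r ∈ corners d (q k) (p k), b = (corner k r, k) := by
    intro K b
    induction K with
    | zero =>
      simp only [τ, iter, List.not_mem_nil, false_iff]
      rintro ⟨k, h1, h2, _⟩
      omega
    | succ K ih =>
      rw [(hmain K).2.2.2, ih]
      constructor
      · rintro (⟨k, h1, h2, h3⟩ | h)
        · exact ⟨k, h1, by omega, h3⟩
        · exact ⟨K + 1, by omega, le_rfl, h⟩
      · rintro ⟨k, h1, h2, h3⟩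
        rcases h2.lt_or_eq with h4 | rfl
        · exact Or.inl ⟨k, h1, by omega, h3⟩
        · exact Or.inr h3
  have hmono : ∀ t t', t ≤ t' → ∀ b ∈ (iter φ x t).blocks, b ∈ (iter φ x t').blocks := by
    intro t t' h
    induction t', h using Nat.le_induction with
    | base => exact fun b hb => hb
    | succ n _ ih =>
      intro b hb
      have := ih b hb
      rw [iter, step]
      split_ifs
      · exact this
      · exact List.mem_append_left _ this
  have hτmono : StrictMono τ := strictMono_nat_of_lt_succ fun k => (hmain k).1
  refine ⟨q, p, rfl, hq, fun k hk => ?_, fun k hk c => ⟨?_, ?_⟩⟩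
  · obtain ⟨k, rfl⟩ := Nat.exists_eq_add_of_le' hk
    exact (hmain k).2.1
  · rintro ⟨t, ht⟩
    obtain ⟨k', _, _, r, hr, h⟩ := (hblocks t _).1 (hmono t _ (hτmono.id_le t) _ ht)
    obtain ⟨hc, hk'⟩ := Prod.mk.inj h
    subst hk'
    exact ⟨r, hr, hc⟩
  · rintro ⟨r, hr, rfl⟩
    exact ⟨τ k, (hblocks k _).2 ⟨k, hk, le_rfl, r, hr, rfl⟩⟩

/-- The region of the phase with block size `k`. -/
def region (d k q p : ℕ) : Finset (Site d) := cube d (k * p) \ cube d (k * q)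

lemma mem_region {k q p : ℕ} (hk : 1 ≤ k) {i : Site d} :
    i ∈ region d k q p ↔ (fun j => i j / k) ∈ corners d q p := by
  simp only [region, corners, Finset.mem_sdiff, mem_cube, Nat.div_lt_iff_lt_mul hk, mul_comm]

lemma mem_box_corner {k : ℕ} (hk : 1 ≤ k) {i r : Site d} :
    i ∈ box (corner k r) k ↔ r = fun j => i j / k := by
  rw [mem_box, funext_iff]
  refine forall_congr' fun j => ?_
  rw [eq_comm, Nat.div_eq_iff hk]
  simp only [corner]
  rw [mul_comm]
  omega

lemma lregion_eq {φ : ℝ} {x : Config A d} {k q p : ℕ} (hk : 1 ≤ k)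
    (h : ∀ c, (∃ t, (c, k) ∈ (iter φ x t).blocks) ↔ ∃ r ∈ corners d q p, c = corner k r) :
    Lregion φ x k = region d k q p := by
  ext i
  rw [Finset.mem_coe, mem_region hk]
  constructor
  · rintro ⟨t, ⟨c, j⟩, hb, hj, hi⟩
    obtain rfl : j = k := hj
    obtain ⟨r, hr, rfl⟩ := (h c).1 ⟨t, hb⟩
    rwa [← (mem_box_corner hk).1 (mem_box.2 hi)]
  · intro hi
    obtain ⟨t, ht⟩ := (h _).2 ⟨_, hi, rfl⟩
    exact ⟨t, _, ht, rfl, mem_box.1 ((mem_box_corner hk).2 rfl)⟩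

open scoped Classical in
lemma mk_eq {φ : ℝ} {x : Config A d} {k q p : ℕ}
    (h : ∀ c, (∃ t, (c, k) ∈ (iter φ x t).blocks) ↔ ∃ r ∈ corners d q p, c = corner k r) :
    Mk φ x k = ((corners d q p).image fun r => wordAt x k (corner k r)).card := by
  rw [Mk, ← Set.ncard_coe_finset]
  congr 1
  ext w
  simp only [Set.mem_ofPred_eq, Finset.coe_image, Set.mem_image, Finset.mem_coe]
  constructor
  · rintro ⟨t, ⟨c, j⟩, hb, hj, rfl⟩
    obtain rfl : j = k := hj
    obtain ⟨r, hr, rfl⟩ := (h c).1 ⟨t, hb⟩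
    exact ⟨r, hr, rfl⟩
  · rintro ⟨r, hr, rfl⟩
    obtain ⟨t, ht⟩ := (h _).2 ⟨r, hr, rfl⟩
    exact ⟨t, _, ht, rfl, rfl⟩

/-! ### Upper bound on the parsed volume -/

open scoped Classical in
/-- The words of side `k` with at most `lam * k ^ d` occurrences of patterns outside `S`. -/
noncomputable def sparseWords {R : ℕ} (S : Finset (Word A d R)) (lam : ℝ) (k : ℕ) :
    Finset (Word A d k) :=
  (Set.toFinite ((fun y => wordAt y k 0) '' {y : Config A d |
    (((cube d k).filter fun v => wordAt y R v ∉ S).card : ℝ) ≤ lam * (k : ℝ) ^ d})).toFinset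

lemma pairwiseDisjoint_corner {k : ℕ} (hk : 1 ≤ k) (s : Set (Site d)) :
    s.PairwiseDisjoint fun r => box (corner k r) k := by
  intro r _ r' _ hne
  refine Finset.disjoint_left.2 fun v hv hv' => hne ?_
  rw [(mem_box_corner hk).1 hv, (mem_box_corner hk).1 hv']

lemma box_corner_subset_region {k q p : ℕ} (hk : 1 ≤ k) {r : Site d} (hr : r ∈ corners d q p) :
    box (corner k r) k ⊆ region d k q p := by
  intro v hv
  rw [mem_region hk, ← (mem_box_corner hk).1 hv]
  exact hr

open scoped Classical in
lemma card_sparseWords_le (hA : 2 ≤ A) (hd : 1 ≤ d) {κ : ℝ} (hκ : 0 < κ) :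
    ∃ R₀, ∀ R ≥ R₀, ∃ N₀, ∀ N ≥ N₀, ∀ (a lam : ℝ), 0 ≤ a →
      ∀ S : Finset (Word A d R), (S.card : ℝ) ≤ (A : ℝ) ^ (a * (R : ℝ) ^ d) →
        ((sparseWords S lam N).card : ℝ) ≤ (A : ℝ) ^ ((a + lam + 5 * κ) * (N : ℝ) ^ d) := by
  obtain ⟨R₀, hR₀⟩ := ncard_marked_le (d := d) hA hd hκ
  refine ⟨R₀, fun R hR => ?_⟩
  obtain ⟨J, hJ⟩ := hR₀ R hR
  obtain ⟨N₀, hN₀⟩ := hJ J le_rfl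
  refine ⟨N₀, fun N hN a lam ha S hS => ?_⟩
  have h := hN₀ N hN a 0 0 lam ha ha S hS _ (fun _ => ∅)
    (fun y (hy : y ∈ {y : Config A d |
      (((cube d N).filter fun v => wordAt y R v ∉ S).card : ℝ) ≤ lam * (N : ℝ) ^ d}) =>
      ⟨hy, by simp, by simp, by simp, by simp, by simp⟩) ?_
  · rw [sparseWords, ← Set.ncard_eq_toFinset_card]
    convert h using 3
    ring
  · intro y _ y' _ _ h v hv
    exact h v hv (by simp)

open scoped Classical in
lemma card_notMem_sparseWords_le {R : ℕ} (S : Finset (Word A d R)) {x : Config A d} {lam lam' : ℝ}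
    (hlam' : 0 < lam')
    (hx : ∀ n : ℕ, (((cube d n).filter fun v => wordAt x R v ∉ S).card : ℝ) ≤ lam * (n : ℝ) ^ d)
    {k : ℕ} (hk : 1 ≤ k) (q p : ℕ) :
    (((corners d q p).filter fun r => wordAt x k (corner k r) ∉ sparseWords S lam' k).card : ℝ) ≤
      lam / lam' * (p : ℝ) ^ d := by
  set B := (corners d q p).filter fun r => wordAt x k (corner k r) ∉ sparseWords S lam' k
  have hkd : (0 : ℝ) < (k : ℝ) ^ d := by positivity
  have h1 : ∀ r ∈ B, lam' * (k : ℝ) ^ d ≤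
      (((box (corner k r) k).filter fun v => wordAt x R v ∉ S).card : ℝ) := by
    intro r hr
    have h2 := (Finset.mem_filter.1 hr).2
    rw [sparseWords, Set.Finite.mem_toFinset, Set.mem_image] at h2
    have h3 : ¬ (((cube d k).filter fun v => wordAt (shift (corner k r) x) R v ∉ S).card : ℝ) ≤
        lam' * (k : ℝ) ^ d := fun h => h2 ⟨shift (corner k r) x, h, by simp [wordAt_shift]⟩
    rw [not_le] at h3
    refine h3.le.trans (Nat.cast_le.2 ?_)
    rw [box_eq_map, Finset.filter_map, Finset.card_map]
    refine (Finset.card_le_card fun v hv => ?_)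
    simpa [wordAt_shift, add_comm] using hv
  have h2 : (B.biUnion fun r => (box (corner k r) k).filter fun v => wordAt x R v ∉ S) ⊆
      (cube d (k * p)).filter fun v => wordAt x R v ∉ S := by
    intro v hv
    obtain ⟨r, hr, hv⟩ := Finset.mem_biUnion.1 hv
    rw [Finset.mem_filter] at hv ⊢
    exact ⟨(Finset.mem_sdiff.1 (box_corner_subset_region hk (Finset.mem_filter.1 hr).1 hv.1)).1,
      hv.2⟩
  have h3 := Finset.card_le_card h2
  rw [Finset.card_biUnion fun r hr r' hr' hne => (pairwiseDisjoint_corner hk (B : Set (Site d))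
    hr hr' hne).mono (Finset.filter_subset _ _) (Finset.filter_subset _ _)] at h3
  have h4 : (B.card : ℝ) * (lam' * (k : ℝ) ^ d) ≤ lam * ((k * p : ℕ) : ℝ) ^ d := by
    refine le_trans ?_ ((Nat.cast_le.2 h3).trans (hx (k * p)))
    rw [← nsmul_eq_mul]
    push_cast
    exact Finset.card_nsmul_le_sum _ _ _ h1
  push_cast at h4
  rw [mul_pow] at h4
  rw [div_mul_eq_mul_div, le_div_iff₀ hlam']
  refine le_of_mul_le_mul_right ?_ hkd
  calc _ = (B.card : ℝ) * (lam' * (k : ℝ) ^ d) := by ring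
    _ ≤ _ := h4
    _ = _ := by ring

open scoped Classical in
lemma IsPhase.card_le {φ : ℝ} {x : Config A d} {k q p : ℕ} (h : IsPhase φ x k q p)
    (hk : 1 ≤ k) {R : ℕ} (S : Finset (Word A d R)) {lam lam' : ℝ} (hlam : 0 ≤ lam)
    (hlam' : 0 < lam')
    (hx : ∀ n : ℕ, (((cube d n).filter fun v => wordAt x R v ∉ S).card : ℝ) ≤
      lam * (n : ℝ) ^ d) :
    (1 - φ) * (((p - 1 : ℕ) : ℝ) ^ d - (q : ℝ) ^ d) ≤
      ((sparseWords S lam' k).card : ℝ) + lam / lam' * ((p - 1 : ℕ) : ℝ) ^ d := by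
  have hlt := h.lt
  rcases (Nat.le_sub_one_of_lt hlt).eq_or_lt with heq | hlt'
  · rw [← heq, sub_self, mul_zero]
    positivity
  have h1 := h.recurring_lt (p - 1) hlt' (by omega)
  rw [card_corners hlt'.le] at h1
  set U := corners d q (p - 1) \ recurring x k q (p - 1)
  have hsub : recurring x k q (p - 1) ⊆ corners d q (p - 1) := Finset.filter_subset _ _
  have hU : (U.card : ℝ) = (((p - 1 : ℕ) : ℝ) ^ d - (q : ℝ) ^ d) -
      ((recurring x k q (p - 1)).card : ℝ) := by
    rw [Finset.card_sdiff_of_subset hsub, Nat.cast_sub (Finset.card_le_card hsub),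
      card_corners hlt'.le]
  have h3 : (U.filter fun r => wordAt x k (corner k r) ∈ sparseWords S lam' k).card ≤
      (sparseWords S lam' k).card := by
    refine Finset.card_le_card_of_injOn (fun r => wordAt x k (corner k r))
      (fun r hr => (Finset.mem_filter.1 hr).2) ?_
    intro r hr r' hr' hw
    by_contra hne
    have h4 := Finset.mem_sdiff.1 (Finset.mem_filter.1 hr).1
    have h5 := Finset.mem_sdiff.1 (Finset.mem_filter.1 hr').1
    exact h4.2 (Finset.mem_filter.2 ⟨h4.1, r', h5.1, Ne.symm hne, hw.symm⟩)
  have h4 : (U.filter fun r => ¬ wordAt x k (corner k r) ∈ sparseWords S lam' k).card ≤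
      ((corners d q (p - 1)).filter fun r =>
        wordAt x k (corner k r) ∉ sparseWords S lam' k).card :=
    Finset.card_le_card (Finset.filter_subset_filter _ Finset.sdiff_subset)
  have h5 := Finset.card_filter_add_card_filter_not (s := U)
    fun r => wordAt x k (corner k r) ∈ sparseWords S lam' k
  have h6 := card_notMem_sparseWords_le S hlam' hx hk q (p - 1)
  have h7 : (U.card : ℝ) ≤
      ((sparseWords S lam' k).card : ℝ) + lam / lam' * ((p - 1 : ℕ) : ℝ) ^ d := by
    refine le_trans ?_ (add_le_add_right h6 _)
    exact_mod_cast (by omega : U.card ≤ _)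
  linarith

lemma le_of_affine_recursion {u e : ℕ → ℝ} {b : ℝ} (hb : 1 ≤ b)
    (he : Monotone e) (he0 : ∀ j, 0 ≤ e j) {j₀ : ℕ}
    (h : ∀ j ≥ j₀, u (j + 1) ≤ b * (u j + e (j + 1))) (n : ℕ) :
    u (j₀ + n) ≤ b ^ n * (u j₀ + n * e (j₀ + n)) := by
  induction n with
  | zero => simp
  | succ n ih =>
    have h1 := h (j₀ + n) (by omega)
    have h2 : e (j₀ + n) ≤ e (j₀ + (n + 1)) := he (by omega)
    have hbn : 1 ≤ b ^ n := one_le_pow₀ hb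
    have h3 : u (j₀ + n) ≤ b ^ n * (u j₀ + n * e (j₀ + (n + 1))) := by
      refine ih.trans ?_
      gcongr
    have h4 : e (j₀ + (n + 1)) ≤ b ^ n * e (j₀ + (n + 1)) := le_mul_of_one_le_left (he0 _) hbn
    calc u (j₀ + (n + 1)) ≤ b * (u (j₀ + n) + e (j₀ + (n + 1))) := h1
      _ ≤ b * (b ^ n * (u j₀ + n * e (j₀ + (n + 1))) + b ^ n * e (j₀ + (n + 1))) := by gcongr
      _ = _ := by push_cast; ring

lemma eventually_poly_le (hA : 2 ≤ A) {δ : ℝ} (hδ : 0 < δ) (C : ℝ) (m : ℕ) :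
    ∀ᶠ l : ℕ in atTop, C * (l : ℝ) ^ m ≤ (A : ℝ) ^ (δ * (l : ℝ)) := by
  have hA1 : (1 : ℝ) < A := by exact_mod_cast (by omega : 1 < A)
  have hA0 : (0 : ℝ) < A := by linarith
  have hlog : 0 < Real.log A := Real.log_pos hA1
  have h := (Real.tendsto_pow_mul_exp_neg_atTop_nhds_zero m).comp
    (tendsto_natCast_atTop_atTop.const_mul_atTop (show 0 < Real.log A * δ by positivity))
  have h2 := (h.const_mul (C / (Real.log A * δ) ^ m)).eventually
    (gt_mem_nhds (show C / (Real.log A * δ) ^ m * 0 < 1 by simp))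
  filter_upwards [h2] with l hl
  simp only [Function.comp_apply] at hl
  rw [Real.rpow_def_of_pos hA0]
  have h3 : C / (Real.log A * δ) ^ m * ((Real.log A * δ * l) ^ m * Real.exp (-(Real.log A * δ * l)))
      = C * (l : ℝ) ^ m * Real.exp (-(Real.log A * (δ * l))) := by
    rw [mul_pow (Real.log A * δ) (l : ℝ)]
    field_simp
  rw [h3, Real.exp_neg, ← div_eq_mul_inv, div_lt_one (Real.exp_pos _)] at hl
  exact hl.le

open scoped Classical in
lemma eventually_volume_le (hA : 2 ≤ A) (hd : 1 ≤ d) {φ : ℝ} (hφ : φ < 1) {h δ : ℝ} (hh : 0 ≤ h)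
    (hδ : 0 < δ) : ∃ lam : ℝ, 0 < lam ∧ ∃ R₀ : ℕ, ∀ R ≥ R₀, ∀ S : Finset (Word A d R),
      (S.card : ℝ) ≤ (A : ℝ) ^ ((h + δ / 8) * (R : ℝ) ^ d) → ∀ x : Config A d,
      (∀ n : ℕ, (((cube d n).filter fun v => wordAt x R v ∉ S).card : ℝ) ≤ lam * (n : ℝ) ^ d) →
      ∀ q p : ℕ → ℕ, (∀ k, q (k + 1) = k * p k / (k + 1)) →
        (∀ k, 1 ≤ k → IsPhase φ x k (q k) (p k)) →
        ∀ᶠ l : ℕ in atTop, ((l * p l : ℕ) : ℝ) ^ d ≤ (A : ℝ) ^ ((h + δ) * (l : ℝ) ^ d) := by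
  have hA1 : (1 : ℝ) < A := by exact_mod_cast (by omega : 1 < A)
  have hA0 : (0 : ℝ) < A := by linarith
  set b : ℝ := (A : ℝ) ^ (δ / 4)
  have hb : 1 < b := Real.one_lt_rpow hA1 (by positivity)
  set η : ℝ := (b - 1) / (b + 1)
  have hη : 0 < η := div_pos (by linarith) (by linarith)
  have hbη : b * (1 - η) = 1 + η := by
    have : b + 1 ≠ 0 := by linarith
    simp only [η]; field_simp; ring
  have hη1 : 0 < 1 - η := by
    by_contra h0
    nlinarith
  obtain ⟨R₀, hR₀⟩ := card_sparseWords_le (d := d) hA hd (show 0 < δ / 20 by positivity)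
  obtain ⟨P₀, hP₀⟩ := eventually_atTop.1 (eventually_enlarge_le d 1 hη)
  refine ⟨(1 - φ) * η * (δ / 8), mul_pos (mul_pos (by linarith) hη) (by positivity), R₀,
    fun R hR S hS x hx q p hq hph => ?_⟩
  obtain ⟨N₀, hN₀⟩ := hR₀ R hR
  have hbdry : ∀ n : ℕ,
      ((n + 1 : ℕ) : ℝ) ^ d ≤ (1 + η) * (n : ℝ) ^ d + ((P₀ + 1 : ℕ) : ℝ) ^ d := by
    intro n
    rcases le_total P₀ n with hn | hn
    · have h1 := hP₀ n hn
      have h2 : (0 : ℝ) ≤ ((P₀ + 1 : ℕ) : ℝ) ^ d := by positivity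
      linarith
    · have h1 : ((n + 1 : ℕ) : ℝ) ^ d ≤ ((P₀ + 1 : ℕ) : ℝ) ^ d := by gcongr
      have h2 : 0 ≤ (1 + η) * (n : ℝ) ^ d := by positivity
      linarith
  set Ex : ℝ := h + δ / 2
  set C : ℝ := 1 / (1 - φ) + ((P₀ + 1 : ℕ) : ℝ) ^ d
  have hφ' : 0 < 1 - φ := by linarith
  have hC : 0 ≤ C := by positivity
  set e : ℕ → ℝ := fun j => C * (j : ℝ) ^ d * (A : ℝ) ^ (Ex * (j : ℝ) ^ d)
  set u : ℕ → ℝ := fun j => ((j * p j : ℕ) : ℝ) ^ d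
  have hEx : 0 ≤ Ex := by positivity
  have he : Monotone e := by
    intro i j hij
    simp only [e]
    have : (i : ℝ) ≤ j := by exact_mod_cast hij
    gcongr
    exact hA1.le
  have hrec : ∀ j ≥ N₀, u (j + 1) ≤ b * (u j + e (j + 1)) := by
    intro j hj
    have hphj := hph (j + 1) (by omega)
    have h1 := hphj.card_le (by omega) S (lam' := δ / 8) (by positivity) (by positivity) hx
    have h2 := hN₀ (j + 1) (by omega) (h + δ / 8) (δ / 8) (by positivity) S hS
    have h3 : h + δ / 8 + δ / 8 + 5 * (δ / 20) = Ex := by simp only [Ex]; ring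
    rw [h3] at h2
    have h4 : (1 - φ) * η * (δ / 8) / (δ / 8) = (1 - φ) * η := by field_simp
    rw [h4] at h1
    obtain ⟨p', hp'⟩ : ∃ p', p (j + 1) = p' + 1 := ⟨p (j + 1) - 1, by have := hphj.lt; omega⟩
    rw [hp', Nat.add_sub_cancel] at h1
    set W : ℝ := (A : ℝ) ^ (Ex * ((j + 1 : ℕ) : ℝ) ^ d)
    have hW : 1 ≤ W := Real.one_le_rpow hA1.le (by positivity)
    have h5 : (1 - η) * (p' : ℝ) ^ d ≤ W / (1 - φ) + (q (j + 1) : ℝ) ^ d := by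
      rw [← sub_le_iff_le_add, le_div_iff₀ hφ']
      linarith
    have h6 : (((j + 1) * q (j + 1) : ℕ) : ℝ) ^ d ≤ u j := by
      have : (j + 1) * q (j + 1) ≤ j * p j := by rw [hq]; exact Nat.mul_div_le _ _
      simp only [u]
      gcongr
    have h7 := hbdry p'
    set J : ℝ := ((j + 1 : ℕ) : ℝ) ^ d
    have hJ : 0 ≤ J := by positivity
    have h8 : u (j + 1) = J * ((p' + 1 : ℕ) : ℝ) ^ d := by
      simp only [u, hp', J]
      push_cast
      rw [mul_pow]
    have h9 : (((j + 1) * q (j + 1) : ℕ) : ℝ) ^ d = J * (q (j + 1) : ℝ) ^ d := by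
      simp only [J]
      push_cast
      rw [mul_pow]
    have h10 : (1 + η) * (p' : ℝ) ^ d ≤ b * (W / (1 - φ) + (q (j + 1) : ℝ) ^ d) := by
      rw [← hbη, mul_assoc]
      gcongr
    have h11 : ((P₀ + 1 : ℕ) : ℝ) ^ d ≤ b * (((P₀ + 1 : ℕ) : ℝ) ^ d * W) := by
      have h0 : (0 : ℝ) ≤ ((P₀ + 1 : ℕ) : ℝ) ^ d := by positivity
      have h1 : ((P₀ + 1 : ℕ) : ℝ) ^ d ≤ ((P₀ + 1 : ℕ) : ℝ) ^ d * W := le_mul_of_one_le_right h0 hW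
      exact h1.trans (le_mul_of_one_le_left (by positivity) hb.le)
    calc u (j + 1) = J * ((p' + 1 : ℕ) : ℝ) ^ d := h8
      _ ≤ J * (b * (W / (1 - φ) + (q (j + 1) : ℝ) ^ d) + b * (((P₀ + 1 : ℕ) : ℝ) ^ d * W)) := by
          gcongr; linarith
      _ = b * (J * (q (j + 1) : ℝ) ^ d + C * J * W) := by simp only [C]; ring
      _ ≤ b * (u j + e (j + 1)) := by
          rw [← h9]
          have : e (j + 1) = C * J * W := rfl
          rw [this]
          gcongr
  have hgrow := le_of_affine_recursion hb.le he
    (fun j => by positivity) hrec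
  have hpoly := eventually_poly_le hA (show 0 < δ / 4 by positivity) (u N₀ + C) (d + 1)
  filter_upwards [hpoly, eventually_ge_atTop N₀, eventually_ge_atTop 1] with l hl hlN hl1
  obtain ⟨n, rfl⟩ := Nat.exists_eq_add_of_le hlN
  refine (hgrow n).trans ?_
  set l := N₀ + n
  have hl1' : (1 : ℝ) ≤ l := by exact_mod_cast hl1
  have hld := le_pow_of_pos_dim hd l
  have hu0 : 0 ≤ u N₀ := by positivity
  set W : ℝ := (A : ℝ) ^ (Ex * (l : ℝ) ^ d)
  have hW : 1 ≤ W := Real.one_le_rpow hA1.le (by positivity)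
  have h1 : b ^ n ≤ (A : ℝ) ^ (δ / 4 * (l : ℝ) ^ d) := by
    rw [← Real.rpow_natCast, ← Real.rpow_mul hA0.le]
    refine Real.rpow_le_rpow_of_exponent_le hA1.le ?_
    have : (n : ℝ) ≤ l := by exact_mod_cast (by omega : n ≤ l)
    exact mul_le_mul_of_nonneg_left (this.trans hld) (by positivity)
  have h2 : u N₀ + n * e l ≤ (A : ℝ) ^ (δ / 4 * (l : ℝ) ^ d) * W := by
    have h3 : u N₀ + n * e l ≤ (u N₀ + C) * (l : ℝ) ^ (d + 1) * W := by
      have h4 : u N₀ ≤ u N₀ * ((l : ℝ) ^ (d + 1) * W) :=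
        le_mul_of_one_le_right hu0 (one_le_mul_of_one_le_of_one_le (one_le_pow₀ hl1') hW)
      have h5 : n * e l ≤ l * e l := by
        have : (n : ℝ) ≤ l := by exact_mod_cast (by omega : n ≤ l)
        have : 0 ≤ e l := by positivity
        gcongr
      have h6 : l * e l = C * (l : ℝ) ^ (d + 1) * W := by simp only [e, W]; ring
      linarith
    refine h3.trans (mul_le_mul_of_nonneg_right (hl.trans ?_) (by linarith))
    refine Real.rpow_le_rpow_of_exponent_le hA1.le ?_
    gcongr
  calc b ^ n * (u N₀ + n * e l) ≤ (A : ℝ) ^ (δ / 4 * (l : ℝ) ^ d) *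
        ((A : ℝ) ^ (δ / 4 * (l : ℝ) ^ d) * W) := by
        have : 0 ≤ u N₀ + n * e l := by positivity
        gcongr
    _ = _ := by
        rw [← Real.rpow_add hA0, ← Real.rpow_add hA0]
        congr 1
        simp only [Ex]
        ring

/-! ### Words with repeated blocks -/

/-- Intervals `(a j, b j]` which chain up contain a disjoint subfamily covering half of their
union. -/
lemma exists_disjoint_intervals {a b : ℕ → ℕ} (hab : ∀ j, a (j + 1) ≤ b j) {f : ℕ → ℝ}
    (hf : Monotone f) {J l : ℕ} (hJl : J < l) :
    ∃ S : Finset ℕ, (∀ j ∈ S, J < j ∧ j ≤ l) ∧ (∀ i ∈ S, ∀ j ∈ S, i < j → b i ≤ a j) ∧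
      (f (b l) - f (b J)) / 2 ≤ ∑ j ∈ S, (f (b j) - f (a j)) := by
  classical
  have key : ∀ l, J < l → ∃ S S' : Finset ℕ, (∀ j ∈ S, J < j ∧ j ≤ l) ∧
      (∀ j ∈ S', J < j ∧ j < l) ∧ (∀ i ∈ S, ∀ j ∈ S, i < j → b i ≤ a j) ∧
      (∀ i ∈ S', ∀ j ∈ S', i < j → b i ≤ a j) ∧
      f (b l) - f (b J) ≤ ∑ j ∈ S, (f (b j) - f (a j)) + ∑ j ∈ S', (f (b j) - f (a j)) := by
    intro l
    induction l using Nat.strong_induction_on with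
    | _ l ih =>
      intro hJl
      by_cases h : a l ≤ b J
      · refine ⟨{l}, ∅, by simp [hJl], by simp, ?_, by simp, ?_⟩
        · intro i hi j hj hij
          rw [Finset.mem_singleton] at hi hj
          omega
        · have := hf h
          simp only [Finset.sum_singleton, Finset.sum_empty]
          linarith
      · have hex : ∃ i, J < i ∧ a l ≤ b i := by
          have h1 : a l ≤ b (l - 1) := by
            have := hab (l - 1)
            rwa [Nat.sub_add_cancel (by omega)] at this
          refine ⟨l - 1, ?_, h1⟩
          rcases (Nat.le_sub_one_of_lt hJl).lt_or_eq with h2 | h2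
          · exact h2
          · rw [← h2] at h1
            exact absurd h1 h
        obtain ⟨hi1, hi2⟩ := Nat.find_spec hex
        have hmin : ∀ i, i < Nat.find hex → J < i → b i < a l := fun i hi hJi => by
          have := Nat.find_min hex hi
          push Not at this
          exact this hJi
        have hil : Nat.find hex < l := by
          have h1 : a l ≤ b (l - 1) := by
            have := hab (l - 1)
            rwa [Nat.sub_add_cancel (by omega)] at this
          by_contra hle
          rcases (Nat.le_sub_one_of_lt hJl).lt_or_eq with h2 | h2
          · have := hmin (l - 1) (by omega) h2
            omega
          · rw [← h2] at h1
            exact h h1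
        generalize Nat.find hex = i at hi1 hi2 hmin hil
        obtain ⟨S, S', hS, hS', hd, hd', hsum⟩ := ih i hil hi1
        have hl : l ∉ S' := fun hl => by have := hS' l hl; omega
        refine ⟨insert l S', S, ?_, ?_, ?_, hd, ?_⟩
        · intro j hj
          rcases Finset.mem_insert.1 hj with rfl | hj
          · exact ⟨hJl, le_rfl⟩
          · have := hS' j hj
            omega
        · intro j hj
          have := hS j hj
          omega
        · intro i' hi' j hj hij
          rcases Finset.mem_insert.1 hi' with h1 | h1
          · rcases Finset.mem_insert.1 hj with h2 | h2
            · omega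
            · have := hS' j h2
              omega
          · rcases Finset.mem_insert.1 hj with h2 | h2
            · rw [h2]
              exact (hmin i' (hS' i' h1).2 (hS' i' h1).1).le
            · exact hd' i' h1 j h2 hij
        · rw [Finset.sum_insert hl]
          have := hf hi2
          linarith
  obtain ⟨S, S', hS, hS', hd, hd', hsum⟩ := key l hJl
  rcases le_total (∑ j ∈ S, (f (b j) - f (a j))) (∑ j ∈ S', (f (b j) - f (a j))) with h | h
  · exact ⟨S', fun j hj => ⟨(hS' j hj).1, (hS' j hj).2.le⟩, hd', by linarith⟩
  · exact ⟨S, hS, hd, by linarith⟩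

/-- A numbering of the elements of a finite set by positive integers. -/
noncomputable def num {ι : Type*} (s : Finset ι) : ι → ℕ := (exists_numbering s).choose

lemma num_injOn {ι : Type*} (s : Finset ι) : Set.InjOn (num s) s :=
  (exists_numbering s).choose_spec.1

lemma num_mem {ι : Type*} {s : Finset ι} {a : ι} (ha : a ∈ s) : 1 ≤ num s a ∧ num s a ≤ s.card :=
  (exists_numbering s).choose_spec.2 a ha

/-- Every block of `F` with nonzero label repeats the word of the block of the same side with
label zero whose number is that label. -/
def IsCopied (F : Finset (Site d × ℕ × ℕ)) (y : Config A d) : Prop :=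
  ∀ b ∈ F, b.2.2 ≠ 0 → ∃ b' ∈ F.filter fun b' => b'.2.2 = 0 ∧ b'.2.1 = b.2.1,
    b.2.2 = num (F.filter fun b' => b'.2.2 = 0 ∧ b'.2.1 = b.2.1) b' ∧
    wordAt y b.2.1 b.1 = wordAt y b.2.1 b'.1

lemma IsCopied.eqOn {F : Finset (Site d × ℕ × ℕ)} {y y' : Config A d} (hy : IsCopied F y)
    (hy' : IsCopied F y') {N : ℕ} (hsub : ∀ b ∈ F, box b.1 b.2.1 ⊆ cube d N)
    (hdisj : (F : Set (Site d × ℕ × ℕ)).PairwiseDisjoint fun b => box b.1 b.2.1)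
    (h : ∀ v ∈ cube d N, (∀ b ∈ F, b.2.2 ≠ 0 → v ∉ box b.1 b.2.1) → y v = y' v) :
    ∀ v ∈ cube d N, y v = y' v := by
  intro v hv
  by_cases hvb : ∀ b ∈ F, b.2.2 ≠ 0 → v ∉ box b.1 b.2.1
  · exact h v hv hvb
  push Not at hvb
  obtain ⟨b, hb, hb0, hvb⟩ := hvb
  obtain ⟨c, hc, hbc, hw⟩ := hy b hb hb0
  obtain ⟨c', hc', hbc', hw'⟩ := hy' b hb hb0
  obtain rfl : c = c' := num_injOn _ (Finset.mem_coe.2 hc) (Finset.mem_coe.2 hc') (hbc ▸ hbc')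
  obtain ⟨hcF, hc0, hcb⟩ := Finset.mem_filter.1 hc
  have hcw : wordAt y b.2.1 c.1 = wordAt y' b.2.1 c.1 := by
    refine wordAt_eq_iff_box.2 fun u hu => ?_
    rw [← hcb] at hu
    refine h u (hsub c hcF hu) fun e he he0 hue => ?_
    have hne : c ≠ e := fun hce => he0 (hce ▸ hc0)
    exact Finset.disjoint_left.1 (hdisj hcF he hne) hu hue
  exact wordAt_eq_iff_box.1 (hw.trans (hcw.trans hw'.symm)) v hvb

open scoped Classical in
lemma exists_representatives (x : Config A d) (k q p : ℕ) :
    ∃ ψ : Site d → Site d,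
      (∀ r ∈ corners d q p, ψ r ∈ corners d q p ∧
        wordAt x k (corner k (ψ r)) = wordAt x k (corner k r) ∧ ψ (ψ r) = ψ r) ∧
      ((corners d q p).filter fun r => ψ r = r).card ≤
        ((corners d q p).image fun r => wordAt x k (corner k r)).card ∧
      (recurring x k q p).card ≤ 2 * ((corners d q p).filter fun r => ψ r ≠ r).card := by
  set U := corners d q p
  set w : Site d → Word A d k := fun r => wordAt x k (corner k r)
  set ψ : Site d → Site d := fun r => Function.invFunOn w U (w r)
  have h1 : ∀ r ∈ U, ψ r ∈ U ∧ w (ψ r) = w r := fun r hr =>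
    Function.invFunOn_pos (⟨r, hr, rfl⟩ : ∃ a ∈ (U : Set (Site d)), w a = w r)
  have h2 : ∀ r r', w r = w r' → ψ r = ψ r' := fun r r' h => by simp only [ψ, h]
  refine ⟨ψ, fun r hr => ⟨(h1 r hr).1, (h1 r hr).2, h2 _ _ (h1 r hr).2⟩, ?_, ?_⟩
  · refine Finset.card_le_card_of_injOn w (fun r hr => ?_) fun r hr r' hr' h => ?_
    · exact Finset.mem_image_of_mem _ (Finset.mem_filter.1 hr).1
    · rw [← (Finset.mem_filter.1 hr).2, ← (Finset.mem_filter.1 hr').2]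
      exact h2 _ _ h
  · have h3 : recurring x k q p ⊆
        (U.filter fun r => ψ r ≠ r) ∪ (U.filter fun r => ψ r ≠ r).image ψ := by
      intro r hr
      obtain ⟨hr, r', hr', hne, hw⟩ := Finset.mem_filter.1 hr
      by_cases hψ : ψ r = r
      · refine Finset.mem_union_right _ (Finset.mem_image.2 ⟨r', ?_, ?_⟩)
        · refine Finset.mem_filter.2 ⟨hr', fun h => hne ?_⟩
          rw [← h, ← hψ]
          exact h2 _ _ hw
        · rw [h2 r' r hw, hψ]
      · exact Finset.mem_union_left _ (Finset.mem_filter.2 ⟨hr, hψ⟩)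
    have h4 := (Finset.card_le_card h3).trans (Finset.card_union_le _ _)
    have h5 := Finset.card_image_le (s := U.filter fun r => ψ r ≠ r) (f := ψ)
    omega

lemma disjoint_region {i j q p q' p' : ℕ} (h : i * p ≤ j * q') :
    Disjoint (region d i q p) (region d j q' p') :=
  Finset.disjoint_left.2 fun _ hv hv' =>
    (Finset.mem_sdiff.1 hv').2 (cube_mono h (Finset.mem_sdiff.1 hv).1)

open scoped Classical in
/-- A parsing in which all large scales have few distinct words exhibits a marking by copies. -/
lemma exists_marked_isCopied {φ : ℝ} (hφ0 : 0 < φ) {x : Config A d} {q p : ℕ → ℕ}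
    (hq : ∀ k, q (k + 1) = k * p k / (k + 1)) (hph : ∀ k, 1 ≤ k → IsPhase φ x k (q k) (p k))
    {J l R : ℕ} (hJl : J < l) {S : Finset (Word A d R)} {ρ lam : ℝ}
    (hbad : (((cube d (l * p l)).filter fun v => wordAt x R v ∉ S).card : ℝ) ≤
      lam * ((l * p l : ℕ) : ℝ) ^ d)
    (hlow : ∀ j, J < j → (((corners d (q j) (p j)).image fun r => wordAt x j (corner j r)).card : ℝ)
      ≤ (A : ℝ) ^ (ρ * (j : ℝ) ^ d))
    (hvol : 2 * ((J * p J : ℕ) : ℝ) ^ d ≤ ((l * p l : ℕ) : ℝ) ^ d) :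
    ∃ F, Marked (l * p l) J R S ρ (φ / 8) lam x F ∧ IsCopied F x := by
  set b : ℕ → ℕ := fun j => j * p j
  set a : ℕ → ℕ := fun j => j * q j
  have hab : ∀ j, a (j + 1) ≤ b j := fun j => by
    simp only [a, b, hq]
    exact Nat.mul_div_le _ _
  have hb : Monotone b := by
    refine monotone_nat_of_le_succ fun j => ?_
    have h1 := (hph (j + 1) (by omega)).lt
    rw [hq, Nat.div_lt_iff_lt_mul (by omega)] at h1
    simp only [b]
    rw [mul_comm (j + 1)]
    exact h1.le
  obtain ⟨T, hT, hTd, hTs⟩ := exists_disjoint_intervals hab (f := fun n : ℕ => (n : ℝ) ^ d)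
    (fun m n h => pow_le_pow_left₀ (Nat.cast_nonneg _) (Nat.cast_le.2 h) d) hJl
  choose ψ hψ hrep hcopy using fun j => exists_representatives x j (q j) (p j)
  have hT1 : ∀ j ∈ T, 1 ≤ j := fun j hj => by have := hT j hj; omega
  set F0 : ℕ → Finset (Site d × ℕ × ℕ) := fun j =>
    ((corners d (q j) (p j)).filter fun r => ψ j r = r).image fun r => (corner j r, j, 0)
  set lab : ℕ → Site d → ℕ := fun j r =>
    if ψ j r = r then 0 else num (F0 j) (corner j (ψ j r), j, 0)
  set U : Finset (Σ _ : ℕ, Site d) := T.sigma fun j => corners d (q j) (p j)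
  set m : (Σ _ : ℕ, Site d) → Site d × ℕ × ℕ := fun s => (corner s.1 s.2, s.1, lab s.1 s.2)
  have hmem0 : ∀ j, ∀ r ∈ corners d (q j) (p j), (corner j (ψ j r), j, 0) ∈ F0 j := fun j r hr =>
    Finset.mem_image.2 ⟨ψ j r, Finset.mem_filter.2 ⟨(hψ j r hr).1, (hψ j r hr).2.2⟩, rfl⟩
  have hlab0 : ∀ j, ∀ r ∈ corners d (q j) (p j), (lab j r = 0 ↔ ψ j r = r) := by
    intro j r hr
    simp only [lab]
    split_ifs with h
    · simp [h]
    · have := (num_mem (hmem0 j r hr)).1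
      simp only [h, iff_false]
      omega
  have hfilter : ∀ j ∈ T, (U.image m).filter (fun b' => b'.2.2 = 0 ∧ b'.2.1 = j) = F0 j := by
    intro j hj
    ext e
    simp only [F0, U, m, Finset.mem_filter, Finset.mem_image, Finset.mem_sigma, Sigma.exists]
    constructor
    · rintro ⟨⟨i, r, ⟨hi, hr⟩, rfl⟩, h0, rfl⟩
      exact ⟨r, ⟨hr, (hlab0 i r hr).1 h0⟩, by simpa using h0.symm⟩
    · rintro ⟨r, ⟨hr, h0⟩, rfl⟩
      exact ⟨⟨j, r, ⟨hj, hr⟩, by simp [(hlab0 j r hr).2 h0]⟩, rfl, rfl⟩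
  have hdisj : ∀ s ∈ U, ∀ s' ∈ U, s ≠ s' →
      Disjoint (box (corner s.1 s.2) s.1) (box (corner s'.1 s'.2) s'.1) := by
    rintro ⟨i, r⟩ hs ⟨j, r'⟩ hs' hne
    obtain ⟨hi, hr⟩ := Finset.mem_sigma.1 hs
    obtain ⟨hj, hr'⟩ := Finset.mem_sigma.1 hs'
    rcases lt_trichotomy i j with h | h | h
    · exact Finset.disjoint_of_subset_left (box_corner_subset_region (hT1 i hi) hr)
        (Finset.disjoint_of_subset_right (box_corner_subset_region (hT1 j hj) hr')
          (disjoint_region (hTd i hi j hj h)))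
    · change i = j at h
      subst h
      exact pairwiseDisjoint_corner (hT1 i hi) Set.univ (Set.mem_univ _) (Set.mem_univ _)
        fun h => hne (Sigma.ext rfl (heq_of_eq h))
    · exact Finset.disjoint_of_subset_left (box_corner_subset_region (hT1 i hi) hr)
        (Finset.disjoint_of_subset_right (box_corner_subset_region (hT1 j hj) hr')
          (disjoint_region (hTd j hj i hi h)).symm)
  have hinj : Set.InjOn m U := by
    intro s hs s' hs' h
    by_contra hne
    have h1 := hdisj s hs s' hs' hne
    simp only [m, Prod.mk.injEq] at h
    rw [h.1, h.2.1, disjoint_self, Finset.bot_eq_empty, ← Finset.card_eq_zero, card_box] at h1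
    have h2 := hT1 _ (Finset.mem_sigma.1 hs').1
    have h3 : 0 < s'.1 ^ d := by positivity
    omega
  refine ⟨U.image m, ⟨by convert hbad, ?_, ?_, ?_, ?_, ?_⟩, ?_⟩
  · intro e he
    obtain ⟨s, hs, rfl⟩ := Finset.mem_image.1 he
    exact (hT _ (Finset.mem_sigma.1 hs).1).1.le
  · intro e he
    obtain ⟨⟨j, r⟩, hs, rfl⟩ := Finset.mem_image.1 he
    obtain ⟨hj, hr⟩ := Finset.mem_sigma.1 hs
    refine (box_corner_subset_region (hT1 j hj) hr).trans (Finset.sdiff_subset.trans ?_)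
    exact cube_mono (hb (hT j hj).2)
  · intro e he
    obtain ⟨⟨j, r⟩, hs, rfl⟩ := Finset.mem_image.1 he
    obtain ⟨hj, hr⟩ := Finset.mem_sigma.1 hs
    refine le_trans ?_ (hlow j (hT j hj).1)
    refine Nat.cast_le.2 (le_trans ?_ (hrep j))
    simp only [m, lab]
    split_ifs with h
    · exact Nat.zero_le _
    · exact (num_mem (hmem0 j r hr)).2.trans Finset.card_image_le
  · rw [Finset.coe_image]
    rintro _ ⟨s, hs, rfl⟩ _ ⟨s', hs', rfl⟩ hne
    exact hdisj s hs s' hs' fun h => hne (by rw [h])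
  · rw [Finset.filter_image, Finset.sum_image fun s hs s' hs' h =>
      hinj (Finset.filter_subset _ _ hs) (Finset.filter_subset _ _ hs') h]
    have h1 : U.filter (fun s => (m s).2.2 ≠ 0) =
        T.sigma fun j => (corners d (q j) (p j)).filter fun r => ψ j r ≠ r := by
      ext ⟨j, r⟩
      simp only [U, m, Finset.mem_filter, Finset.mem_sigma, and_assoc]
      refine and_congr_right fun _ => and_congr_right fun hr => ?_
      exact not_congr (hlab0 j r hr)
    rw [h1, Finset.sum_sigma]
    simp only [m, Finset.sum_const, nsmul_eq_mul]
    have h2 : ∀ j ∈ T, φ / 2 * (((b j : ℕ) : ℝ) ^ d - ((a j : ℕ) : ℝ) ^ d) ≤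
        (((corners d (q j) (p j)).filter fun r => ψ j r ≠ r).card : ℝ) * (j : ℝ) ^ d := by
      intro j hj
      have h3 := hph j (hT1 j hj)
      have h4 := h3.le_recurring
      have h5 : ((recurring x j (q j) (p j)).card : ℝ) ≤
          2 * (((corners d (q j) (p j)).filter fun r => ψ j r ≠ r).card : ℝ) := by
        exact_mod_cast hcopy j
      rw [card_corners h3.lt.le] at h4
      have h6 : (((b j : ℕ) : ℝ) ^ d - ((a j : ℕ) : ℝ) ^ d) =
          (j : ℝ) ^ d * ((p j : ℝ) ^ d - (q j : ℝ) ^ d) := by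
        simp only [a, b]
        push_cast
        ring
      rw [h6]
      have h7 : (0 : ℝ) ≤ (j : ℝ) ^ d := by positivity
      nlinarith
    refine le_trans ?_ (Finset.sum_le_sum h2)
    rw [← Finset.mul_sum]
    have h8 : ((b l : ℕ) : ℝ) ^ d / 4 ≤ (((b l : ℕ) : ℝ) ^ d - ((b J : ℕ) : ℝ) ^ d) / 2 := by
      linarith
    have h9 := mul_le_mul_of_nonneg_left (h8.trans hTs) (show 0 ≤ φ / 2 by linarith)
    refine le_trans (le_of_eq ?_) h9
    ring
  · intro e he he0
    obtain ⟨⟨j, r⟩, hs, rfl⟩ := Finset.mem_image.1 he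
    obtain ⟨hj, hr⟩ := Finset.mem_sigma.1 hs
    have h1 : ψ j r ≠ r := fun h => he0 ((hlab0 j r hr).2 h)
    have h2 := hfilter j hj
    refine ⟨(corner j (ψ j r), j, 0), ?_, ?_, ?_⟩
    · convert hmem0 j r hr
    · simp only [m, lab, if_neg h1]
      congr 1
      convert h2.symm
    · exact (hψ j r hr).2.1.symm

lemma ncard_copied_le (hA : 2 ≤ A) (hd : 1 ≤ d) {γ h ε : ℝ} (hγ0 : 0 < γ) (hh : 0 ≤ h)
    (hε : 0 < ε) :
    ∃ R₀, ∀ R ≥ R₀, ∃ J₀, ∀ J ≥ J₀, ∃ N₀, ∀ N ≥ N₀, ∀ S : Finset (Word A d R),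
      (S.card : ℝ) ≤ (A : ℝ) ^ ((h + ε * γ / 16) * (R : ℝ) ^ d) →
      (Set.ncard ((fun y => wordAt y N 0) '' {y : Config A d |
        ∃ F, Marked N J R S (h - ε) γ (ε * γ / 16) y F ∧ IsCopied F y}) : ℝ) ≤
        (A : ℝ) ^ ((h - ε * γ / 2) * (N : ℝ) ^ d) := by
  classical
  have hA1 : (1 : ℝ) < A := by exact_mod_cast (by omega : 1 < A)
  have hεγ : 0 < ε * γ := mul_pos hε hγ0
  obtain ⟨R₀, hR₀⟩ := ncard_marked_le hA hd (show 0 < ε * γ / 16 by positivity)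
  refine ⟨R₀, fun R hR => ?_⟩
  obtain ⟨J₀, hJ₀⟩ := hR₀ R hR
  refine ⟨J₀, fun J hJ => ?_⟩
  obtain ⟨N₀, hN₀⟩ := hJ₀ J hJ
  refine ⟨N₀, fun N hN S hS => ?_⟩
  set Y : Set (Config A d) :=
    {y | ∃ F, Marked N J R S (h - ε) γ (ε * γ / 16) y F ∧ IsCopied F y}
  have hY : ∀ y : Config A d, ∃ F, y ∈ Y →
      Marked N J R S (h - ε) γ (ε * γ / 16) y F ∧ IsCopied F y := fun y => by
    by_cases hy : y ∈ Y
    · exact ⟨hy.choose, fun _ => hy.choose_spec⟩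
    · exact ⟨∅, fun h => absurd h hy⟩
  choose F hF using hY
  refine (hN₀ N hN (h + ε * γ / 16) (h - ε) γ (ε * γ / 16) (by linarith) (by linarith) S hS Y F
    (fun y hy => (hF y hy).1) fun y hy y' hy' hFF hagree => ?_).trans ?_
  · refine (hF y hy).2.eqOn ?_ (hF y hy).1.sub (hF y hy).1.disj hagree
    rw [hFF]
    exact (hF y' hy').2
  · refine Real.rpow_le_rpow_of_exponent_le hA1.le (mul_le_mul_of_nonneg_right ?_ (by positivity))
    nlinarith

open scoped Classical in
/-- Almost surely infinitely many scales have at least `A ^ ((h - ε) * k ^ d)` distinct words. -/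
lemma ae_frequently_many_words (hA : 2 ≤ A) (hd : 1 ≤ d) {μ : Measure (Config A d)}
    [IsProbabilityMeasure μ] (hμ : ErgodicShift μ) {h : ℝ} (hrate : HasEntropyRate μ h)
    {φ : ℝ} (hφ0 : 0 < φ) (hφ : φ < 1) {ε : ℝ} (hε : 0 < ε) (hεh : ε ≤ h) :
    ∀ᵐ x ∂μ, ∀ q p : ℕ → ℕ, (∀ k, q (k + 1) = k * p k / (k + 1)) →
      (∀ k, 1 ≤ k → IsPhase φ x k (q k) (p k)) →
      ∃ᶠ k : ℕ in atTop, (A : ℝ) ^ ((h - ε) * (k : ℝ) ^ d) <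
        (((corners d (q k) (p k)).image fun r => wordAt x k (corner k r)).card : ℝ) := by
  have hγ : 0 < φ / 8 := by positivity
  obtain ⟨R₀, hR₀⟩ := ncard_copied_le hA hd hγ (hε.le.trans hεh) hε
  choose! J₀ hJ₀ using hR₀
  have havoid : ∀ᵐ x ∂μ, ∀ R : ℕ, ∀ S : Finset (Word A d R), ∀ J : ℕ, R₀ ≤ R → J₀ R ≤ J →
      (S.card : ℝ) ≤ (A : ℝ) ^ ((h + ε * (φ / 8) / 16) * (R : ℝ) ^ d) →
      ∀ᶠ n in atTop, wordAt x n 0 ∉ (fun y => wordAt y n 0) '' {y : Config A d |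
        ∃ F, Marked n J R S (h - ε) (φ / 8) (ε * (φ / 8) / 16) y F ∧ IsCopied F y} := by
    refine ae_all_iff.2 fun R => ae_all_iff.2 fun S => ae_all_iff.2 fun J => ?_
    by_cases hc : R₀ ≤ R ∧ J₀ R ≤ J ∧
        (S.card : ℝ) ≤ (A : ℝ) ^ ((h + ε * (φ / 8) / 16) * (R : ℝ) ^ d)
    swap
    · exact Eventually.of_forall fun x h1 h2 h3 => absurd ⟨h1, h2, h3⟩ hc
    obtain ⟨hR, hJ, hS⟩ := hc
    obtain ⟨N₀, hN₀⟩ := hJ₀ R hR J hJ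
    filter_upwards [ae_eventually_notMem hA hd hμ hrate
      (fun n => (fun y => wordAt y n 0) '' {y : Config A d |
        ∃ F, Marked n J R S (h - ε) (φ / 8) (ε * (φ / 8) / 16) y F ∧ IsCopied F y})
      (show 0 < ε * (φ / 8) / 2 by positivity) (by nlinarith) fun N hN => hN₀ N hN S hS]
      with x hx _ _ _
    exact hx
  filter_upwards [havoid, ae_exists_typical_words hA hd hμ hrate
    (show 0 < ε * (φ / 8) / 16 by positivity) (show 0 < ε * (φ / 8) / 16 by positivity) R₀]
    with x hx hgood q p hq hph
  obtain ⟨R, hR, S, hS, hbad⟩ := hgood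
  by_contra hfew
  rw [not_frequently] at hfew
  obtain ⟨K, hK⟩ := eventually_atTop.1 hfew
  set J := max K (J₀ R)
  have hside : ∀ l : ℕ, 1 ≤ l → l ≤ l * p l := fun l hl =>
    Nat.le_mul_of_pos_right _ (Nat.zero_lt_of_lt (hph l hl).lt)
  have htend : Tendsto (fun l => l * p l) atTop atTop :=
    tendsto_atTop_mono' _ ((eventually_ge_atTop 1).mono hside) tendsto_id
  obtain ⟨l, hl, hlJ, hl2⟩ := ((htend.eventually (hx R S J hR (le_max_right _ _) hS)).and
    ((eventually_gt_atTop J).and (htend.eventually_ge_atTop (2 * (J * p J) ^ d)))).exists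
  refine hl ⟨x, exists_marked_isCopied hφ0 hq hph hlJ (hbad _) (fun j hj => ?_) ?_, rfl⟩
  · exact not_lt.1 (hK j ((le_max_left K (J₀ R)).trans hj.le))
  · refine le_trans ?_ (le_pow_of_pos_dim hd (l * p l))
    exact_mod_cast hl2

/-- Almost surely the number of distinct words at a scale `k` is infinitely often at least
`A ^ (k ^ d * (h - ε))`, while the volume parsed with blocks of side at most `k` is eventually at
most `k * A ^ (k ^ d * (h + ε))`. -/
lemma ae_scales (hA : 2 ≤ A) (hd : 1 ≤ d) {μ : Measure (Config A d)}
    [IsProbabilityMeasure μ] (hμ : ErgodicShift μ) {h : ℝ} (hrate : HasEntropyRate μ h)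
    (hh : 0 < h) {φ : ℝ} (hφ0 : 0 < φ) (hφ : φ < 1) {ε : ℝ} (hε : 0 < ε) :
    ∀ᵐ x ∂μ, (∃ᶠ k : ℕ in atTop, (A : ℝ) ^ ((k : ℝ) ^ d * (h - ε)) ≤ (Mk φ x k : ℝ)) ∧
      (∀ k : ℕ, 1 ≤ k → (Mk φ x k : ℝ) ≤ (Set.ncard (Lregion φ x k) : ℝ)) ∧
      ∀ᶠ l : ℕ in atTop, ∀ k, 1 ≤ k → k ≤ l →
        (Set.ncard (Lregion φ x k) : ℝ) ≤ (A : ℝ) ^ ((l : ℝ) ^ d * (h + ε)) := by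
  classical
  have hA1 : (1 : ℝ) < A := by exact_mod_cast (by omega : 1 < A)
  obtain ⟨lam, hlam, R₀, hR₀⟩ := eventually_volume_le (A := A) hA hd hφ hh.le hε
  filter_upwards [ae_frequently_many_words hA hd hμ hrate hφ0 hφ (lt_min hε hh) (min_le_right ε h),
    ae_exists_typical_words hA hd hμ hrate (show 0 < ε / 8 by positivity) hlam R₀] with x hx hgood
  obtain ⟨R, hR, S, hS, hbad⟩ := hgood
  obtain ⟨q, p, -, hq, hph, hblocks⟩ := exists_phases hd hφ0 hφ x
  have hvol := hR₀ R hR S (by convert hS) x (fun n => by convert hbad n) q p hq hph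
  have hM : ∀ k, 1 ≤ k → Mk φ x k =
      ((corners d (q k) (p k)).image fun r => wordAt x k (corner k r)).card := fun k hk => by
    convert mk_eq (hblocks k hk)
  have hL : ∀ k, 1 ≤ k → Set.ncard (Lregion φ x k) = (region d k (q k) (p k)).card :=
    fun k hk => by rw [lregion_eq hk (hblocks k hk), Set.ncard_coe_finset]
  have hmono : ∀ k l, k ≤ l → k * p k ≤ l * p l := by
    intro k l hkl
    refine monotone_nat_of_le_succ (f := fun k => k * p k) (fun j => ?_) hkl
    have h1 := (hph (j + 1) (by omega)).lt
    rw [hq, Nat.div_lt_iff_lt_mul (by omega), mul_comm (p (j + 1))] at h1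
    exact h1.le
  refine ⟨?_, fun k hk => ?_, ?_⟩
  · refine ((hx q p hq hph).and_eventually (eventually_ge_atTop 1)).mono fun k ⟨hk, hk1⟩ => ?_
    rw [hM k hk1]
    refine le_trans ?_ (le_trans hk.le (le_of_eq (by congr!)))
    refine Real.rpow_le_rpow_of_exponent_le hA1.le ?_
    rw [mul_comm]
    exact mul_le_mul_of_nonneg_right (by linarith [min_le_left ε h]) (by positivity)
  · rw [hM k hk, hL k hk]
    refine Nat.cast_le.2 (Finset.card_image_le.trans ?_)
    refine Finset.card_le_card_of_injOn (corner k) (fun r hr => ?_) fun r _ r' _ hrr => ?_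
    · refine box_corner_subset_region hk hr (mem_box.2 fun i => ⟨le_rfl, by omega⟩)
    · ext i
      exact Nat.eq_of_mul_eq_mul_left hk (congrFun hrr i)
  · filter_upwards [hvol] with l hl k hk hkl
    rw [hL k hk, mul_comm]
    refine le_trans ?_ hl
    have h1 : (region d k (q k) (p k)).card ≤ (l * p l) ^ d := by
      rw [← card_cube]
      exact Finset.card_le_card (Finset.sdiff_subset.trans (cube_mono (hmono k l hkl)))
    exact_mod_cast h1

lemma volIcc_nonneg (φ : ℝ) (x : Config A d) (l u : ℕ) : 0 ≤ volIcc φ x l u :=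
  Finset.sum_nonneg fun _ _ => Nat.cast_nonneg _

/-- At a large typical scale the relative volume of the small scales is at most `1 / k`. -/
lemma eventually_quotient_le (hA : 2 ≤ A) (hd : 1 ≤ d) {φ h α α0 : ℝ} (hh : 0 < h) (hα : 0 < α)
    (hα0 : 0 < α0) (hα0' : α0 < α * h / 3) {x : Config A d}
    (hMk : ∀ k : ℕ, 1 ≤ k → (Mk φ x k : ℝ) ≤ (Set.ncard (Lregion φ x k) : ℝ))
    (hL : ∀ᶠ l : ℕ in atTop, ∀ k, 1 ≤ k → k ≤ l →
      (Set.ncard (Lregion φ x k) : ℝ) ≤ (A : ℝ) ^ ((l : ℝ) ^ d * (h + α0))) :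
    ∀ᶠ k : ℕ in atTop, TypicalScale φ x h α0 k →
      volIcc φ x 1 ⌊(1 - α) * (k : ℝ)⌋₊ / volIcc φ x ⌊(1 - α) * (k : ℝ)⌋₊ k ≤ 1 / (k : ℝ) := by
  have hA1 : (1 : ℝ) < A := by exact_mod_cast (by omega : 1 < A)
  have hA0 : (0 : ℝ) < A := by linarith
  by_cases hα1 : 1 ≤ α
  · refine Eventually.of_forall fun k _ => ?_
    have : ⌊(1 - α) * (k : ℝ)⌋₊ = 0 :=
      Nat.floor_of_nonpos (mul_nonpos_of_nonpos_of_nonneg (by linarith) (Nat.cast_nonneg _))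
    rw [this]
    simp [volIcc]
  push Not at hα1
  have hl : Tendsto (fun k : ℕ => ⌊(1 - α) * (k : ℝ)⌋₊) atTop atTop :=
    tendsto_nat_floor_atTop.comp (tendsto_natCast_atTop_atTop.const_mul_atTop (by linarith))
  have hδ : 0 < α * h / 3 := by positivity
  filter_upwards [hl.eventually hL, eventually_poly_le hA hδ 1 2, eventually_ge_atTop 1]
    with k hLk hpoly hk hT
  set l := ⌊(1 - α) * (k : ℝ)⌋₊
  have hk1 : (1 : ℝ) ≤ k := by exact_mod_cast hk
  have hk0 : (0 : ℝ) < k := by linarith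
  have hlk : (l : ℝ) ≤ (1 - α) * k := Nat.floor_le (by nlinarith)
  have hlk' : (l : ℝ) ≤ k := by nlinarith
  have hden : (A : ℝ) ^ ((k : ℝ) ^ d * (h - α0)) ≤ volIcc φ x l k :=
    (hT.1.trans (hMk k hk)).trans <|
      Finset.single_le_sum (f := fun k => (Set.ncard (Lregion φ x k) : ℝ))
        (fun _ _ => Nat.cast_nonneg _) (Finset.mem_Icc.2 ⟨Nat.cast_le.1 hlk', le_rfl⟩)
  have hden0 : 0 < volIcc φ x l k := (Real.rpow_pos_of_pos hA0 _).trans_le hden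
  have hnum : volIcc φ x 1 l ≤ k * (A : ℝ) ^ ((l : ℝ) ^ d * (h + α0)) := by
    have h1 := Finset.sum_le_card_nsmul (Finset.Icc 1 l)
      (fun k => (Set.ncard (Lregion φ x k) : ℝ)) _ fun j hj =>
        hLk j (Finset.mem_Icc.1 hj).1 (Finset.mem_Icc.1 hj).2
    rw [Nat.card_Icc, Nat.add_sub_cancel, nsmul_eq_mul] at h1
    exact h1.trans (mul_le_mul_of_nonneg_right hlk' (Real.rpow_pos_of_pos hA0 _).le)
  have hpow : (l : ℝ) ^ d ≤ (1 - α) * (k : ℝ) ^ d := by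
    calc (l : ℝ) ^ d ≤ ((1 - α) * k) ^ d := pow_le_pow_left₀ (Nat.cast_nonneg _) hlk d
      _ = (1 - α) ^ d * (k : ℝ) ^ d := mul_pow _ _ _
      _ ≤ (1 - α) * (k : ℝ) ^ d := mul_le_mul_of_nonneg_right
        (pow_le_of_le_one (by linarith) (by linarith) (by omega)) (by positivity)
  have hexp : α * h / 3 * k + (l : ℝ) ^ d * (h + α0) ≤ (k : ℝ) ^ d * (h - α0) := by
    have h1 := le_pow_of_pos_dim hd k
    have h2 := mul_le_mul_of_nonneg_right hpow (show 0 ≤ h + α0 by linarith)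
    have h3 := mul_le_mul_of_nonneg_left h1 hδ.le
    have h4 : α * h / 3 * (k : ℝ) ^ d + (1 - α) * (k : ℝ) ^ d * (h + α0) ≤
        (k : ℝ) ^ d * (h - α0) := by
      have h5 : 0 ≤ (k : ℝ) ^ d := by positivity
      have h6 : α * h / 3 + (1 - α) * (h + α0) ≤ h - α0 := by nlinarith
      nlinarith
    linarith
  rw [div_le_div_iff₀ hden0 hk0, one_mul]
  refine le_trans ?_ hden
  calc volIcc φ x 1 l * k ≤ k * (A : ℝ) ^ ((l : ℝ) ^ d * (h + α0)) * k :=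
        mul_le_mul_of_nonneg_right hnum hk0.le
    _ = (1 * (k : ℝ) ^ 2) * (A : ℝ) ^ ((l : ℝ) ^ d * (h + α0)) := by ring
    _ ≤ (A : ℝ) ^ (α * h / 3 * k) * (A : ℝ) ^ ((l : ℝ) ^ d * (h + α0)) :=
        mul_le_mul_of_nonneg_right hpoly (Real.rpow_pos_of_pos hA0 _).le
    _ = (A : ℝ) ^ (α * h / 3 * k + (l : ℝ) ^ d * (h + α0)) := (Real.rpow_add hA0 _ _).symm
    _ ≤ (A : ℝ) ^ ((k : ℝ) ^ d * (h - α0)) := Real.rpow_le_rpow_of_exponent_le hA1.le hexp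

/-- Almost surely, the set of typical scales is infinite and, along the
increasing enumeration `k_i^*` of the typical scales, the volume parsed with block sizes
below `(1-α)k_i^*` is negligible compared to the volume parsed with block sizes between
`(1-α)k_i^*` and `k_i^*`. -/
theorem sru_small_scales_negligible
    (A d : ℕ) (hA : 2 ≤ A) (hd : 1 ≤ d)
    (μ : Measure (Config A d)) [IsProbabilityMeasure μ] (hμ : ErgodicShift μ)
    (hμ' : ℝ) (hrate : HasEntropyRate μ hμ') (hpos : 0 < hμ')
    (φ : ℝ) (hφ0 : 0 < φ) (hφ1 : φ < 1)
    (α : ℝ) (hα : 0 < α) (α0 : ℝ) (hα0 : 0 < α0) (hα0' : α0 < α * hμ' / 3) :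
    ∀ᵐ x ∂μ,
      {k : ℕ | TypicalScale φ x hμ' α0 k}.Infinite ∧
      Tendsto (fun i : ℕ =>
          volIcc φ x 1 ⌊(1 - α) * (Nat.nth (TypicalScale φ x hμ' α0) i : ℝ)⌋₊ /
            volIcc φ x ⌊(1 - α) * (Nat.nth (TypicalScale φ x hμ' α0) i : ℝ)⌋₊
              (Nat.nth (TypicalScale φ x hμ' α0) i))
        atTop (𝓝 0) := by
  filter_upwards [ae_scales hA hd hμ hrate hpos hφ0 hφ1 hα0] with x ⟨hfreq, hMk, hL⟩
  have hinf : {k : ℕ | TypicalScale φ x hμ' α0 k}.Infinite := by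
    refine Nat.frequently_atTop_iff_infinite.1 ?_
    refine (hfreq.and_eventually (hL.and (eventually_ge_atTop 1))).mono fun k ⟨h1, h2, hk⟩ => ?_
    exact ⟨h1, (hMk k hk).trans (h2 k hk le_rfl)⟩
  refine ⟨hinf, ?_⟩
  have hnth : Tendsto (Nat.nth (TypicalScale φ x hμ' α0)) atTop atTop :=
    (Nat.nth_strictMono hinf).tendsto_atTop
  refine squeeze_zero' (Eventually.of_forall fun i =>
    div_nonneg (volIcc_nonneg _ _ _ _) (volIcc_nonneg _ _ _ _)) ?_
    (tendsto_one_div_atTop_nhds_zero_nat.comp hnth)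
  filter_upwards [hnth.eventually (eventually_quotient_le hA hd hpos hα hα0 hα0' hMk hL)] with i hi
  exact hi (Nat.nth_mem_of_infinite hinf i)

end SRU1408
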